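/- arXiv:1609.08132 — 2 statements merged into one kernel-verified Lean document; each statement's English description precedes it below -/
import Mathlib

section
/- For every integer n ≥ 7 and for every straight-line plane drawing p of the extended wheel graph W_n⁺, there is no 1-string representation of W_n⁺ that is order-preserving with respect to p and in which every arc has at least one of its endpoints in the closure of the contour of the family of arcs. -/
/-- An arc: an injective continuous map from `[0,1]` to `ℝ²`
(formalized as a map `ℝ → ℝ × ℝ` that is continuous and injective on `[0,1]`). -/
structure Arc where
  toFun : ℝ → ℝ × ℝ
  contOn : ContinuousOn toFun (Set.Icc 0 1)
  injOn : Set.InjOn toFun (Set.Icc 0 1)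

/-- The image of an arc. -/
def Arc.img (γ : Arc) : Set (ℝ × ℝ) := γ.toFun '' Set.Icc 0 1

/-- The endpoints of an arc. -/
def Arc.ends (γ : Arc) : Set (ℝ × ℝ) := {γ.toFun 0, γ.toFun 1}

/-- Two arcs cross properly at `q`: `q` is an interior point of both arcs, and there is
an open neighbourhood of `q` mapped homeomorphically onto the open unit disk with `q ↦ 0`,
taking the first arc to the horizontal diameter and the second to the vertical diameter. -/
def CrossesProperlyAt (γ₁ γ₂ : Arc) (q : ℝ × ℝ) : Prop :=
  (∃ s ∈ Set.Ioo (0:ℝ) 1, γ₁.toFun s = q) ∧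
  (∃ t ∈ Set.Ioo (0:ℝ) 1, γ₂.toFun t = q) ∧
  ∃ h : PartialHomeomorph (ℝ × ℝ) (ℝ × ℝ),
    q ∈ h.source ∧ h.target = Metric.ball (0 : ℝ × ℝ) 1 ∧ h q = 0 ∧
    h '' (h.source ∩ γ₁.img) = {z : ℝ × ℝ | z ∈ Metric.ball (0 : ℝ × ℝ) 1 ∧ z.2 = 0} ∧
    h '' (h.source ∩ γ₂.img) = {z : ℝ × ℝ | z ∈ Metric.ball (0 : ℝ × ℝ) 1 ∧ z.1 = 0}

/-- A 1-string representation of a simple graph `G`. -/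
structure OneStringRep {V : Type} (G : SimpleGraph V) where
  γ : V → Arc
  adj_inter : ∀ u v : V, G.Adj u v → ∃ q : ℝ × ℝ, (γ u).img ∩ (γ v).img = {q}
  nonadj_disjoint : ∀ u v : V, u ≠ v → ¬G.Adj u v → (γ u).img ∩ (γ v).img = ∅
  proper : ∀ u v : V, u ≠ v → ∀ q ∈ (γ u).img ∩ (γ v).img, CrossesProperlyAt (γ u) (γ v) q
  no_triple : ∀ u v w : V, u ≠ v → u ≠ w → v ≠ w → (γ u).img ∩ (γ v).img ∩ (γ w).img = ∅

/-- A straight-line plane drawing of a simple graph. -/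
def IsPlaneDrawing {V : Type} (G : SimpleGraph V) (p : V → ℝ × ℝ) : Prop :=
  Function.Injective p ∧
  (∀ u v x y : V, G.Adj u v → G.Adj x y → u ≠ x → u ≠ y → v ≠ x → v ≠ y →
    segment ℝ (p u) (p v) ∩ segment ℝ (p x) (p y) = ∅) ∧
  (∀ u v w : V, G.Adj u v → G.Adj u w → v ≠ w →
    segment ℝ (p u) (p v) ∩ segment ℝ (p u) (p w) = {p u}) ∧
  (∀ u v w : V, G.Adj u v → w ≠ u → w ≠ v → p w ∉ segment ℝ (p u) (p v))

/-- The angle of the vector from `a` to `b`. -/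
noncomputable def angleAt (a b : ℝ × ℝ) : ℝ := Complex.arg ⟨b.1 - a.1, b.2 - a.2⟩

/-- A 1-string representation is order-preserving w.r.t. a straight-line plane drawing `p`:
for each vertex `v`, listing the neighbours `w₁, …, w_k` sorted by the angle of `p wᵢ - p v`,
there are a traversal direction of `γ v` and a cyclic rotation of the list such that the
intersection points of `γ v` with the `γ wᵢ` occur along `γ v`, in that traversal direction,
exactly in the rotated order. -/
def OrderPreserving {V : Type} (G : SimpleGraph V) (p : V → ℝ × ℝ)
    (R : OneStringRep G) : Prop :=
  ∀ v : V, ∃ l : List V,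
    l.Nodup ∧ (∀ w : V, w ∈ l ↔ G.Adj v w) ∧
    l.Pairwise (fun w w' => angleAt (p v) (p w) < angleAt (p v) (p w')) ∧
    ∃ (r : ℕ) (dir : Bool) (t : V → ℝ),
      (∀ w ∈ l, t w ∈ Set.Icc (0:ℝ) 1 ∧ (R.γ v).toFun (t w) ∈ (R.γ w).img) ∧
      (l.rotate r).Pairwise (fun w w' => if dir then t w < t w' else t w' < t w)

/-- The union of the images of a family of arcs. -/
def arcUnion {V : Type} (γ : V → Arc) : Set (ℝ × ℝ) := ⋃ v, (γ v).img

/-- The contour of a family of arcs: the unbounded connected component of the complement of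
the union of the images (formalized as the union of all unbounded connected components). -/
def contour {V : Type} (γ : V → Arc) : Set (ℝ × ℝ) :=
  {x | x ∈ (arcUnion γ)ᶜ ∧ ¬ Bornology.IsBounded (connectedComponentIn (arcUnion γ)ᶜ x)}

/-- A `k`-tree: there is an ordering of the vertices such that the first `k` form a clique and
every later vertex has exactly `k` earlier neighbours, which form a clique. -/
def IsKTree {V : Type} (k : ℕ) (G : SimpleGraph V) : Prop :=
  ∃ (n : ℕ) (e : V ≃ Fin n), k ≤ n ∧
    G.IsClique {v : V | (e v).val < k} ∧
    ∀ i : Fin n, k ≤ i.val →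
      ∃ S : Finset V, S.card = k ∧
        (∀ w : V, w ∈ S ↔ G.Adj (e.symm i) w ∧ (e w).val < i.val) ∧
        G.IsClique ↑S

/-- An L-shape: an arc whose image is the union of a vertical segment from `(x, y+h)` to
`(x, y)` and a horizontal segment from `(x, y)` to `(x+w, y)` with `w, h > 0`. -/
def IsLShape (γ : Arc) : Prop :=
  ∃ x y w h : ℝ, 0 < w ∧ 0 < h ∧
    γ.img = segment ℝ (x, y + h) (x, y) ∪ segment ℝ (x, y) (x + w, y)

/-- A 1-bend orthogonal arc: its image is a single horizontal or vertical segment, or the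
union of a horizontal segment and a vertical segment sharing exactly one endpoint. -/
def IsOneBendOrth (γ : Arc) : Prop :=
  (∃ a b : ℝ × ℝ, a ≠ b ∧ (a.1 = b.1 ∨ a.2 = b.2) ∧ γ.img = segment ℝ a b) ∨
  (∃ a b c : ℝ × ℝ, a ≠ b ∧ b ≠ c ∧
    ((a.1 = b.1 ∧ b.2 = c.2) ∨ (a.2 = b.2 ∧ b.1 = c.1)) ∧
    γ.img = segment ℝ a b ∪ segment ℝ b c ∧ segment ℝ a b ∩ segment ℝ b c = {b})

/-- A graph is 2-connected if it has at least 3 vertices and deleting any single vertex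
leaves a connected graph. -/
def TwoConnected {V : Type} (G : SimpleGraph V) : Prop :=
  3 ≤ Nat.card V ∧ ∀ v : V, ((⊤ : G.Subgraph).deleteVerts {v}).coe.Connected

/-- The wheel graph `W n`: a cycle `v₀, …, v_{n-1}` (indexed by `ZMod n`, as `some i`, with
`v i` adjacent to `v (i+1)`, indices mod `n`) together with a hub (`none`) adjacent to every
cycle vertex. -/
def wheelGraph (n : ℕ) : SimpleGraph (Option (ZMod n)) :=
  SimpleGraph.fromRel (fun a b =>
    match a, b with
    | none, some _ => True
    | some i, some j => j = i + 1
    | _, _ => False)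

/-- The extended wheel graph `W n⁺`: the wheel graph `W n` (on `Sum.inl` vertices) together
with additional vertices `w₀, …, w_{n-1}` (as `Sum.inr i`), where `w i` is adjacent exactly
to `v i` and `v (i+1)` (indices mod `n`). -/
def extWheelGraph (n : ℕ) : SimpleGraph (Option (ZMod n) ⊕ ZMod n) :=
  SimpleGraph.fromRel (fun a b =>
    match a, b with
    | Sum.inl none, Sum.inl (some _) => True
    | Sum.inl (some i), Sum.inl (some j) => j = i + 1
    | Sum.inr i, Sum.inl (some j) => j = i ∨ j = i + 1
    | _, _ => False)

/-!
Reversing strings if necessary, assume that every string starts on the closure of the contour. The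
strings along a closed walk of the graph, each followed from one crossing to the next, form a closed
curve. Its winding number vanishes at the start of every string that does not start on the curve,
stays constant along a string until it meets the curve, and changes at a proper crossing with a
single side of it.

Let `c` be the hub. Removing the triangle `c (v i) (v (i+1))` from `W n⁺` leaves the other rim
vertices connected, so a plane drawing has them all inside or all outside this triangle. Hence in an
order-preserving representation the rim strings cross the string of `c` in the cyclic order of the
rim: say in the order `a, …, v₃, v₄, v₅, …, b`, with `a` and `b` consecutive on the rim. The
triangle `c b a` encloses the string of `v₄` after its crossing with `c`, so both `w₃` and `w₄`
cross `v₄` before `c` does. Say `w₃` crosses first. The drawing around `v₄` then places the crossing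
with `v₅` between those with `w₃` and `c`. By the triangle, `v₅` crosses `v₄` before `c`, so it
enters the quadrilateral `c v₄ w₃ v₃` and meets `c` inside it; but from that point one can follow
`c` and then `b` out to the contour.
-/

section LogVariation

open Set

theorem eq_of_exp_const {X : Type*} [TopologicalSpace X] {S : Set X} (hS : IsPreconnected S)
    {F : X → ℂ} (hF : ContinuousOn F S) {k : ℂ} (hk : ∀ x ∈ S, Complex.exp (F x) = k) {x y : X}
    (hx : x ∈ S) (hy : y ∈ S) : F x = F y := by
  refine Complex.isCoveringMap_exp.isSeparatedMap.constOn_of_comp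
    Complex.isCoveringMap_exp.isLocalHomeomorph.isLocallyInjective hS hF ?_ hx hy
  intro a ha b hb
  exact Subtype.ext ((hk a ha).trans (hk b hb).symm)

theorem exists_continuous_log {X : Type*} [TopologicalSpace X] [SimplyConnectedSpace X]
    [LocallyPathConnectedSpace X] {f : X → ℂ} (hf : Continuous f) (h0 : ∀ x, f x ≠ 0) :
    ∃ g : X → ℂ, Continuous g ∧ ∀ x, Complex.exp (g x) = f x := by
  obtain ⟨x₀⟩ : Nonempty X := inferInstance
  obtain ⟨F, ⟨-, hF⟩, -⟩ := Complex.isCoveringMapOn_exp.existsUnique_continuousMap_lifts ⟨f, hf⟩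
    (a₀ := x₀) (e₀ := Complex.log (f x₀)) (by simp [Complex.exp_log (h0 x₀)])
    (fun x ↦ by simpa using h0 x)
  exact ⟨F, F.continuous, congrFun hF⟩

theorem exists_continuousOn_log {E : Type*} [AddCommGroup E] [Module ℝ E]
    [TopologicalSpace E] [IsTopologicalAddGroup E] [ContinuousSMul ℝ E] [LocallyConvexSpace ℝ E]
    {S : Set E} (hS : Convex ℝ S) (hne : S.Nonempty) {f : E → ℂ} (hf : ContinuousOn f S)
    (h0 : ∀ x ∈ S, f x ≠ 0) :
    ∃ g : E → ℂ, ContinuousOn g S ∧ ∀ x ∈ S, Complex.exp (g x) = f x := by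
  have := hS.contractibleSpace hne
  have := hS.locallyPathConnectedSpace
  obtain ⟨g, hg, hgf⟩ := exists_continuous_log hf.domRestrict fun x ↦ h0 x x.2
  classical
  let g' : E → ℂ := fun x ↦ if hx : x ∈ S then g ⟨x, hx⟩ else 0
  have hg' : S.domRestrict g' = g := funext fun x ↦ dif_pos x.2
  exact ⟨g', continuousOn_iff_continuous_domRestrict.2 (hg' ▸ hg), fun x hx ↦
    (congrArg Complex.exp (congrFun hg' ⟨x, hx⟩)).trans (hgf ⟨x, hx⟩)⟩

open Classical in
/-- The change `g b - g a` of a continuous logarithm `g` of `f` along the segment from `a` to `b`;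
it is `0` by convention when `f` has no continuous logarithm there. -/
noncomputable def logVariation (f : ℝ → ℂ) (a b : ℝ) : ℂ :=
  if h : ∃ g : ℝ → ℂ, ContinuousOn g (uIcc a b) ∧ ∀ t ∈ uIcc a b, Complex.exp (g t) = f t then
    h.choose b - h.choose a
  else 0

theorem logVariation_eq {f g : ℝ → ℂ} {a b : ℝ} (hg : ContinuousOn g (uIcc a b))
    (hgf : ∀ t ∈ uIcc a b, Complex.exp (g t) = f t) : logVariation f a b = g b - g a := by
  have h : ∃ g : ℝ → ℂ, ContinuousOn g (uIcc a b) ∧ ∀ t ∈ uIcc a b, Complex.exp (g t) = f t :=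
    ⟨g, hg, hgf⟩
  obtain ⟨hcont, hexp⟩ := h.choose_spec
  have hconst := eq_of_exp_const isPreconnected_uIcc (hcont.sub hg) (k := 1)
    (fun t ht ↦ by
      rw [Pi.sub_apply, Complex.exp_sub, hexp t ht, hgf t ht,
        div_self (hgf t ht ▸ Complex.exp_ne_zero _)])
    right_mem_uIcc left_mem_uIcc
  simp only [Pi.sub_apply] at hconst
  rw [logVariation, dif_pos h]
  linear_combination hconst

theorem logVariation_congr {f f' : ℝ → ℂ} {a b : ℝ} (h : EqOn f f' (uIcc a b)) :
    logVariation f a b = logVariation f' a b := by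
  have hlog : (fun g : ℝ → ℂ ↦ ContinuousOn g (uIcc a b) ∧
      ∀ t ∈ uIcc a b, Complex.exp (g t) = f t) =
      fun g ↦ ContinuousOn g (uIcc a b) ∧ ∀ t ∈ uIcc a b, Complex.exp (g t) = f' t := by
    funext g
    exact congrArg _ (propext (forall₂_congr fun t ht ↦ by rw [h ht]))
  unfold logVariation
  rw [hlog]

section OrdConnected

variable {f : ℝ → ℂ} {S : Set ℝ} [S.OrdConnected] {a b c : ℝ}

theorem exists_log (hf : ContinuousOn f S) (h0 : ∀ t ∈ S, f t ≠ 0) (ha : a ∈ S) :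
    ∃ g : ℝ → ℂ, (∀ t ∈ S, Complex.exp (g t) = f t) ∧ ContinuousOn g S ∧
      ∀ x ∈ S, ∀ y ∈ S, logVariation f x y = g y - g x := by
  obtain ⟨g, hg, hgf⟩ := exists_continuousOn_log (OrdConnected.convex ‹_›) ⟨a, ha⟩ hf h0
  refine ⟨g, hgf, hg, fun x hx y hy ↦ ?_⟩
  have hsub := OrdConnected.uIcc_subset ‹S.OrdConnected› hx hy
  exact logVariation_eq (hg.mono hsub) fun t ht ↦ hgf t (hsub ht)

theorem exp_logVariation (hf : ContinuousOn f S) (h0 : ∀ t ∈ S, f t ≠ 0) (ha : a ∈ S)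
    (hb : b ∈ S) : Complex.exp (logVariation f a b) = f b / f a := by
  obtain ⟨g, hgf, -, hvar⟩ := exists_log hf h0 ha
  rw [hvar a ha b hb, Complex.exp_sub, hgf a ha, hgf b hb]

theorem logVariation_add (hf : ContinuousOn f S) (h0 : ∀ t ∈ S, f t ≠ 0) (ha : a ∈ S)
    (hb : b ∈ S) (hc : c ∈ S) :
    logVariation f a b + logVariation f b c = logVariation f a c := by
  obtain ⟨g, -, -, hvar⟩ := exists_log hf h0 ha
  rw [hvar a ha b hb, hvar b hb c hc, hvar a ha c hc]
  ring

theorem logVariation_symm (hf : ContinuousOn f S) (h0 : ∀ t ∈ S, f t ≠ 0) (ha : a ∈ S)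
    (hb : b ∈ S) : logVariation f b a = -logVariation f a b := by
  obtain ⟨g, -, -, hvar⟩ := exists_log hf h0 ha
  rw [hvar a ha b hb, hvar b hb a ha]
  ring

theorem logVariation_comp {σ : ℝ → ℝ} {x y : ℝ} (hf : ContinuousOn f S) (h0 : ∀ t ∈ S, f t ≠ 0)
    (hσ : ContinuousOn σ (uIcc x y)) (hmaps : MapsTo σ (uIcc x y) S) :
    logVariation (fun t ↦ f (σ t)) x y = logVariation f (σ x) (σ y) := by
  have hx := hmaps left_mem_uIcc
  obtain ⟨g, hgf, hg, hvar⟩ := exists_log hf h0 hx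
  rw [hvar _ hx _ (hmaps right_mem_uIcc)]
  exact logVariation_eq (hg.comp hσ hmaps) fun t ht ↦ hgf _ (hmaps ht)

theorem logVariation_of_eq_neg_comp_neg {φ : ℝ → ℂ} (hf : ContinuousOn f (Icc (-a) a))
    (h0 : ∀ t ∈ Icc (-a) a, f t ≠ 0) (ha : 0 ≤ a) (hφ : ∀ t, φ t = -f (-t)) :
    logVariation φ (-a) a = -logVariation f (-a) a := by
  have hle : -a ≤ a := neg_le_self ha
  have hneg : MapsTo Neg.neg (uIcc (-a) a) (Icc (-a) a) := fun t ht ↦ by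
    rw [uIcc_of_le hle] at ht
    exact ⟨neg_le_neg ht.2, neg_le.1 ht.1⟩
  obtain ⟨g, hgf, hg, hvar⟩ := exists_log hf h0 (left_mem_Icc.2 hle)
  rw [hvar _ (left_mem_Icc.2 hle) _ (right_mem_Icc.2 hle),
    logVariation_eq (g := fun t ↦ g (-t) + Real.pi * Complex.I)]
  · rw [neg_neg]
    ring
  · exact (hg.comp continuousOn_neg hneg).add continuousOn_const
  · intro t ht
    rw [Complex.exp_add, Complex.exp_pi_mul_I, hgf _ (hneg ht), hφ, mul_neg_one]

end OrdConnected

/-- The change of a continuous logarithm of `D` once round the boundary of the rectangle with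
opposite corners `(a, c)` and `(b, d)`, clockwise if `a < b` and `c < d`. It is `2πi` times the
(negated) winding number of `D` along that boundary. -/
noncomputable def boundaryVariation (D : ℝ → ℝ → ℂ) (a b c d : ℝ) : ℂ :=
  logVariation (fun s ↦ D s d) a b - logVariation (fun s ↦ D s c) a b
    - logVariation (fun t ↦ D b t) c d + logVariation (fun t ↦ D a t) c d

theorem boundaryVariation_flip (D : ℝ → ℝ → ℂ) (a b c d : ℝ) :
    boundaryVariation (flip D) c d a b = -boundaryVariation D a b c d := by
  simp only [boundaryVariation, flip]
  ring

theorem boundaryVariation_congr {D D' : ℝ → ℝ → ℂ} {a b c d : ℝ}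
    (h : ∀ s ∈ uIcc a b, ∀ t ∈ uIcc c d, D s t = D' s t) :
    boundaryVariation D a b c d = boundaryVariation D' a b c d := by
  rw [boundaryVariation, boundaryVariation,
    logVariation_congr fun s hs ↦ h s hs d right_mem_uIcc,
    logVariation_congr fun s hs ↦ h s hs c left_mem_uIcc,
    logVariation_congr fun t ht ↦ h b right_mem_uIcc t ht,
    logVariation_congr fun t ht ↦ h a left_mem_uIcc t ht]

theorem boundaryVariation_eq_zero {D : ℝ → ℝ → ℂ} {a b c d : ℝ}
    (hD : ContinuousOn (fun x : ℝ × ℝ ↦ D x.1 x.2) (uIcc a b ×ˢ uIcc c d))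
    (h0 : ∀ s ∈ uIcc a b, ∀ t ∈ uIcc c d, D s t ≠ 0) : boundaryVariation D a b c d = 0 := by
  obtain ⟨g, hg, hgD⟩ := exists_continuousOn_log ((convex_uIcc a b).prod (convex_uIcc c d))
    (nonempty_uIcc.prod nonempty_uIcc) hD fun x hx ↦ h0 _ hx.1 _ hx.2
  have hhor : ∀ t ∈ uIcc c d, logVariation (fun s ↦ D s t) a b = g (b, t) - g (a, t) :=
    fun t ht ↦ logVariation_eq (g := fun s ↦ g (s, t))
      (hg.comp (by fun_prop) fun s hs ↦ ⟨hs, ht⟩) fun s hs ↦ hgD (s, t) ⟨hs, ht⟩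
  have hver : ∀ s ∈ uIcc a b, logVariation (fun t ↦ D s t) c d = g (s, d) - g (s, c) :=
    fun s hs ↦ logVariation_eq (g := fun t ↦ g (s, t))
      (hg.comp (by fun_prop) fun t ht ↦ ⟨hs, ht⟩) fun t ht ↦ hgD (s, t) ⟨hs, ht⟩
  rw [boundaryVariation, hhor d right_mem_uIcc, hhor c left_mem_uIcc, hver a left_mem_uIcc,
    hver b right_mem_uIcc]
  ring

theorem boundaryVariation_eq_of_homotopy {H : ℝ → ℝ → ℝ → ℂ} {a b c d : ℝ}
    (hH : ContinuousOn (fun x : ℝ × ℝ × ℝ ↦ H x.1 x.2.1 x.2.2)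
      (uIcc 0 1 ×ˢ uIcc a b ×ˢ uIcc c d))
    (h0 : ∀ r ∈ uIcc (0 : ℝ) 1, ∀ s ∈ uIcc a b, ∀ t ∈ uIcc c d,
      (s = a ∨ s = b) ∨ (t = c ∨ t = d) → H r s t ≠ 0) :
    boundaryVariation (H 0) a b c d = boundaryVariation (H 1) a b c d := by
  have hhor : ∀ t ∈ uIcc c d, t = c ∨ t = d → boundaryVariation (fun r s ↦ H r s t) 0 1 a b = 0 :=
    fun t ht ht' ↦ boundaryVariation_eq_zero
      (hH.comp (f := fun x : ℝ × ℝ ↦ (x.1, x.2, t)) (by fun_prop) fun x hx ↦ ⟨hx.1, hx.2, ht⟩)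
      fun r hr s hs ↦ h0 r hr s hs t ht (Or.inr ht')
  have hver : ∀ s ∈ uIcc a b, s = a ∨ s = b → boundaryVariation (fun r t ↦ H r s t) 0 1 c d = 0 :=
    fun s hs hs' ↦ boundaryVariation_eq_zero
      (hH.comp (f := fun x : ℝ × ℝ ↦ (x.1, s, x.2)) (by fun_prop) fun x hx ↦ ⟨hx.1, hs, hx.2⟩)
      fun r hr t ht ↦ h0 r hr s hs t ht (Or.inl hs')
  have htop := hhor d right_mem_uIcc (Or.inr rfl)
  have hbot := hhor c left_mem_uIcc (Or.inl rfl)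
  have hright := hver b right_mem_uIcc (Or.inr rfl)
  have hleft := hver a left_mem_uIcc (Or.inl rfl)
  simp only [boundaryVariation] at *
  linear_combination htop - hbot - hright + hleft

/-- Opposite sides contribute equally, and half of the boundary joins two opposite points. -/
theorem boundaryVariation_ne_zero_of_odd {F : ℝ → ℝ → ℂ} {a c : ℝ} (ha : 0 ≤ a) (hc : 0 ≤ c)
    (hF : ContinuousOn (fun x : ℝ × ℝ ↦ F x.1 x.2) (Icc (-a) a ×ˢ Icc (-c) c))
    (h0 : ∀ s ∈ Icc (-a) a, ∀ t ∈ Icc (-c) c, (s = -a ∨ s = a) ∨ (t = -c ∨ t = c) → F s t ≠ 0)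
    (hodd : ∀ s t, F (-s) (-t) = -F s t) : boundaryVariation F (-a) a (-c) c ≠ 0 := by
  have ha' : a ∈ Icc (-a) a := right_mem_Icc.2 (neg_le_self ha)
  have hc' : c ∈ Icc (-c) c := right_mem_Icc.2 (neg_le_self hc)
  have hna : -a ∈ Icc (-a) a := left_mem_Icc.2 (neg_le_self ha)
  have hnc : -c ∈ Icc (-c) c := left_mem_Icc.2 (neg_le_self hc)
  have htop : ContinuousOn (fun s ↦ F s c) (Icc (-a) a) :=
    hF.comp (f := fun s : ℝ ↦ (s, c)) (by fun_prop) fun s hs ↦ ⟨hs, hc'⟩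
  have htop0 : ∀ s ∈ Icc (-a) a, F s c ≠ 0 := fun s hs ↦ h0 s hs c hc' (by simp)
  have hright : ContinuousOn (fun t ↦ F a t) (Icc (-c) c) :=
    hF.comp (f := fun t : ℝ ↦ (a, t)) (by fun_prop) fun t ht ↦ ⟨ha', ht⟩
  have hright0 : ∀ t ∈ Icc (-c) c, F a t ≠ 0 := fun t ht ↦ h0 a ha' t ht (by simp)
  have hbot : logVariation (fun s ↦ F s (-c)) (-a) a = -logVariation (fun s ↦ F s c) (-a) a :=
    logVariation_of_eq_neg_comp_neg htop htop0 ha fun s ↦ by rw [← hodd, neg_neg]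
  have hleft : logVariation (fun t ↦ F (-a) t) (-c) c = -logVariation (fun t ↦ F a t) (-c) c :=
    logVariation_of_eq_neg_comp_neg hright hright0 hc fun t ↦ by rw [← hodd, neg_neg]
  have hexp : Complex.exp (logVariation (fun s ↦ F s c) (-a) a -
      logVariation (fun t ↦ F a t) (-c) c) = -1 := by
    rw [Complex.exp_sub, exp_logVariation htop htop0 hna ha',
      exp_logVariation hright hright0 hnc hc', ← neg_neg c, hodd]
    have := htop0 a ha'
    have := hright0 (-c) hnc
    field_simp
  intro hzero
  have hdiff : logVariation (fun s ↦ F s c) (-a) a - logVariation (fun t ↦ F a t) (-c) c = 0 := by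
    rw [boundaryVariation, hbot, hleft] at hzero
    linear_combination hzero / 2
  rw [hdiff, Complex.exp_zero] at hexp
  norm_num at hexp

theorem shrink_mem_ball {δ r s t : ℝ} (hδ : δ < 1) (hr : r ∈ Icc (0 : ℝ) 1)
    (hs : s ∈ Icc (-δ) δ) (ht : t ∈ Icc (-δ) δ) :
    ((1 - r / 2) * s, -(r / 2) * t) ∈ Metric.ball (0 : ℝ × ℝ) 1 := by
  have hsmall {k x : ℝ} (hk : k ∈ Icc (-1 : ℝ) 1) (hx : x ∈ Icc (-δ) δ) : ‖k * x‖ < 1 := by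
    rw [norm_mul, Real.norm_eq_abs, Real.norm_eq_abs]
    have := mul_le_mul (abs_le.2 hk) (abs_le.2 hx) (abs_nonneg x) zero_le_one
    linarith
  obtain ⟨hr0, hr1⟩ := hr
  rw [mem_ball_zero_iff, Prod.norm_def, max_lt_iff]
  exact ⟨hsmall ⟨by linarith, by linarith⟩ hs, hsmall ⟨by linarith, by linarith⟩ ht⟩

/-- Shrinking the two arcs of the cross towards antipodal arcs makes the difference odd. -/
theorem boundaryVariation_sub_ne_zero_of_injOn {g : ℝ × ℝ → ℂ} {δ : ℝ}
    (hg : ContinuousOn g (Metric.ball 0 1)) (hinj : InjOn g (Metric.ball 0 1)) (hδ : 0 < δ)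
    (hδ' : δ < 1) : boundaryVariation (fun s t ↦ g (s, 0) - g (0, t)) (-δ) δ (-δ) δ ≠ 0 := by
  set A : ℝ × ℝ × ℝ → ℝ × ℝ := fun x ↦ ((1 - x.1 / 2) * x.2.1, -(x.1 / 2) * x.2.2) with hA
  set B : ℝ × ℝ × ℝ → ℝ × ℝ := fun x ↦ (-(x.1 / 2) * x.2.1, (1 - x.1 / 2) * x.2.2) with hB
  have hcube : uIcc (0 : ℝ) 1 ×ˢ uIcc (-δ) δ ×ˢ uIcc (-δ) δ =
      Icc (0 : ℝ) 1 ×ˢ Icc (-δ) δ ×ˢ Icc (-δ) δ := by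
    rw [uIcc_of_le (neg_le_self hδ.le), uIcc_of_le zero_le_one]
  have hAball : MapsTo A (uIcc (0 : ℝ) 1 ×ˢ uIcc (-δ) δ ×ˢ uIcc (-δ) δ) (Metric.ball 0 1) := by
    intro x hx
    obtain ⟨hr, hs, ht⟩ := hcube ▸ hx
    exact shrink_mem_ball hδ' hr hs ht
  have hBball : MapsTo B (uIcc (0 : ℝ) 1 ×ˢ uIcc (-δ) δ ×ˢ uIcc (-δ) δ) (Metric.ball 0 1) := by
    intro x hx
    obtain ⟨hr, hs, ht⟩ := hcube ▸ hx
    have h := shrink_mem_ball hδ' hr ht hs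
    rw [mem_ball_zero_iff, Prod.norm_def, max_comm] at h
    rwa [mem_ball_zero_iff, Prod.norm_def]
  have hcont : ContinuousOn (fun x ↦ g (A x) - g (B x))
      (uIcc (0 : ℝ) 1 ×ˢ uIcc (-δ) δ ×ˢ uIcc (-δ) δ) :=
    (hg.comp (by fun_prop) hAball).sub (hg.comp (by fun_prop) hBball)
  have hne : ∀ r ∈ uIcc (0 : ℝ) 1, ∀ s ∈ uIcc (-δ) δ, ∀ t ∈ uIcc (-δ) δ,
      (s = -δ ∨ s = δ) ∨ (t = -δ ∨ t = δ) → g (A (r, s, t)) - g (B (r, s, t)) ≠ 0 := by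
    intro r hr s hs t ht hst h
    have hAB := hinj (hAball ⟨hr, hs, ht⟩) (hBball ⟨hr, hs, ht⟩) (sub_eq_zero.1 h)
    simp only [hA, hB, Prod.mk.injEq] at hAB
    rcases hst with (h | h) | (h | h) <;> linarith [hAB.1, hAB.2]
  have hhom := boundaryVariation_eq_of_homotopy
    (H := fun r s t ↦ g (A (r, s, t)) - g (B (r, s, t))) hcont hne
  have hodd := boundaryVariation_ne_zero_of_odd
    (F := fun s t ↦ g (A (1, s, t)) - g (B (1, s, t))) hδ.le hδ.le
    (hcont.comp (f := fun x : ℝ × ℝ ↦ ((1 : ℝ), x.1, x.2)) (by fun_prop) fun x hx ↦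
      hcube ▸ ⟨⟨zero_le_one, le_rfl⟩, hx⟩)
    (fun s hs t ht ↦ hne 1 right_mem_uIcc s (uIcc_of_le (neg_le_self hδ.le) ▸ hs)
      t (uIcc_of_le (neg_le_self hδ.le) ▸ ht))
    (fun s t ↦ by simp only [hA, hB]; ring_nf)
  rw [← hhom] at hodd
  simpa [hA, hB] using hodd

section IsolatedZero

variable {D : ℝ → ℝ → ℂ} {S T : Set ℝ} {r τ a b a' b' c d c' d' : ℝ}

theorem continuousOn_slice (hD : ContinuousOn (fun x : ℝ × ℝ ↦ D x.1 x.2) (S ×ˢ T))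
    (hc : c ∈ T) : ContinuousOn (fun s ↦ D s c) S :=
  hD.comp (f := fun s : ℝ ↦ (s, c)) (by fun_prop) fun _ hs ↦ ⟨hs, hc⟩

variable [S.OrdConnected]

theorem boundaryVariation_symm
    (hD : ContinuousOn (fun x : ℝ × ℝ ↦ D x.1 x.2) (S ×ˢ T))
    (h0 : ∀ s ∈ S, ∀ t ∈ T, D s t = 0 → s = r ∧ t = τ) (ha : a ∈ S)
    (hb : b ∈ S) (hc : c ∈ T) (hd : d ∈ T) (hcτ : c ≠ τ) (hdτ : d ≠ τ) :
    boundaryVariation D b a c d = -boundaryVariation D a b c d := by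
  rw [boundaryVariation, boundaryVariation,
    logVariation_symm (continuousOn_slice hD hc)
      (fun s hs h ↦ hcτ (h0 s hs c hc h).2) ha hb,
    logVariation_symm (continuousOn_slice hD hd)
      (fun s hs h ↦ hdτ (h0 s hs d hd h).2) ha hb]
  ring

theorem boundaryVariation_add
    (hD : ContinuousOn (fun x : ℝ × ℝ ↦ D x.1 x.2) (S ×ˢ T))
    (h0 : ∀ s ∈ S, ∀ t ∈ T, D s t = 0 → s = r ∧ t = τ) {m : ℝ} (ha : a ∈ S)
    (hm : m ∈ S) (hb : b ∈ S) (hc : c ∈ T) (hd : d ∈ T) (hcτ : c ≠ τ)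
    (hdτ : d ≠ τ) :
    boundaryVariation D a m c d + boundaryVariation D m b c d = boundaryVariation D a b c d := by
  simp only [boundaryVariation]
  rw [← logVariation_add (continuousOn_slice hD hc)
      (fun s hs h ↦ hcτ (h0 s hs c hc h).2) ha hm hb,
    ← logVariation_add (continuousOn_slice hD hd)
      (fun s hs h ↦ hdτ (h0 s hs d hd h).2) ha hm hb]
  ring

theorem boundaryVariation_eq_zero_of_notMem [T.OrdConnected]
    (hD : ContinuousOn (fun x : ℝ × ℝ ↦ D x.1 x.2) (S ×ˢ T))
    (h0 : ∀ s ∈ S, ∀ t ∈ T, D s t = 0 → s = r ∧ t = τ) (ha : a ∈ S)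
    (hb : b ∈ S) (hc : c ∈ T) (hd : d ∈ T) (hr : r ∉ uIcc a b) :
    boundaryVariation D a b c d = 0 := by
  have hab := OrdConnected.uIcc_subset ‹S.OrdConnected› ha hb
  have hcd := OrdConnected.uIcc_subset ‹T.OrdConnected› hc hd
  exact boundaryVariation_eq_zero (hD.mono (prod_mono hab hcd))
    fun s hs t ht h ↦ hr ((h0 s (hab hs) t (hcd ht) h).1 ▸ hs)

theorem boundaryVariation_ne_zero_of_mem_uIoo [T.OrdConnected]
    (hD : ContinuousOn (fun x : ℝ × ℝ ↦ D x.1 x.2) (S ×ˢ T))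
    (h0 : ∀ s ∈ S, ∀ t ∈ T, D s t = 0 → s = r ∧ t = τ) (ha : a ∈ S)
    (hb : b ∈ S) (ha' : a' ∈ S) (hb' : b' ∈ S) (hc : c ∈ T)
    (hd : d ∈ T) (hcτ : c ≠ τ) (hdτ : d ≠ τ) (hab : r ∈ uIoo a b) (hab' : r ∈ uIoo a' b')
    (hne : boundaryVariation D a b c d ≠ 0) : boundaryVariation D a' b' c d ≠ 0 := by
  have hzero : ∀ {x y : ℝ}, x ∈ S → y ∈ S → r ∉ uIcc x y →
      boundaryVariation D x y c d = 0 := fun hx hy hr ↦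
    boundaryVariation_eq_zero_of_notMem hD h0 hx hy hc hd hr
  have hadd : ∀ {x y z : ℝ}, x ∈ S → y ∈ S → z ∈ S →
      boundaryVariation D x y c d + boundaryVariation D y z c d = boundaryVariation D x z c d :=
    fun hx hy hz ↦ boundaryVariation_add hD h0 hx hy hz hc hd hcτ hdτ
  have hsymm := boundaryVariation_symm hD h0 ha' hb' hc hd hcτ hdτ
  have hsides : (r ∉ uIcc a a' ∧ r ∉ uIcc b' b) ∨ (r ∉ uIcc a b' ∧ r ∉ uIcc a' b) := by
    simp only [uIoo, uIcc, mem_Ioo, mem_Icc, inf_lt_iff, lt_sup_iff, inf_le_iff, le_sup_iff]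
      at hab hab' ⊢
    grind
  intro h
  rcases hsides with ⟨haa', hbb'⟩ | ⟨hab', hba'⟩
  · rw [← hadd ha ha' hb, ← hadd ha' hb' hb, hzero ha ha' haa', hzero hb' hb hbb', h] at hne
    norm_num at hne
  · rw [← hadd ha hb' hb, ← hadd hb' ha' hb, hzero ha hb' hab', hzero ha' hb hba', hsymm, h] at hne
    norm_num at hne

theorem boundaryVariation_ne_zero_of_mem_uIoo_prod [T.OrdConnected]
    (hD : ContinuousOn (fun x : ℝ × ℝ ↦ D x.1 x.2) (S ×ˢ T))
    (h0 : ∀ s ∈ S, ∀ t ∈ T, D s t = 0 → s = r ∧ t = τ) (ha : a ∈ S)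
    (hb : b ∈ S) (ha' : a' ∈ S) (hb' : b' ∈ S) (hc : c ∈ T)
    (hd : d ∈ T) (hc' : c' ∈ T) (hd' : d' ∈ T) (hab : r ∈ uIoo a b)
    (hab' : r ∈ uIoo a' b') (hcd : τ ∈ uIoo c d) (hcd' : τ ∈ uIoo c' d')
    (hne : boundaryVariation D a b c d ≠ 0) : boundaryVariation D a' b' c' d' ≠ 0 := by
  have hcτ : c ≠ τ := fun h ↦ left_notMem_uIoo (h ▸ hcd)
  have hdτ : d ≠ τ := fun h ↦ right_notMem_uIoo (h ▸ hcd)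
  have har : a' ≠ r := fun h ↦ left_notMem_uIoo (h ▸ hab')
  have hbr : b' ≠ r := fun h ↦ right_notMem_uIoo (h ▸ hab')
  have hside := boundaryVariation_ne_zero_of_mem_uIoo hD h0 ha hb ha' hb' hc hd hcτ hdτ hab hab' hne
  rw [← neg_ne_zero, ← boundaryVariation_flip] at hside ⊢
  exact boundaryVariation_ne_zero_of_mem_uIoo
    (hD.comp (f := Prod.swap) continuous_swap.continuousOn fun x hx ↦ ⟨hx.2, hx.1⟩)
    (fun t ht s hs h ↦ (h0 s hs t ht h).symm) hc hd hc' hd' ha' hb' har hbr hcd hcd' hside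

theorem boundaryVariation_comp
    (hD : ContinuousOn (fun x : ℝ × ℝ ↦ D x.1 x.2) (S ×ˢ T))
    (h0 : ∀ s ∈ S, ∀ t ∈ T, D s t = 0 → s = r ∧ t = τ) [T.OrdConnected] {σ ρ : ℝ → ℝ}
    (hσ : ContinuousOn σ (uIcc a b)) (hσS : MapsTo σ (uIcc a b) S)
    (hρ : ContinuousOn ρ (uIcc c d)) (hρT : MapsTo ρ (uIcc c d) T) (ha : σ a ≠ r) (hb : σ b ≠ r)
    (hc : ρ c ≠ τ) (hd : ρ d ≠ τ) :
    boundaryVariation (fun s t ↦ D (σ s) (ρ t)) a b c d =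
      boundaryVariation D (σ a) (σ b) (ρ c) (ρ d) := by
  have hhor : ∀ y ∈ uIcc c d, ρ y ≠ τ → logVariation (fun s ↦ D (σ s) (ρ y)) a b =
      logVariation (fun s ↦ D s (ρ y)) (σ a) (σ b) := fun y hy hne ↦
    logVariation_comp (f := fun s ↦ D s (ρ y)) (continuousOn_slice hD (hρT hy))
      (fun s hs h ↦ hne (h0 s hs _ (hρT hy) h).2) hσ hσS
  have hver : ∀ x ∈ uIcc a b, σ x ≠ r → logVariation (fun t ↦ D (σ x) (ρ t)) c d =
      logVariation (fun t ↦ D (σ x) t) (ρ c) (ρ d) := fun x hx hne ↦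
    logVariation_comp (f := fun t ↦ D (σ x) t)
      (hD.comp (f := fun t : ℝ ↦ (σ x, t)) (by fun_prop) fun _ ht ↦ ⟨hσS hx, ht⟩)
      (fun t ht h ↦ hne (h0 _ (hσS hx) t ht h).1) hρ hρT
  simp only [boundaryVariation, hhor _ left_mem_uIcc hc, hhor _ right_mem_uIcc hd,
    hver _ left_mem_uIcc ha, hver _ right_mem_uIcc hb]

end IsolatedZero

end LogVariation

section Arcs

open Set

/-- The standard identification of the plane with `ℂ`. -/
noncomputable abbrev toComplex : (ℝ × ℝ) ≃L[ℝ] ℂ := Complex.equivRealProdCLM.symm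

/-- The parameter of a point of an arc. Outside the image of the arc its values are junk. -/
noncomputable def Arc.param (γ : Arc) : ℝ × ℝ → ℝ := Function.invFunOn γ.toFun (Icc 0 1)

namespace Arc

variable (γ : Arc) {t : ℝ} {q : ℝ × ℝ}

theorem param_mem (hq : q ∈ γ.img) : γ.param q ∈ Icc (0 : ℝ) 1 := Function.invFunOn_mem hq

theorem toFun_param (hq : q ∈ γ.img) : γ.toFun (γ.param q) = q := Function.invFunOn_eq hq

theorem param_toFun (ht : t ∈ Icc (0 : ℝ) 1) : γ.param (γ.toFun t) = t :=
  γ.injOn.leftInvOn_invFunOn ht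

theorem toFun_mem_img (ht : t ∈ Icc (0 : ℝ) 1) : γ.toFun t ∈ γ.img := mem_image_of_mem _ ht

theorem continuousOn_param : ContinuousOn γ.param γ.img := by
  have hemb : Topology.IsClosedEmbedding ((Icc (0 : ℝ) 1).domRestrict γ.toFun) :=
    (continuousOn_iff_continuous_domRestrict.1 γ.contOn).isClosedEmbedding
      (injOn_iff_injective.1 γ.injOn)
  have hlift : Continuous fun q : γ.img ↦ (⟨γ.param q, γ.param_mem q.2⟩ : Icc (0 : ℝ) 1) :=
    hemb.isInducing.continuous_iff.2 <|
      continuous_subtype_val.congr fun q ↦ (γ.toFun_param q.2).symm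
  exact continuousOn_iff_continuous_domRestrict.2 (continuous_subtype_val.comp hlift)

theorem exists_lift_of_injOn {f : ℝ → ℝ × ℝ} {a b : ℝ} (hf : ContinuousOn f (Icc a b))
    (hinj : InjOn f (Icc a b)) (himg : MapsTo f (Icc a b) γ.img) :
    ∃ σ : ℝ → ℝ, ContinuousOn σ (Icc a b) ∧ MapsTo σ (Icc a b) (Icc 0 1) ∧
      (∀ x ∈ Icc a b, γ.toFun (σ x) = f x) ∧ ∀ x ∈ Ioo a b, σ x ∈ uIoo (σ a) (σ b) := by
  have hlift : ∀ x ∈ Icc a b, γ.toFun (γ.param (f x)) = f x := fun x hx ↦ γ.toFun_param (himg hx)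
  have hcont : ContinuousOn (fun x ↦ γ.param (f x)) (Icc a b) := γ.continuousOn_param.comp hf himg
  have hinj' : InjOn (fun x ↦ γ.param (f x)) (Icc a b) := fun x hx y hy hxy ↦
    hinj hx hy <| by
      rw [← hlift x hx, ← hlift y hy]
      exact congrArg γ.toFun hxy
  refine ⟨fun x ↦ γ.param (f x), hcont, fun x hx ↦ γ.param_mem (himg hx), hlift, fun x hx ↦ ?_⟩
  have hab := (hx.1.trans hx.2).le
  have hx' := Ioo_subset_Icc_self hx
  rcases hcont.strictMonoOn_of_injOn_Icc' hab hinj' with hmono | hanti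
  · exact mem_uIoo_of_lt (hmono (left_mem_Icc.2 hab) hx' hx.1)
      (hmono hx' (right_mem_Icc.2 hab) hx.2)
  · exact mem_uIoo_of_gt (hanti hx' (right_mem_Icc.2 hab) hx.2)
      (hanti (left_mem_Icc.2 hab) hx' hx.1)

end Arc

theorem CrossesProperlyAt.exists_chart {γ₁ γ₂ : Arc} {q : ℝ × ℝ} (hq : CrossesProperlyAt γ₁ γ₂ q) :
    ∃ G : ℝ × ℝ → ℝ × ℝ, ContinuousOn G (Metric.ball 0 1) ∧ InjOn G (Metric.ball 0 1) ∧
      (∀ z ∈ Metric.ball 0 1, z.2 = 0 → G z ∈ γ₁.img) ∧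
      ∀ z ∈ Metric.ball 0 1, z.1 = 0 → G z ∈ γ₂.img := by
  obtain ⟨-, -, h, -, htarget, -, hγ₁, hγ₂⟩ := hq
  have hmem : ∀ {A : Set (ℝ × ℝ)} {z : ℝ × ℝ}, z ∈ h '' (h.source ∩ A) → h.symm z ∈ A := by
    rintro A _ ⟨y, ⟨hy, hyA⟩, rfl⟩
    rwa [h.left_inv hy]
  exact ⟨h.symm, htarget ▸ h.continuousOn_symm, htarget ▸ h.symm.injOn,
    fun z hz hz0 ↦ hmem (hγ₁ ▸ ⟨hz, hz0⟩), fun z hz hz0 ↦ hmem (hγ₂ ▸ ⟨hz, hz0⟩)⟩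

/-- The difference of two arcs, as a complex-valued function of their two parameters. -/
noncomputable def Arc.diff (γ₁ γ₂ : Arc) (s t : ℝ) : ℂ :=
  toComplex (γ₁.toFun s) - toComplex (γ₂.toFun t)

theorem Arc.diff_eq_zero {γ₁ γ₂ : Arc} {s t : ℝ} :
    γ₁.diff γ₂ s t = 0 ↔ γ₁.toFun s = γ₂.toFun t :=
  sub_eq_zero.trans toComplex.injective.eq_iff

theorem Arc.continuousOn_diff (γ₁ γ₂ : Arc) :
    ContinuousOn (fun x : ℝ × ℝ ↦ γ₁.diff γ₂ x.1 x.2) (Icc 0 1 ×ˢ Icc 0 1) :=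
  (toComplex.continuous.comp_continuousOn
      (γ₁.contOn.comp continuousOn_fst fun _ hx ↦ hx.1)).sub
    (toComplex.continuous.comp_continuousOn
      (γ₂.contOn.comp continuousOn_snd fun _ hx ↦ hx.2))

section Crossing

variable {γ₁ γ₂ : Arc} {q : ℝ × ℝ} {r τ : ℝ}

theorem CrossesProperlyAt.exists_boundaryVariation_ne_zero (hq : CrossesProperlyAt γ₁ γ₂ q)
    (huniq : ∀ s ∈ Icc (0 : ℝ) 1, ∀ t ∈ Icc (0 : ℝ) 1, γ₁.diff γ₂ s t = 0 → s = r ∧ t = τ) :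
    ∃ a ∈ Icc (0 : ℝ) 1, ∃ b ∈ Icc (0 : ℝ) 1, ∃ c ∈ Icc (0 : ℝ) 1, ∃ d ∈ Icc (0 : ℝ) 1,
      r ∈ uIoo a b ∧ τ ∈ uIoo c d ∧ boundaryVariation (γ₁.diff γ₂) a b c d ≠ 0 := by
  obtain ⟨G, hG, hinj, hG₁, hG₂⟩ := hq.exists_chart
  have hball : ∀ x ∈ Icc (-(1 / 2) : ℝ) (1 / 2),
      (x, 0) ∈ Metric.ball (0 : ℝ × ℝ) 1 ∧ (0, x) ∈ Metric.ball (0 : ℝ × ℝ) 1 := fun x hx ↦ by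
    have hx1 : |x| < 1 := (abs_le.2 hx).trans_lt (by norm_num)
    simp [Prod.norm_def, hx1]
  obtain ⟨σ, hσ, hσI, hγσ, hσ0⟩ := γ₁.exists_lift_of_injOn
    (hG.comp (f := fun x : ℝ ↦ (x, 0)) (by fun_prop) fun x hx ↦ (hball x hx).1)
    (hinj.comp (Prod.mk_left_injective 0).injOn fun x hx ↦ (hball x hx).1)
    fun x hx ↦ hG₁ _ (hball x hx).1 rfl
  obtain ⟨ρ, hρ, hρI, hγρ, hρ0⟩ := γ₂.exists_lift_of_injOn
    (hG.comp (f := fun x : ℝ ↦ (0, x)) (by fun_prop) fun x hx ↦ (hball x hx).2)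
    (hinj.comp (Prod.mk_right_injective 0).injOn fun x hx ↦ (hball x hx).2)
    fun x hx ↦ hG₂ _ (hball x hx).2 rfl
  have h0 : (0 : ℝ) ∈ Ioo (-(1 / 2)) (1 / 2) := by norm_num
  have hl : -(1 / 2) ∈ Icc (-(1 / 2) : ℝ) (1 / 2) := by norm_num
  have hu : 1 / 2 ∈ Icc (-(1 / 2) : ℝ) (1 / 2) := by norm_num
  have hcenter : σ 0 = r ∧ ρ 0 = τ := by
    have h0' := Ioo_subset_Icc_self h0
    exact huniq _ (hσI h0') _ (hρI h0')
      (Arc.diff_eq_zero.2 ((hγσ 0 h0').trans (hγρ 0 h0').symm))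
  have hσr := hcenter.1 ▸ hσ0 0 h0
  have hρτ := hcenter.2 ▸ hρ0 0 h0
  refine ⟨_, hσI hl, _, hσI hu, _, hρI hl, _, hρI hu, hσr, hρτ, ?_⟩
  have hIcc : uIcc (-(1 / 2) : ℝ) (1 / 2) = Icc (-(1 / 2)) (1 / 2) := uIcc_of_le (by norm_num)
  rw [← boundaryVariation_comp (γ₁.continuousOn_diff γ₂) huniq (hIcc ▸ hσ) (hIcc ▸ hσI) (hIcc ▸ hρ)
      (hIcc ▸ hρI) (fun h ↦ left_notMem_uIoo (h ▸ hσr)) (fun h ↦ right_notMem_uIoo (h ▸ hσr))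
      (fun h ↦ left_notMem_uIoo (h ▸ hρτ)) (fun h ↦ right_notMem_uIoo (h ▸ hρτ)),
    boundaryVariation_congr (D' := fun s t ↦ toComplex (G (s, 0)) - toComplex (G (0, t)))
      fun s hs t ht ↦ by rw [Arc.diff, hγσ s (hIcc ▸ hs), hγρ t (hIcc ▸ ht)]; rfl]
  exact boundaryVariation_sub_ne_zero_of_injOn (g := toComplex ∘ G)
    (toComplex.continuous.comp_continuousOn hG) (toComplex.injective.comp_injOn hinj)
    (by norm_num) (by norm_num)

theorem CrossesProperlyAt.boundaryVariation_ne_zero (hq : CrossesProperlyAt γ₁ γ₂ q)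
    (huniq : ∀ s ∈ Icc (0 : ℝ) 1, ∀ t ∈ Icc (0 : ℝ) 1, γ₁.diff γ₂ s t = 0 → s = r ∧ t = τ)
    {a b c d : ℝ} (ha : a ∈ Icc (0 : ℝ) 1) (hb : b ∈ Icc (0 : ℝ) 1) (hc : c ∈ Icc (0 : ℝ) 1)
    (hd : d ∈ Icc (0 : ℝ) 1) (hr : r ∈ uIoo a b) (hτ : τ ∈ uIoo c d) :
    boundaryVariation (γ₁.diff γ₂) a b c d ≠ 0 := by
  obtain ⟨a', ha', b', hb', c', hc', d', hd', hr', hτ', hne⟩ :=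
    hq.exists_boundaryVariation_ne_zero huniq
  exact boundaryVariation_ne_zero_of_mem_uIoo_prod (γ₁.continuousOn_diff γ₂) huniq ha' hb' ha hb
    hc' hd' hc hd hr' hr hτ' hτ hne

end Crossing

end Arcs

section ClosedChains

open Set

theorem exists_mem_forall_norm_lt {E : Type*} [SeminormedAddGroup E] {S C : Set E}
    (hS : Bornology.IsBounded S) (hC : ¬Bornology.IsBounded C) :
    ∃ y ∈ C, 0 < ‖y‖ ∧ ∀ w ∈ S, ‖w‖ < ‖y‖ := by
  obtain ⟨r, hr⟩ := hS.exists_norm_le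
  obtain ⟨y, hy, hry⟩ : ∃ y ∈ C, max r 0 < ‖y‖ := by
    by_contra! hle
    exact hC (isBounded_iff_forall_norm_le.2 ⟨max r 0, hle⟩)
  exact ⟨y, hy, (le_max_right _ _).trans_lt hry,
    fun w hw ↦ (hr w hw).trans_lt ((le_max_left _ _).trans_lt hry)⟩

/-- A finite union of closed curves in the plane, cut into pieces: the piece `curve i` runs from
the parameter `source i` to the parameter `target i` (which may be smaller) and is followed by the
piece `curve (next i)`. -/
structure ClosedChain (ι : Type*) where
  curve : ι → ℝ → ℝ × ℝ
  source : ι → ℝ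
  target : ι → ℝ
  next : Equiv.Perm ι
  continuousOn_curve : ∀ i, ContinuousOn (curve i) (uIcc (source i) (target i))
  curve_target : ∀ i, curve i (target i) = curve (next i) (source (next i))

namespace ClosedChain

variable {ι : Type*} (K : ClosedChain ι)

/-- The set of points covered by a closed chain. -/
def support : Set (ℝ × ℝ) := ⋃ i, K.curve i '' uIcc (K.source i) (K.target i)

variable {K} in
theorem mem_support {z : ℝ × ℝ} :
    z ∈ K.support ↔ ∃ i, ∃ x ∈ uIcc (K.source i) (K.target i), K.curve i x = z := by
  simp [support]

theorem isCompact_support [Finite ι] : IsCompact K.support :=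
  isCompact_iUnion fun i ↦ isCompact_uIcc.image_of_continuousOn (K.continuousOn_curve i)

variable {K} in
theorem boundaryVariation_eq_zero_of_disjoint {i : ι} {β : ℝ → ℝ × ℝ} {c d : ℝ}
    (hβ : ContinuousOn β (uIcc c d))
    (h : Disjoint (K.curve i '' uIcc (K.source i) (K.target i)) (β '' uIcc c d)) :
    boundaryVariation (fun x y ↦ toComplex (K.curve i x) - toComplex (β y))
      (K.source i) (K.target i) c d = 0 := by
  refine boundaryVariation_eq_zero ?_ fun x hx y hy ↦ sub_ne_zero.2 <|
    toComplex.injective.ne <|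
      h.ne_of_mem (mem_image_of_mem _ hx) (mem_image_of_mem _ hy)
  exact (toComplex.continuous.comp_continuousOn
      ((K.continuousOn_curve i).comp continuousOn_fst fun _ hx ↦ hx.1)).sub
    (toComplex.continuous.comp_continuousOn (hβ.comp continuousOn_snd fun _ hx ↦ hx.2))

variable [Fintype ι]

theorem sum_target_sub_source (f : ℝ × ℝ → ℂ) :
    ∑ i, (f (K.curve i (K.target i)) - f (K.curve i (K.source i))) = 0 := by
  rw [Finset.sum_sub_distrib, sub_eq_zero,
    ← Equiv.sum_comp K.next fun i ↦ f (K.curve i (K.source i))]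
  exact Finset.sum_congr rfl fun i _ ↦ by rw [K.curve_target]

/-- `2πi` times the winding number of a closed chain around a point off its support. -/
noncomputable def winding (z : ℝ × ℝ) : ℂ :=
  ∑ i, logVariation (fun x ↦ toComplex (K.curve i x) - toComplex z) (K.source i) (K.target i)

theorem winding_sub_winding (β : ℝ → ℝ × ℝ) (c d : ℝ) :
    K.winding (β d) - K.winding (β c) =
      ∑ i, boundaryVariation (fun x y ↦ toComplex (K.curve i x) - toComplex (β y))
        (K.source i) (K.target i) c d := by
  have htele := K.sum_target_sub_source fun z ↦
    logVariation (fun y ↦ toComplex z - toComplex (β y)) c d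
  rw [winding, winding, ← Finset.sum_sub_distrib, ← sub_zero (Finset.sum _ _), ← htele,
    ← Finset.sum_sub_distrib]
  exact Finset.sum_congr rfl fun i _ ↦ by rw [boundaryVariation]; ring

section Path

variable {K} {β : ℝ → ℝ × ℝ} {c d : ℝ}

theorem winding_eq_of_disjoint (hβ : ContinuousOn β (uIcc c d))
    (h : ∀ i, Disjoint (K.curve i '' uIcc (K.source i) (K.target i)) (β '' uIcc c d)) :
    K.winding (β c) = K.winding (β d) := by
  refine (sub_eq_zero.1 ?_).symm
  rw [K.winding_sub_winding]
  exact Finset.sum_eq_zero fun i _ ↦ boundaryVariation_eq_zero_of_disjoint hβ (h i)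

theorem winding_ne_of_boundaryVariation_ne_zero {k : ι} (hβ : ContinuousOn β (uIcc c d))
    (h : ∀ i ≠ k, Disjoint (K.curve i '' uIcc (K.source i) (K.target i)) (β '' uIcc c d))
    (hk : boundaryVariation (fun x y ↦ toComplex (K.curve k x) - toComplex (β y))
      (K.source k) (K.target k) c d ≠ 0) :
    K.winding (β c) ≠ K.winding (β d) := by
  refine (sub_ne_zero.1 ?_).symm
  rwa [K.winding_sub_winding, Finset.sum_eq_single k
    (fun i _ hi ↦ boundaryVariation_eq_zero_of_disjoint hβ (h i hi)) (by simp)]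

end Path

section Outside

variable {K} {z w : ℝ × ℝ}

theorem winding_eq_of_joinedIn (h : JoinedIn K.supportᶜ z w) : K.winding z = K.winding w := by
  obtain ⟨p, hp⟩ := h
  have hpath : K.winding (p.extend 0) = K.winding (p.extend 1) := by
    refine winding_eq_of_disjoint p.continuous_extend.continuousOn fun i ↦
      disjoint_image_image fun x hx y hy hxy ↦ ?_
    rw [uIcc_of_le zero_le_one] at hy
    rw [Path.extend_apply p hy] at hxy
    exact hp ⟨y, hy⟩ (mem_support.2 ⟨i, x, hx, hxy⟩)
  simpa using hpath

/-- Far from the support, `y ↦ log (1 - y / z) + log (-z)` is a logarithm of `y - z`. -/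
theorem winding_eq_zero_of_norm_lt (hz : toComplex z ≠ 0)
    (h : ∀ y ∈ K.support, ‖toComplex y‖ < ‖toComplex z‖) : K.winding z = 0 := by
  have hslit : ∀ y ∈ K.support, 1 - toComplex y / toComplex z ∈ Complex.slitPlane := fun y hy ↦ by
    rw [sub_eq_add_neg]
    refine Complex.mem_slitPlane_of_norm_lt_one ?_
    rw [norm_neg, norm_div]
    exact (div_lt_one (norm_pos_iff.2 hz)).2 (h y hy)
  rw [winding, ← K.sum_target_sub_source fun y ↦
    Complex.log (1 - toComplex y / toComplex z) + Complex.log (-toComplex z)]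
  refine Finset.sum_congr rfl fun i _ ↦ ?_
  have hmem : ∀ x ∈ uIcc (K.source i) (K.target i), K.curve i x ∈ K.support :=
    fun x hx ↦ mem_support.2 ⟨i, x, hx, rfl⟩
  refine logVariation_eq
    (g := fun x ↦ Complex.log (1 - toComplex (K.curve i x) / toComplex z) +
      Complex.log (-toComplex z)) ?_ fun x hx ↦ ?_
  · refine ContinuousOn.add (ContinuousOn.clog ?_ fun x hx ↦ hslit _ (hmem x hx))
      continuousOn_const
    exact continuousOn_const.sub
      ((toComplex.continuous.comp_continuousOn (K.continuousOn_curve i)).div_const _)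
  · rw [Complex.exp_add, Complex.exp_log (Complex.slitPlane_ne_zero (hslit _ (hmem x hx))),
      Complex.exp_log (neg_ne_zero.2 hz)]
    field_simp
    ring

theorem winding_eq_zero_of_mem_contour {V : Type} {γ : V → Arc} (hK : K.support ⊆ arcUnion γ)
    (hz : z ∈ contour γ) : K.winding z = 0 := by
  obtain ⟨hzU, hunb⟩ := hz
  have hsub : (arcUnion γ)ᶜ ⊆ K.supportᶜ := compl_subset_compl.2 hK
  have hpath : IsPathConnected (connectedComponentIn K.supportᶜ z) :=
    K.isCompact_support.isClosed.isOpen_compl.connectedComponentIn.isConnected_iff_isPathConnected.1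
      (isConnected_connectedComponentIn_iff.2 (hsub hzU))
  have hunb' : ¬Bornology.IsBounded (toComplex '' connectedComponentIn (arcUnion γ)ᶜ z) :=
    fun h ↦ hunb <| by
      simpa [image_image] using toComplex.symm.lipschitz.isBounded_image h
  obtain ⟨_, ⟨y, hy, rfl⟩, hy0, hfar⟩ := exists_mem_forall_norm_lt
    (K.isCompact_support.image toComplex.continuous).isBounded hunb'
  have hjoined := (hpath.joinedIn z (mem_connectedComponentIn (hsub hzU)) y
    (connectedComponentIn_mono z hsub hy)).mono (connectedComponentIn_subset _ _)
  rw [winding_eq_of_joinedIn hjoined, winding_eq_zero_of_norm_lt (norm_pos_iff.1 hy0)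
    (forall_mem_image.1 hfar)]

theorem winding_eq_zero_of_mem_closure_contour {V : Type} {γ : V → Arc}
    (hK : K.support ⊆ arcUnion γ) (hz : z ∈ closure (contour γ)) (hzK : z ∉ K.support) :
    K.winding z = 0 := by
  obtain ⟨ε, hε, hball⟩ := Metric.isOpen_iff.1 K.isCompact_support.isClosed.isOpen_compl z hzK
  obtain ⟨x, hx, hzx⟩ := Metric.mem_closure_iff.1 hz ε hε
  have hjoined : JoinedIn K.supportᶜ z x :=
    (((convex_ball z ε).isPathConnected ⟨z, Metric.mem_ball_self hε⟩).joinedIn z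
      (Metric.mem_ball_self hε) x (Metric.mem_ball'.2 hzx)).mono hball
  rw [winding_eq_of_joinedIn hjoined, winding_eq_zero_of_mem_contour hK hx]

end Outside

end ClosedChain

end ClosedChains

section Strings

open Set

/-- An arc traversed in the opposite direction. -/
def Arc.reverse (γ : Arc) : Arc where
  toFun t := γ.toFun (1 - t)
  contOn := γ.contOn.comp (by fun_prop) fun _ ht ↦ Icc.mem_iff_one_sub_mem.1 ht
  injOn := γ.injOn.comp (sub_right_injective.injOn) fun _ ht ↦ Icc.mem_iff_one_sub_mem.1 ht

theorem Arc.img_reverse (γ : Arc) : γ.reverse.img = γ.img := by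
  change (γ.toFun ∘ (1 - ·)) '' Icc 0 1 = γ.toFun '' Icc 0 1
  rw [image_comp, image_const_sub_Icc]
  norm_num

theorem Arc.image_Ioo_reverse (γ : Arc) :
    γ.reverse.toFun '' Ioo 0 1 = γ.toFun '' Ioo 0 1 := by
  change (γ.toFun ∘ (1 - ·)) '' Ioo 0 1 = γ.toFun '' Ioo 0 1
  rw [image_comp, image_const_sub_Ioo]
  norm_num

theorem CrossesProperlyAt.congr {γ₁ γ₂ γ₁' γ₂' : Arc} {q : ℝ × ℝ} (h : CrossesProperlyAt γ₁ γ₂ q)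
    (h₁ : γ₁'.img = γ₁.img) (h₁' : γ₁'.toFun '' Ioo 0 1 = γ₁.toFun '' Ioo 0 1)
    (h₂ : γ₂'.img = γ₂.img) (h₂' : γ₂'.toFun '' Ioo 0 1 = γ₂.toFun '' Ioo 0 1) :
    CrossesProperlyAt γ₁' γ₂' q := by
  obtain ⟨hq₁, hq₂, hchart⟩ := h
  change q ∈ γ₁.toFun '' Ioo 0 1 at hq₁
  change q ∈ γ₂.toFun '' Ioo 0 1 at hq₂
  rw [← h₁'] at hq₁
  rw [← h₂'] at hq₂
  rw [← h₁, ← h₂] at hchart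
  exact ⟨hq₁, hq₂, hchart⟩

namespace OneStringRep

variable {V : Type} {G : SimpleGraph V}

/-- A string representation all of whose strings start on the closure of the contour. -/
def StartsOutside (R : OneStringRep G) : Prop :=
  ∀ v, (R.γ v).toFun 0 ∈ closure (contour R.γ)

open Classical in
/-- The representation obtained by reversing the strings of the vertices in `S`. -/
noncomputable def reorient (R : OneStringRep G) (S : Set V) : OneStringRep G :=
  let γ v := if v ∈ S then (R.γ v).reverse else R.γ v
  have himg v : (γ v).img = (R.γ v).img := by grind [Arc.img_reverse]
  have hIoo v : (γ v).toFun '' Ioo 0 1 = (R.γ v).toFun '' Ioo 0 1 := by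
    grind [Arc.image_Ioo_reverse]
  { γ := γ
    adj_inter u v h := by simpa only [himg] using R.adj_inter u v h
    nonadj_disjoint u v hne h := by simpa only [himg] using R.nonadj_disjoint u v hne h
    proper u v hne q hq :=
      (R.proper u v hne q (by simpa only [himg] using hq)).congr (himg u) (hIoo u) (himg v) (hIoo v)
    no_triple u v w huv huw hvw := by simpa only [himg] using R.no_triple u v w huv huw hvw }

variable (R : OneStringRep G) (S : Set V) {u v : V}

theorem reorient_of_mem (hv : v ∈ S) : (R.reorient S).γ v = (R.γ v).reverse := if_pos hv

theorem reorient_of_notMem (hv : v ∉ S) : (R.reorient S).γ v = R.γ v := if_neg hv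

theorem img_reorient (v : V) : ((R.reorient S).γ v).img = (R.γ v).img := by
  by_cases hv : v ∈ S
  · rw [reorient_of_mem R S hv, Arc.img_reverse]
  · rw [reorient_of_notMem R S hv]

theorem contour_reorient : contour (R.reorient S).γ = contour R.γ := by
  simp only [contour, arcUnion, img_reorient]

theorem exists_startsOutside {p : V → ℝ × ℝ} (hR : OrderPreserving G p R)
    (hout : ∀ v, (R.γ v).toFun 0 ∈ closure (contour R.γ) ∨
      (R.γ v).toFun 1 ∈ closure (contour R.γ)) :
    ∃ R' : OneStringRep G, OrderPreserving G p R' ∧ R'.StartsOutside := by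
  let S := {v | (R.γ v).toFun 0 ∉ closure (contour R.γ)}
  refine ⟨R.reorient S, fun v ↦ ?_, fun v ↦ ?_⟩
  · obtain ⟨l, hnodup, hmem, hsorted, r, dir, t, ht, htl⟩ := hR v
    by_cases hv : v ∈ S
    · refine ⟨l, hnodup, hmem, hsorted, r, !dir, fun w ↦ 1 - t w, fun w hw ↦ ?_, ?_⟩
      · rw [reorient_of_mem R S hv, img_reorient]
        simpa [Arc.reverse, and_comm] using ht w hw
      · cases dir <;> simpa using htl
    · refine ⟨l, hnodup, hmem, hsorted, r, dir, t, fun w hw ↦ ?_, htl⟩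
      rw [reorient_of_notMem R S hv, img_reorient]
      exact ht w hw
  · rw [contour_reorient]
    by_cases hv : v ∈ S
    · rw [reorient_of_mem R S hv]
      simpa [Arc.reverse] using (hout v).resolve_left hv
    · rw [reorient_of_notMem R S hv]
      exact not_not.1 hv

section CrossTime

variable {R} {w : V} {s t : ℝ}

variable (R) in
/-- The point where the strings of two adjacent vertices meet. -/
noncomputable def crossing (u v : V) : ℝ × ℝ :=
  Classical.epsilon fun q ↦ q ∈ (R.γ u).img ∩ (R.γ v).img

variable (R) in
/-- The parameter at which the string of `u` meets the string of the adjacent vertex `v`. -/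
noncomputable def crossTime (u v : V) : ℝ := (R.γ u).param (R.crossing u v)

theorem crossing_comm (u v : V) : R.crossing u v = R.crossing v u := by
  simp only [crossing, inter_comm]

theorem crossing_mem (h : G.Adj u v) : R.crossing u v ∈ (R.γ u).img ∩ (R.γ v).img := by
  obtain ⟨q, hq⟩ := R.adj_inter u v h
  exact Classical.epsilon_spec ⟨q, hq ▸ mem_singleton q⟩

theorem toFun_crossTime (h : G.Adj u v) :
    (R.γ u).toFun (R.crossTime u v) = R.crossing u v :=
  (R.γ u).toFun_param (crossing_mem h).1

theorem toFun_crossTime_comm (h : G.Adj u v) :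
    (R.γ u).toFun (R.crossTime u v) = (R.γ v).toFun (R.crossTime v u) := by
  rw [toFun_crossTime h, toFun_crossTime h.symm, crossing_comm]

theorem eq_crossTime (h : G.Adj u v) (ht : t ∈ Icc (0 : ℝ) 1)
    (hmem : (R.γ u).toFun t ∈ (R.γ v).img) : t = R.crossTime u v := by
  obtain ⟨q, hq⟩ := R.adj_inter u v h
  have hcross : R.crossing u v = (R.γ u).toFun t := by
    have h₁ := crossing_mem (R := R) h
    have h₂ : (R.γ u).toFun t ∈ (R.γ u).img ∩ (R.γ v).img := ⟨(R.γ u).toFun_mem_img ht, hmem⟩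
    rw [hq] at h₁ h₂
    exact h₁.trans h₂.symm
  rw [crossTime, hcross, Arc.param_toFun _ ht]

theorem crossTime_mem_Ioo (h : G.Adj u v) : R.crossTime u v ∈ Ioo (0 : ℝ) 1 := by
  obtain ⟨⟨t, ht, htq⟩, -⟩ := R.proper u v h.ne _ (crossing_mem h)
  rwa [← eq_crossTime h (Ioo_subset_Icc_self ht) (htq ▸ (crossing_mem h).2)]

theorem crossTime_mem_Icc (h : G.Adj u v) : R.crossTime u v ∈ Icc (0 : ℝ) 1 :=
  Ioo_subset_Icc_self (crossTime_mem_Ioo h)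

theorem crossTime_ne (hv : G.Adj u v) (hw : G.Adj u w) (hne : v ≠ w) :
    R.crossTime u v ≠ R.crossTime u w := fun h ↦ by
  have hcross : R.crossing u v = R.crossing u w := by
    rw [← toFun_crossTime hv, ← toFun_crossTime hw, h]
  exact (R.no_triple u v w hv.ne hw.ne hne).le
    ⟨crossing_mem hv, hcross ▸ (crossing_mem hw).2⟩

theorem boundaryVariation_diff_ne_zero {a b c d : ℝ} (h : G.Adj u v) (ha : a ∈ Icc (0 : ℝ) 1)
    (hb : b ∈ Icc (0 : ℝ) 1) (hc : c ∈ Icc (0 : ℝ) 1) (hd : d ∈ Icc (0 : ℝ) 1)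
    (huv : R.crossTime u v ∈ uIoo a b) (hvu : R.crossTime v u ∈ uIoo c d) :
    boundaryVariation ((R.γ u).diff (R.γ v)) a b c d ≠ 0 := by
  refine (R.proper u v h.ne _ (crossing_mem h)).boundaryVariation_ne_zero
    (fun s hs t ht hst ↦ ?_) ha hb hc hd huv hvu
  rw [Arc.diff_eq_zero] at hst
  exact ⟨eq_crossTime h hs ⟨t, ht, hst.symm⟩, eq_crossTime h.symm ht ⟨s, hs, hst⟩⟩

end CrossTime

section Disjoint

variable {R} {S T : Set ℝ}

theorem disjoint_image_of_compl_adj (h : Gᶜ.Adj u v) (hS : S ⊆ Icc 0 1) (hT : T ⊆ Icc 0 1) :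
    Disjoint ((R.γ u).toFun '' S) ((R.γ v).toFun '' T) :=
  (disjoint_iff_inter_eq_empty.2 (R.nonadj_disjoint u v h.1 h.2)).mono
    (image_mono hS) (image_mono hT)

theorem disjoint_image_of_crossTime_notMem_left (h : G.Adj u v) (hS : S ⊆ Icc 0 1)
    (hT : T ⊆ Icc 0 1) (hmem : R.crossTime u v ∉ S) :
    Disjoint ((R.γ u).toFun '' S) ((R.γ v).toFun '' T) :=
  disjoint_image_image fun _ hs t ht hst ↦
    hmem (eq_crossTime h (hS hs) ⟨t, hT ht, hst.symm⟩ ▸ hs)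

theorem disjoint_image_of_crossTime_notMem_right (h : G.Adj u v) (hS : S ⊆ Icc 0 1)
    (hT : T ⊆ Icc 0 1) (hmem : R.crossTime v u ∉ T) :
    Disjoint ((R.γ u).toFun '' S) ((R.γ v).toFun '' T) :=
  (disjoint_image_of_crossTime_notMem_left h.symm hT hS hmem).symm

theorem uIcc_crossTime_subset {w : V} (hv : G.Adj u v) (hw : G.Adj u w) :
    uIcc (R.crossTime u v) (R.crossTime u w) ⊆ Icc 0 1 :=
  uIcc_subset_Icc (crossTime_mem_Icc hv) (crossTime_mem_Icc hw)

end Disjoint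

section Cycle

variable {m : ℕ} [NeZero m] (u : Fin m → V) (hu : ∀ i, G.Adj (u i) (u (i + 1)))

include hu in
theorem adj_sub_one (i : Fin m) : G.Adj (u i) (u (i - 1)) := by
  simpa using (hu (i - 1)).symm

/-- The closed curve that follows the strings along a closed walk `u` of the graph, switching from
the string of `u i` to that of `u (i + 1)` at their crossing. -/
noncomputable def cycle : ClosedChain (Fin m) where
  curve i := (R.γ (u i)).toFun
  source i := R.crossTime (u i) (u (i - 1))
  target i := R.crossTime (u i) (u (i + 1))
  next := Equiv.addRight 1
  continuousOn_curve i :=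
    (R.γ (u i)).contOn.mono (uIcc_crossTime_subset (adj_sub_one u hu i) (hu i))
  curve_target i := by simpa using toFun_crossTime_comm (hu i)

/-- The part of the string of `u i` used by `OneStringRep.cycle`. -/
def cycleSide (i : Fin m) : Set (ℝ × ℝ) :=
  (R.γ (u i)).toFun '' uIcc (R.crossTime (u i) (u (i - 1))) (R.crossTime (u i) (u (i + 1)))

variable {R u hu} {v : V} {s t : ℝ}

theorem winding_cycle_eq (hs : s ∈ Icc (0 : ℝ) 1) (ht : t ∈ Icc (0 : ℝ) 1)
    (h : ∀ i, Disjoint (R.cycleSide u i) ((R.γ v).toFun '' uIcc s t)) :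
    (R.cycle u hu).winding ((R.γ v).toFun s) = (R.cycle u hu).winding ((R.γ v).toFun t) :=
  ClosedChain.winding_eq_of_disjoint ((R.γ v).contOn.mono (uIcc_subset_Icc hs ht)) h

theorem winding_cycle_ne (k : Fin m) (hs : s ∈ Icc (0 : ℝ) 1) (ht : t ∈ Icc (0 : ℝ) 1)
    (h : ∀ i ≠ k, Disjoint (R.cycleSide u i) ((R.γ v).toFun '' uIcc s t)) (hv : G.Adj (u k) v)
    (hk : R.crossTime (u k) v ∈
      uIoo (R.crossTime (u k) (u (k - 1))) (R.crossTime (u k) (u (k + 1))))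
    (hvk : R.crossTime v (u k) ∈ uIoo s t) :
    (R.cycle u hu).winding ((R.γ v).toFun s) ≠ (R.cycle u hu).winding ((R.γ v).toFun t) :=
  ClosedChain.winding_ne_of_boundaryVariation_ne_zero
    ((R.γ v).contOn.mono (uIcc_subset_Icc hs ht)) h
    (boundaryVariation_diff_ne_zero hv (crossTime_mem_Icc (adj_sub_one u hu k))
      (crossTime_mem_Icc (hu k)) hs ht hk hvk)

theorem winding_cycle_eq_zero (hR : R.StartsOutside) (ht : t ∈ Icc (0 : ℝ) 1)
    (h : ∀ i, Disjoint (R.cycleSide u i) ((R.γ v).toFun '' uIcc 0 t)) :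
    (R.cycle u hu).winding ((R.γ v).toFun t) = 0 := by
  rw [← winding_cycle_eq (left_mem_Icc.2 zero_le_one) ht h]
  have hsub : (R.cycle u hu).support ⊆ arcUnion R.γ := iUnion_subset fun i ↦
    (image_mono (uIcc_crossTime_subset (adj_sub_one u hu i) (hu i))).trans
      (subset_iUnion (fun v ↦ (R.γ v).img) (u i))
  refine ClosedChain.winding_eq_zero_of_mem_closure_contour hsub (hR v) fun hmem ↦ ?_
  obtain ⟨i, hi⟩ := mem_iUnion.1 hmem
  exact (h i).notMem_of_mem_left hi (mem_image_of_mem _ left_mem_uIcc)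

end Cycle

end OneStringRep

end Strings

section Obstruction

open Set

namespace OneStringRep

variable {V : Type} {G : SimpleGraph V} {R : OneStringRep G}

section Triangle

variable {a b c v v' w : V} {t : ℝ}

variable (hR : R.StartsOutside) (ha : G.Adj c a) (hb : G.Adj c b) (hab : G.Adj a b)

include ha hb hab in
theorem adj_triangle (i : Fin 3) : G.Adj (![c, b, a] i) (![c, b, a] (i + 1)) :=
  match i with
  | 0 => hb
  | 1 => hab.symm
  | 2 => ha.symm

include hR in
theorem winding_triangle_eq_zero_of_compl_adj (hc : Gᶜ.Adj c w) (hwa : Gᶜ.Adj a w)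
    (hwb : Gᶜ.Adj b w) (ht : t ∈ Icc (0 : ℝ) 1) :
    (R.cycle ![c, b, a] (adj_triangle ha hb hab)).winding ((R.γ w).toFun t) = 0 := by
  have hT := uIcc_subset_Icc (left_mem_Icc.2 zero_le_one) ht
  refine winding_cycle_eq_zero hR ht fun
    | 0 => disjoint_image_of_compl_adj hc (uIcc_crossTime_subset ha hb) hT
    | 1 => disjoint_image_of_compl_adj hwb (uIcc_crossTime_subset hb.symm hab.symm) hT
    | 2 => disjoint_image_of_compl_adj hwa (uIcc_crossTime_subset hab ha.symm) hT

variable (hc : G.Adj c v) (hva : Gᶜ.Adj a v) (hvb : Gᶜ.Adj b v)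

include hR hc hva hvb in
theorem winding_triangle_eq_zero_of_lt (ht : t ∈ Icc (0 : ℝ) 1) (htc : t < R.crossTime v c) :
    (R.cycle ![c, b, a] (adj_triangle ha hb hab)).winding ((R.γ v).toFun t) = 0 := by
  have hT := uIcc_subset_Icc (left_mem_Icc.2 zero_le_one) ht
  refine winding_cycle_eq_zero hR ht fun
    | 0 => disjoint_image_of_crossTime_notMem_right hc (uIcc_crossTime_subset ha hb) hT ?_
    | 1 => disjoint_image_of_compl_adj hvb (uIcc_crossTime_subset hb.symm hab.symm) hT
    | 2 => disjoint_image_of_compl_adj hva (uIcc_crossTime_subset hab ha.symm) hT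
  exact notMem_uIcc_of_gt (crossTime_mem_Ioo hc.symm).1 htc

variable (hcv : R.crossTime c v ∈ uIoo (R.crossTime c a) (R.crossTime c b))

include hR hc hva hvb hcv in
theorem winding_triangle_ne_zero_of_gt (ht : t ∈ Icc (0 : ℝ) 1) (htc : R.crossTime v c < t) :
    (R.cycle ![c, b, a] (adj_triangle ha hb hab)).winding ((R.γ v).toFun t) ≠ 0 := by
  have h0 : (0 : ℝ) ∈ Icc (0 : ℝ) 1 := left_mem_Icc.2 zero_le_one
  have hpos := (crossTime_mem_Ioo (R := R) hc.symm).1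
  have hT := uIcc_subset_Icc h0 ht
  rw [← winding_triangle_eq_zero_of_lt hR ha hb hab hc hva hvb h0 hpos]
  refine (winding_cycle_ne 0 h0 ht (fun i hi ↦ ?_) hc hcv (mem_uIoo_of_lt hpos htc)).symm
  match i with
  | 0 => exact absurd rfl hi
  | 1 => exact disjoint_image_of_compl_adj hvb (uIcc_crossTime_subset hb.symm hab.symm) hT
  | 2 => exact disjoint_image_of_compl_adj hva (uIcc_crossTime_subset hab ha.symm) hT

include hR ha hb hab hc hva hvb hcv

/-- After its crossing with `c`, the string of `v` is enclosed by the triangle `c b a`, which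
the string of `w` never is. -/
theorem crossTime_lt_of_compl_adj (hvw : G.Adj v w) (hwc : Gᶜ.Adj c w) (hwa : Gᶜ.Adj a w)
    (hwb : Gᶜ.Adj b w) : R.crossTime v w < R.crossTime v c := by
  refine (crossTime_ne hvw hc.symm hwc.ne').lt_of_le (not_lt.1 fun hlt ↦ ?_)
  refine winding_triangle_ne_zero_of_gt hR ha hb hab hc hva hvb hcv (crossTime_mem_Icc hvw) hlt ?_
  rw [toFun_crossTime_comm hvw]
  exact winding_triangle_eq_zero_of_compl_adj hR ha hb hab hwc hwa hwb (crossTime_mem_Icc hvw.symm)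

theorem crossTime_lt_of_crossTime_lt (hc' : G.Adj c v') (hva' : Gᶜ.Adj a v') (hvb' : Gᶜ.Adj b v')
    (hvv' : G.Adj v v') (hlt : R.crossTime v' v < R.crossTime v' c) :
    R.crossTime v v' < R.crossTime v c := by
  refine (crossTime_ne hvv' hc.symm hc'.ne').lt_of_le (not_lt.1 fun hlt' ↦ ?_)
  refine winding_triangle_ne_zero_of_gt hR ha hb hab hc hva hvb hcv (crossTime_mem_Icc hvv') hlt' ?_
  rw [toFun_crossTime_comm hvv']
  exact winding_triangle_eq_zero_of_lt hR ha hb hab hc' hva' hvb' (crossTime_mem_Icc hvv'.symm) hlt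

end Triangle

section Quadrilateral

variable {b c v₃ v₄ v₅ w₃ : V}

theorem adj_quadrilateral (h₃ : G.Adj c v₃) (h₄ : G.Adj c v₄) (hw₃ : G.Adj w₃ v₃)
    (hw₄ : G.Adj w₃ v₄) (i : Fin 4) : G.Adj (![c, v₄, w₃, v₃] i) (![c, v₄, w₃, v₃] (i + 1)) :=
  match i with
  | 0 => h₄
  | 1 => hw₄.symm
  | 2 => hw₃
  | 3 => h₃.symm

variable (hR : R.StartsOutside) (h₃ : G.Adj c v₃) (h₄ : G.Adj c v₄) (hw₃ : G.Adj w₃ v₃)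
  (hw₄ : G.Adj w₃ v₄) (h₅ : G.Adj c v₅) (hcw : Gᶜ.Adj w₃ c) (hb : G.Adj c b) (hb₃ : Gᶜ.Adj v₃ b)
  (hb₄ : Gᶜ.Adj v₄ b) (hbw : Gᶜ.Adj w₃ b)
  (hdisj : Disjoint (uIcc (R.crossTime c v₃) (R.crossTime c v₄))
    (uIcc (R.crossTime c v₅) (R.crossTime c b)))

include hR h₅ hcw hb hb₃ hb₄ hbw hdisj

/-- From its crossing with `v₅` one can follow `c` and then `b` to the contour. -/
theorem winding_quadrilateral_eq_zero :
    (R.cycle _ (adj_quadrilateral h₃ h₄ hw₃ hw₄)).winding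
      ((R.γ c).toFun (R.crossTime c v₅)) = 0 := by
  have hS₀ := uIcc_crossTime_subset (R := R) h₃ h₄
  have hS₁ := uIcc_crossTime_subset (R := R) h₄.symm hw₄.symm
  have hS₂ := uIcc_crossTime_subset (R := R) hw₄ hw₃
  have hS₃ := uIcc_crossTime_subset (R := R) hw₃.symm h₃.symm
  have hT := uIcc_crossTime_subset (R := R) h₅ hb
  have hfollow : (R.cycle _ (adj_quadrilateral h₃ h₄ hw₃ hw₄)).winding
      ((R.γ c).toFun (R.crossTime c v₅)) = (R.cycle _ (adj_quadrilateral h₃ h₄ hw₃ hw₄)).winding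
        ((R.γ c).toFun (R.crossTime c b)) :=
    winding_cycle_eq (crossTime_mem_Icc h₅) (crossTime_mem_Icc hb) fun
    | 0 => disjoint_image_image fun _ hs _ ht hst ↦
        hdisj.ne_of_mem hs ht ((R.γ c).injOn (hS₀ hs) (hT ht) hst)
    | 1 => disjoint_image_of_crossTime_notMem_right h₄.symm hS₁ hT
        (hdisj.notMem_of_mem_left right_mem_uIcc)
    | 2 => disjoint_image_of_compl_adj hcw hS₂ hT
    | 3 => disjoint_image_of_crossTime_notMem_right h₃.symm hS₃ hT
        (hdisj.notMem_of_mem_left left_mem_uIcc)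
  rw [hfollow, toFun_crossTime_comm hb]
  have hT' := uIcc_subset_Icc (left_mem_Icc.2 zero_le_one) (crossTime_mem_Icc (R := R) hb.symm)
  exact winding_cycle_eq_zero hR (crossTime_mem_Icc hb.symm) fun
    | 0 => disjoint_image_of_crossTime_notMem_left hb hS₀ hT'
        (hdisj.notMem_of_mem_right right_mem_uIcc)
    | 1 => disjoint_image_of_compl_adj hb₄ hS₁ hT'
    | 2 => disjoint_image_of_compl_adj hbw hS₂ hT'
    | 3 => disjoint_image_of_compl_adj hb₃ hS₃ hT'

include h₃ h₄ hw₃ hw₄ in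
/-- Otherwise the string of `v₅` enters the quadrilateral `c v₄ w₃ v₃` through `v₄` before it
crosses `c`, and that crossing is enclosed by the quadrilateral. -/
theorem crossTime_lt_of_disjoint (h₄₅ : G.Adj v₄ v₅) (h₃₅ : Gᶜ.Adj v₃ v₅) (hw₅ : Gᶜ.Adj w₃ v₅)
    (hmem : R.crossTime v₄ v₅ ∈ uIoo (R.crossTime v₄ c) (R.crossTime v₄ w₃)) :
    R.crossTime v₅ c < R.crossTime v₅ v₄ := by
  refine (crossTime_ne h₅.symm h₄₅.symm h₄.ne).lt_of_le (not_lt.1 fun hlt ↦ ?_)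
  have hS₀ := uIcc_crossTime_subset (R := R) h₃ h₄
  have hS₁ := uIcc_crossTime_subset (R := R) h₄.symm hw₄.symm
  have hS₂ := uIcc_crossTime_subset (R := R) hw₄ hw₃
  have hS₃ := uIcc_crossTime_subset (R := R) hw₃.symm h₃.symm
  have h0 : (0 : ℝ) ∈ Icc (0 : ℝ) 1 := left_mem_Icc.2 zero_le_one
  have h5 := crossTime_mem_Icc (R := R) h₅.symm
  have hside : ∀ i ≠ 1, ∀ t ∈ Icc (0 : ℝ) 1,
      Disjoint (R.cycleSide ![c, v₄, w₃, v₃] i) ((R.γ v₅).toFun '' uIcc 0 t) := fun i hi t ht ↦ by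
    have hT := uIcc_subset_Icc h0 ht
    match i with
    | 0 => exact disjoint_image_of_crossTime_notMem_left h₅ hS₀ hT
            (hdisj.notMem_of_mem_right left_mem_uIcc)
    | 1 => exact absurd rfl hi
    | 2 => exact disjoint_image_of_compl_adj hw₅ hS₂ hT
    | 3 => exact disjoint_image_of_compl_adj h₃₅ hS₃ hT
  have hadj := adj_quadrilateral h₃ h₄ hw₃ hw₄
  have hstart : (R.cycle _ hadj).winding ((R.γ v₅).toFun 0) = 0 :=
    winding_cycle_eq_zero hR h0 fun
      | 1 => disjoint_image_of_crossTime_notMem_right h₄₅ hS₁ (uIcc_subset_Icc h0 h0)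
          (by simpa using (crossTime_mem_Ioo h₄₅.symm).1.ne')
      | 0 | 2 | 3 => hside _ (by decide) 0 h0
  have henter : (R.cycle _ hadj).winding ((R.γ v₅).toFun 0) ≠
      (R.cycle _ hadj).winding ((R.γ v₅).toFun (R.crossTime v₅ c)) :=
    winding_cycle_ne 1 h0 h5 (fun i hi ↦ hside i hi _ h5) h₄₅ hmem
      (mem_uIoo_of_lt (crossTime_mem_Ioo h₄₅.symm).1 hlt)
  rw [hstart, toFun_crossTime_comm h₅.symm] at henter
  exact henter (winding_quadrilateral_eq_zero hR h₃ h₄ hw₃ hw₄ h₅ hcw hb hb₃ hb₄ hbw hdisj).symm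

end Quadrilateral

section Configuration

variable {a b c v₃ v₄ v₅ w₃ w₄ : V}

variable (R) in
/-- The part of an extended wheel that cannot be represented: the hub `c`, two consecutive rim
vertices `a` and `b`, three consecutive rim vertices `v₃`, `v₄`, `v₅` elsewhere on the rim, and the
vertices `w₃` and `w₄` attached to `v₃ v₄` and `v₄ v₅`. The fields on `crossTime` say how the
crossings are ordered along the strings of `c` and of `v₄`. -/
structure IsWheelConfiguration (a b c v₃ v₄ v₅ w₃ w₄ : V) : Prop where
  adj_ab : G.Adj a b
  adj_hub : ∀ x ∈ [a, b, v₃, v₄, v₅], G.Adj c x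
  adj_v₄ : ∀ x ∈ [v₃, v₅, w₃, w₄], G.Adj v₄ x
  adj_left : G.Adj w₃ v₃
  adj_right : G.Adj w₄ v₅
  ne_w : w₃ ≠ w₄
  compl_adj_v : Gᶜ.Adj v₃ v₅
  compl_adj_left : Gᶜ.Adj w₃ v₅
  compl_adj_right : Gᶜ.Adj w₄ v₃
  compl_adj_hub : ∀ x ∈ [w₃, w₄], Gᶜ.Adj c x
  compl_adj_far : ∀ x ∈ [a, b], ∀ y ∈ [v₃, v₄, v₅, w₃, w₄], Gᶜ.Adj x y
  crossTime_hub_mem : ∀ x ∈ [v₃, v₄, v₅],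
    R.crossTime c x ∈ uIoo (R.crossTime c a) (R.crossTime c b)
  disjoint_left : Disjoint (uIcc (R.crossTime c v₅) (R.crossTime c v₄))
    (uIcc (R.crossTime c v₃) (R.crossTime c a))
  disjoint_right : Disjoint (uIcc (R.crossTime c v₃) (R.crossTime c v₄))
    (uIcc (R.crossTime c v₅) (R.crossTime c b))
  crossTime_mem_iff_left :
    R.crossTime v₄ c ∈ uIoo (R.crossTime v₄ v₃) (R.crossTime v₄ w₃) ↔
      R.crossTime v₄ w₄ ∈ uIoo (R.crossTime v₄ v₃) (R.crossTime v₄ w₃)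
  crossTime_mem_iff_right :
    R.crossTime v₄ c ∈ uIoo (R.crossTime v₄ v₅) (R.crossTime v₄ w₄) ↔
      R.crossTime v₄ w₃ ∈ uIoo (R.crossTime v₄ v₅) (R.crossTime v₄ w₄)

namespace IsWheelConfiguration

theorem mirror (C : R.IsWheelConfiguration a b c v₃ v₄ v₅ w₃ w₄) :
    R.IsWheelConfiguration b a c v₅ v₄ v₃ w₄ w₃ where
  adj_ab := C.adj_ab.symm
  adj_hub x hx := C.adj_hub x (by grind)
  adj_v₄ x hx := C.adj_v₄ x (by grind)
  adj_left := C.adj_right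
  adj_right := C.adj_left
  ne_w := C.ne_w.symm
  compl_adj_v := C.compl_adj_v.symm
  compl_adj_left := C.compl_adj_right
  compl_adj_right := C.compl_adj_left
  compl_adj_hub x hx := C.compl_adj_hub x (by grind)
  compl_adj_far x hx y hy := C.compl_adj_far x (by grind) y (by grind)
  crossTime_hub_mem x hx := uIoo_comm (R.crossTime c a) _ ▸ C.crossTime_hub_mem x (by grind)
  disjoint_left := C.disjoint_right
  disjoint_right := C.disjoint_left
  crossTime_mem_iff_left := C.crossTime_mem_iff_right
  crossTime_mem_iff_right := C.crossTime_mem_iff_left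

theorem crossTime_lt (hR : R.StartsOutside) (C : R.IsWheelConfiguration a b c v₃ v₄ v₅ w₃ w₄) :
    R.crossTime v₄ w₃ < R.crossTime v₄ c :=
  crossTime_lt_of_compl_adj hR (C.adj_hub a (by simp)) (C.adj_hub b (by simp)) C.adj_ab
    (C.adj_hub v₄ (by simp)) (C.compl_adj_far a (by simp) v₄ (by simp))
    (C.compl_adj_far b (by simp) v₄ (by simp)) (C.crossTime_hub_mem v₄ (by simp))
    (C.adj_v₄ w₃ (by simp)) (C.compl_adj_hub w₃ (by simp))
    (C.compl_adj_far a (by simp) w₃ (by simp)) (C.compl_adj_far b (by simp) w₃ (by simp))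

theorem crossTime_right_lt (hR : R.StartsOutside)
    (C : R.IsWheelConfiguration a b c v₃ v₄ v₅ w₃ w₄)
    (h : R.crossTime v₄ v₅ < R.crossTime v₄ c) : R.crossTime v₅ v₄ < R.crossTime v₅ c :=
  crossTime_lt_of_crossTime_lt hR (C.adj_hub a (by simp)) (C.adj_hub b (by simp)) C.adj_ab
    (C.adj_hub v₅ (by simp)) (C.compl_adj_far a (by simp) v₅ (by simp))
    (C.compl_adj_far b (by simp) v₅ (by simp)) (C.crossTime_hub_mem v₅ (by simp))
    (C.adj_hub v₄ (by simp)) (C.compl_adj_far a (by simp) v₄ (by simp))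
    (C.compl_adj_far b (by simp) v₄ (by simp)) (C.adj_v₄ v₅ (by simp)).symm h

theorem not_crossTime_lt (hR : R.StartsOutside)
    (C : R.IsWheelConfiguration a b c v₃ v₄ v₅ w₃ w₄) :
    ¬R.crossTime v₄ w₃ < R.crossTime v₄ w₄ := fun hnear ↦ by
  have hw₄ := C.mirror.crossTime_lt hR
  have hne : R.crossTime v₄ v₅ ≠ R.crossTime v₄ w₃ ∧ R.crossTime v₄ v₅ ≠ R.crossTime v₄ c :=
    ⟨crossTime_ne (C.adj_v₄ v₅ (by simp)) (C.adj_v₄ w₃ (by simp)) C.compl_adj_left.ne',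
      crossTime_ne (C.adj_v₄ v₅ (by simp)) (C.adj_hub v₄ (by simp)).symm
        (C.adj_hub v₅ (by simp)).ne'⟩
  have hv₅ : R.crossTime v₄ w₃ < R.crossTime v₄ v₅ ∧ R.crossTime v₄ v₅ < R.crossTime v₄ c := by
    have hiff := C.crossTime_mem_iff_right
    simp only [uIoo, mem_Ioo, inf_lt_iff, lt_sup_iff] at hiff
    grind
  refine (C.crossTime_right_lt hR hv₅.2).not_gt ?_
  exact crossTime_lt_of_disjoint hR (C.adj_hub v₃ (by simp)) (C.adj_hub v₄ (by simp)) C.adj_left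
    (C.adj_v₄ w₃ (by simp)).symm (C.adj_hub v₅ (by simp)) (C.compl_adj_hub w₃ (by simp)).symm
    (C.adj_hub b (by simp)) (C.compl_adj_far b (by simp) v₃ (by simp)).symm
    (C.compl_adj_far b (by simp) v₄ (by simp)).symm
    (C.compl_adj_far b (by simp) w₃ (by simp)).symm C.disjoint_right (C.adj_v₄ v₅ (by simp))
    C.compl_adj_v C.compl_adj_left (mem_uIoo_of_gt hv₅.1 hv₅.2)

end IsWheelConfiguration

theorem not_isWheelConfiguration (hR : R.StartsOutside) :
    ¬R.IsWheelConfiguration a b c v₃ v₄ v₅ w₃ w₄ := fun C ↦ by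
  have hne : R.crossTime v₄ w₃ ≠ R.crossTime v₄ w₄ :=
    crossTime_ne (C.adj_v₄ w₃ (by simp)) (C.adj_v₄ w₄ (by simp)) C.ne_w
  exact hne.lt_or_gt.elim (C.not_crossTime_lt hR) (C.mirror.not_crossTime_lt hR)

end Configuration

end OneStringRep

end Obstruction

section CyclicOrder

open Set

section Rotation

variable {ι α β : Type*} [LinearOrder α] [LinearOrder β] {f : ι → α} {g : ι → β} {l : List ι}
  {x y z w : ι}

theorem mem_uIoo_iff_not_lt_iff_lt {x y z : α} (hx : z ≠ x) (hy : z ≠ y) :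
    z ∈ uIoo x y ↔ ¬(x < z ↔ y < z) := by
  simp only [uIoo, mem_Ioo, inf_lt_iff, lt_sup_iff]
  grind

theorem lt_iff_lt_of_pairwise (hf : l.Pairwise (f · < f ·)) (hg : l.Pairwise (g · < g ·))
    (hx : x ∈ l) (hy : y ∈ l) : f x < f y ↔ g x < g y := by
  obtain ⟨i, rfl⟩ := List.get_of_mem hx
  obtain ⟨j, rfl⟩ := List.get_of_mem hy
  have hf' : StrictMono (f ∘ l.get) := fun i j ↦ List.pairwise_iff_get.1 hf i j
  have hg' : StrictMono (g ∘ l.get) := fun i j ↦ List.pairwise_iff_get.1 hg i j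
  exact hf'.lt_iff_lt.trans hg'.lt_iff_lt.symm

theorem ne_of_pairwise_lt (hf : l.Pairwise (f · < f ·)) (hx : x ∈ l) (hy : y ∈ l) (hxy : x ≠ y) :
    f x ≠ f y := fun h ↦
  hxy (List.inj_on_of_nodup_map (List.pairwise_map.2 (hf.imp ne_of_lt)) hx hy h)

theorem lt_iff_of_pairwise_append {l₁ l₂ : List ι} (hf : (l₁ ++ l₂).Pairwise (f · < f ·))
    (hg : (l₂ ++ l₁).Pairwise (g · < g ·)) (hx : x ∈ l₁ ++ l₂) (hy : y ∈ l₁ ++ l₂) :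
    g x < g y ↔ (f x < f y ↔ (x ∈ l₂ ↔ y ∈ l₂)) := by
  rw [List.pairwise_append] at hf hg
  obtain ⟨hf₁, hf₂, hf₁₂⟩ := hf
  obtain ⟨hg₂, hg₁, hg₂₁⟩ := hg
  have hdisj : ∀ z ∈ l₁, z ∉ l₂ := fun z h₁ h₂ ↦ (hf₁₂ z h₁ z h₂).false
  rcases List.mem_append.1 hx with hx | hx <;> rcases List.mem_append.1 hy with hy | hy
  · simp [lt_iff_lt_of_pairwise hf₁ hg₁ hx hy, hdisj, hx, hy]
  · simp [hf₁₂ x hx y hy, (hg₂₁ y hy x hx).not_gt, hdisj, hx, hy]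
  · simp [(hf₁₂ y hy x hx).not_gt, hg₂₁ x hx y hy, hdisj, hx, hy]
  · simp [lt_iff_lt_of_pairwise hf₂ hg₂ hx hy, hx, hy]

/-- Passing from `l₁ ++ l₂` to `l₂ ++ l₁` reverses exactly the comparisons between `l₁` and `l₂`;
whether this happens to exactly one of the comparisons of `z` with `x` and with `y` does not depend
on `z`. -/
theorem mem_uIoo_iff_of_pairwise_append {l₁ l₂ : List ι} (hf : (l₁ ++ l₂).Pairwise (f · < f ·))
    (hg : (l₂ ++ l₁).Pairwise (g · < g ·)) (hx : x ∈ l₁ ++ l₂) (hy : y ∈ l₁ ++ l₂)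
    (hz : z ∈ l₁ ++ l₂) (hzx : z ≠ x) (hzy : z ≠ y) :
    g z ∈ uIoo (g x) (g y) ↔ (f z ∈ uIoo (f x) (f y) ↔ (x ∈ l₂ ↔ y ∈ l₂)) := by
  have hne {u : ι} (hu : u ∈ l₁ ++ l₂) (hzu : z ≠ u) : g z ≠ g u :=
    ne_of_pairwise_lt hg (List.perm_append_comm.mem_iff.1 hz) (List.perm_append_comm.mem_iff.1 hu)
      hzu
  rw [mem_uIoo_iff_not_lt_iff_lt (ne_of_pairwise_lt hf hz hx hzx)
      (ne_of_pairwise_lt hf hz hy hzy), mem_uIoo_iff_not_lt_iff_lt (hne hx hzx) (hne hy hzy),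
    lt_iff_of_pairwise_append hf hg hx hz, lt_iff_of_pairwise_append hf hg hy hz]
  grind

theorem mem_uIoo_iff_of_pairwise_rotate {r : ℕ} (hf : l.Pairwise (f · < f ·))
    (hg : (l.rotate r).Pairwise (g · < g ·)) (hx : x ∈ l) (hy : y ∈ l) (hz : z ∈ l) (hw : w ∈ l)
    (hzx : z ≠ x) (hzy : z ≠ y) (hwx : w ≠ x) (hwy : w ≠ y)
    (h : f z ∈ uIoo (f x) (f y) ↔ f w ∈ uIoo (f x) (f y)) :
    g z ∈ uIoo (g x) (g y) ↔ g w ∈ uIoo (g x) (g y) := by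
  rw [List.rotate_eq_drop_append_take_mod] at hg
  rw [← List.take_append_drop (r % l.length) l] at hf hx hy hz hw
  rw [mem_uIoo_iff_of_pairwise_append hf hg hx hy hz hzx hzy,
    mem_uIoo_iff_of_pairwise_append hf hg hx hy hw hwx hwy, h]

end Rotation

theorem OneStringRep.crossTime_mem_uIoo_iff_of_angleAt {V : Type} {G : SimpleGraph V}
    {p : V → ℝ × ℝ} {R : OneStringRep G} (hR : OrderPreserving G p R) {v x y z w : V}
    (hx : G.Adj v x) (hy : G.Adj v y) (hz : G.Adj v z) (hw : G.Adj v w) (hzx : z ≠ x)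
    (hzy : z ≠ y) (hwx : w ≠ x) (hwy : w ≠ y)
    (h : angleAt (p v) (p z) ∈ uIoo (angleAt (p v) (p x)) (angleAt (p v) (p y)) ↔
      angleAt (p v) (p w) ∈ uIoo (angleAt (p v) (p x)) (angleAt (p v) (p y))) :
    R.crossTime v z ∈ uIoo (R.crossTime v x) (R.crossTime v y) ↔
      R.crossTime v w ∈ uIoo (R.crossTime v x) (R.crossTime v y) := by
  obtain ⟨l, -, hl, hangle, r, dir, t, ht, hrot⟩ := hR v
  have ht' {u : V} (hu : G.Adj v u) : R.crossTime v u = t u :=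
    (eq_crossTime hu (ht u ((hl u).2 hu)).1 (ht u ((hl u).2 hu)).2).symm
  rw [ht' hx, ht' hy, ht' hz, ht' hw]
  rw [← hl] at hx hy hz hw
  cases dir with
  | true => exact mem_uIoo_iff_of_pairwise_rotate hangle hrot hx hy hz hw hzx hzy hwx hwy h
  | false =>
    have hdual := mem_uIoo_iff_of_pairwise_rotate (g := OrderDual.toDual ∘ t) hangle hrot
      hx hy hz hw hzx hzy hwx hwy h
    simpa only [Function.comp_apply, uIoo_toDual, mem_preimage, OrderDual.ofDual_toDual] using hdual

end CyclicOrder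

section Drawings

open Set

section Angles

variable {o x y z : ℝ × ℝ}

/-- Twice the signed area of the triangle `o x y`. -/
def signedArea (o x y : ℝ × ℝ) : ℝ :=
  (x.1 - o.1) * (y.2 - o.2) - (x.2 - o.2) * (y.1 - o.1)

theorem signedArea_swap (o x y : ℝ × ℝ) : signedArea o y x = -signedArea o x y := by
  simp only [signedArea]
  ring

theorem signedArea_eq_mul_sin (o x y : ℝ × ℝ) :
    signedArea o x y = ‖toComplex (x - o)‖ * ‖toComplex (y - o)‖ *
      Real.sin (angleAt o y - angleAt o x) := by
  have hx := Complex.norm_mul_cos_arg (toComplex (x - o))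
  have hx' := Complex.norm_mul_sin_arg (toComplex (x - o))
  have hy := Complex.norm_mul_cos_arg (toComplex (y - o))
  have hy' := Complex.norm_mul_sin_arg (toComplex (y - o))
  have h : signedArea o x y = (toComplex (x - o)).re * (toComplex (y - o)).im -
    (toComplex (x - o)).im * (toComplex (y - o)).re := rfl
  have hax : angleAt o x = (toComplex (x - o)).arg := rfl
  have hay : angleAt o y = (toComplex (y - o)).arg := rfl
  rw [h, hax, hay, Real.sin_sub, ← hx, ← hx', ← hy, ← hy']
  ring

theorem sin_pos_iff_of_abs_lt {θ : ℝ} (hθ : |θ| < 2 * Real.pi) :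
    0 < Real.sin θ ↔ θ < -Real.pi ∨ θ ∈ Ioo 0 Real.pi := by
  obtain ⟨hlo, hhi⟩ := abs_lt.1 hθ
  constructor
  · intro hpos
    by_contra! h
    rcases le_or_gt θ 0 with hle | hgt
    · exact hpos.not_ge (Real.sin_nonpos_of_nonpos_of_neg_pi_le hle h.1)
    · have hpi : Real.pi ≤ θ := not_lt.1 fun hlt ↦ h.2 ⟨hgt, hlt⟩
      rw [← Real.sin_sub_two_pi] at hpos
      exact hpos.not_ge (Real.sin_nonpos_of_nonpos_of_neg_pi_le (by linarith) (by linarith))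
  · rintro (h | h)
    · rw [← Real.sin_add_two_pi]
      exact Real.sin_pos_of_pos_of_lt_pi (by linarith) (by linarith)
    · exact Real.sin_pos_of_mem_Ioo h

theorem angleAt_mem_Ioc (o x : ℝ × ℝ) : angleAt o x ∈ Ioc (-Real.pi) Real.pi :=
  Complex.arg_mem_Ioc _

theorem signedArea_pos_iff (hx : x ≠ o) (hy : y ≠ o) :
    0 < signedArea o x y ↔ angleAt o y - angleAt o x < -Real.pi ∨
      angleAt o y - angleAt o x ∈ Ioo 0 Real.pi := by
  have hpos {q : ℝ × ℝ} (hq : q ≠ o) : 0 < ‖toComplex (q - o)‖ :=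
    norm_pos_iff.2 ((map_ne_zero_iff _ toComplex.injective).2 (sub_ne_zero.2 hq))
  rw [signedArea_eq_mul_sin, mul_pos_iff_of_pos_left (mul_pos (hpos hx) (hpos hy)),
    sin_pos_iff_of_abs_lt]
  have hax := angleAt_mem_Ioc o x
  have hay := angleAt_mem_Ioc o y
  exact abs_lt.2 ⟨by linarith [hax.2, hay.1], by linarith [hax.1, hay.2]⟩

/-- The coefficient of `x - o` in the expansion of `z - o` in `x - o` and `y - o`, given by Cramer's
rule; the coefficient of `y - o` is `obliqueCoord o y x z`. -/
noncomputable def obliqueCoord (o x y z : ℝ × ℝ) : ℝ :=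
  signedArea o z y / signedArea o x y

/-- `z` lies in the open convex cone spanned at `o` by `x` and `y`. -/
def InOpenCone (o x y z : ℝ × ℝ) : Prop :=
  0 < obliqueCoord o x y z ∧ 0 < obliqueCoord o y x z

theorem inOpenCone_comm : InOpenCone o x y z ↔ InOpenCone o y x z :=
  and_comm

theorem inOpenCone_iff_of_signedArea_pos (h : 0 < signedArea o x y) :
    InOpenCone o x y z ↔ 0 < signedArea o x z ∧ 0 < signedArea o z y := by
  rw [InOpenCone, obliqueCoord, obliqueCoord, signedArea_swap o x y, signedArea_swap o x z,
    neg_div_neg_eq, div_pos_iff_of_pos_right h, div_pos_iff_of_pos_right h, and_comm]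

/-- Of the two arcs into which the directions of `x` and `y` divide the circle of directions, the
one not containing the direction `π` is the cone exactly if it is shorter than `π`. -/
theorem angleAt_mem_uIoo_iff (hx : x ≠ o) (hy : y ≠ o) (hz : z ≠ o) (h : signedArea o x y ≠ 0)
    (hzx : angleAt o z ≠ angleAt o x) (hzy : angleAt o z ≠ angleAt o y) :
    angleAt o z ∈ uIoo (angleAt o x) (angleAt o y) ↔
      (InOpenCone o x y z ↔ |angleAt o x - angleAt o y| < Real.pi) := by
  wlog hpos : 0 < signedArea o x y generalizing x y
  · have hpos' : 0 < signedArea o y x := by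
      rw [signedArea_swap]
      exact neg_pos.2 (h.lt_of_le (not_lt.1 hpos))
    rw [uIoo_comm, inOpenCone_comm, abs_sub_comm]
    exact this hy hx hpos'.ne' hzy hzx hpos'
  have hax := angleAt_mem_Ioc o x
  have hay := angleAt_mem_Ioc o y
  have haz := angleAt_mem_Ioc o z
  rw [inOpenCone_iff_of_signedArea_pos hpos, signedArea_pos_iff hx hz, signedArea_pos_iff hz hy]
  rw [signedArea_pos_iff hx hy] at hpos
  simp only [uIoo, mem_Ioo, mem_Ioc, inf_lt_iff, lt_sup_iff, abs_lt] at *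
  grind (splits := 30)

end Angles

section Triangles

variable {o x y z w : ℝ × ℝ}

theorem eq_add_obliqueCoord_smul (h : signedArea o x y ≠ 0) (z : ℝ × ℝ) :
    z = o + obliqueCoord o x y z • (x - o) + obliqueCoord o y x z • (y - o) := by
  rw [obliqueCoord, obliqueCoord, signedArea_swap o x y, signedArea_swap o x z, neg_div_neg_eq]
  ext <;> simp only [Prod.fst_add, Prod.snd_add, Prod.smul_fst, Prod.smul_snd, Prod.fst_sub,
    Prod.snd_sub, smul_eq_mul] <;> field_simp <;> simp only [signedArea] <;> ring

/-- `z` lies in the open triangle with vertices `o`, `x` and `y`. -/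
def InOpenTriangle (o x y z : ℝ × ℝ) : Prop :=
  InOpenCone o x y z ∧ obliqueCoord o x y z + obliqueCoord o y x z < 1

theorem add_smul_sub_mem_segment {t : ℝ} (ht : t ∈ Icc (0 : ℝ) 1) :
    o + t • (x - o) ∈ segment ℝ o x :=
  segment_eq_image' ℝ o x ▸ mem_image_of_mem _ ht

theorem inOpenCone_iff_inOpenTriangle (h : signedArea o x y ≠ 0)
    (hdisj : Disjoint (segment ℝ o z) (segment ℝ x y)) :
    InOpenCone o x y z ↔ InOpenTriangle o x y z := by
  refine ⟨fun hcone ↦ ⟨hcone, not_le.1 fun hle ↦ ?_⟩, And.left⟩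
  obtain ⟨hx, hy⟩ := hcone
  have hz := eq_add_obliqueCoord_smul h z
  set a := obliqueCoord o x y z
  set b := obliqueCoord o y x z
  have : 0 < a + b := add_pos hx hy
  refine hdisj.notMem_of_mem_left (a := o + (a + b)⁻¹ • (z - o))
    (add_smul_sub_mem_segment ⟨by positivity, inv_le_one_of_one_le₀ hle⟩) ?_
  refine ⟨a / (a + b), b / (a + b), by positivity, by positivity, by field_simp, ?_⟩
  rw [hz]
  ext <;> simp only [Prod.fst_add, Prod.snd_add, Prod.smul_fst, Prod.smul_snd, Prod.fst_sub,
    Prod.snd_sub, smul_eq_mul] <;> field_simp <;> ring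

theorem continuous_obliqueCoord (o x y : ℝ × ℝ) : Continuous (obliqueCoord o x y) := by
  unfold obliqueCoord signedArea
  fun_prop

theorem mem_edge_of_min_eq_zero (h : signedArea o x y ≠ 0)
    (hz : min (min (obliqueCoord o x y z) (obliqueCoord o y x z))
      (1 - (obliqueCoord o x y z + obliqueCoord o y x z)) = 0) :
    z ∈ segment ℝ o x ∨ z ∈ segment ℝ o y ∨ z ∈ segment ℝ x y := by
  have hexp := eq_add_obliqueCoord_smul h z
  set a := obliqueCoord o x y z
  set b := obliqueCoord o y x z
  have hmin : a = 0 ∨ b = 0 ∨ a + b = 1 := by grind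
  obtain ⟨⟨ha, hb⟩, hab⟩ : (0 ≤ a ∧ 0 ≤ b) ∧ 0 ≤ 1 - (a + b) := by
    simpa only [le_min_iff] using hz.ge
  rcases hmin with ha₀ | hb₀ | h₁
  · rw [hexp, ha₀, zero_smul, add_zero]
    exact .inr (.inl (add_smul_sub_mem_segment ⟨hb, by linarith⟩))
  · rw [hexp, hb₀, zero_smul, add_zero]
    exact .inl (add_smul_sub_mem_segment ⟨ha, by linarith⟩)
  · refine .inr (.inr ⟨a, b, ha, hb, h₁, ?_⟩)
    rw [hexp, eq_sub_iff_add_eq.2 h₁]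
    module

theorem InOpenTriangle.of_disjoint (h : signedArea o x y ≠ 0)
    (hox : Disjoint (segment ℝ z w) (segment ℝ o x))
    (hoy : Disjoint (segment ℝ z w) (segment ℝ o y))
    (hxy : Disjoint (segment ℝ z w) (segment ℝ x y)) (hz : InOpenTriangle o x y z) :
    InOpenTriangle o x y w := by
  let f (q : ℝ × ℝ) : ℝ := min (min (obliqueCoord o x y q) (obliqueCoord o y x q))
    (1 - (obliqueCoord o x y q + obliqueCoord o y x q))
  have hf {q : ℝ × ℝ} : 0 < f q ↔ InOpenTriangle o x y q := by
    simp only [f, lt_min_iff, sub_pos, InOpenTriangle, InOpenCone]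
  have hfc : Continuous f := by
    have := continuous_obliqueCoord o x y
    have := continuous_obliqueCoord o y x
    fun_prop
  by_contra hw
  obtain ⟨q, hq, hq₀⟩ := (convex_segment z w).isPreconnected.intermediate_value
    (right_mem_segment ℝ z w) (left_mem_segment ℝ z w) hfc.continuousOn
    ⟨not_lt.1 (hf.not.2 hw), (hf.2 hz).le⟩
  rcases mem_edge_of_min_eq_zero h hq₀ with hqe | hqe | hqe
  exacts [hox.notMem_of_mem_left hq hqe, hoy.notMem_of_mem_left hq hqe,
    hxy.notMem_of_mem_left hq hqe]

theorem collinear_of_signedArea_eq_zero (h : signedArea o x y = 0) :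
    Collinear ℝ {o, x, y} := by
  rcases eq_or_ne x o with rfl | hx
  · simpa using collinear_pair ℝ x y
  rw [signedArea] at h
  suffices hy : ∃ t : ℝ, y = t • (x - o) +ᵥ o by
    obtain ⟨t, ht⟩ := hy
    refine (collinear_iff_of_mem (mem_insert o {x, y})).2 ⟨x - o, ?_⟩
    rintro q (rfl | rfl | rfl)
    exacts [⟨0, by simp⟩, ⟨1, by simp⟩, ⟨t, ht⟩]
  simp only [Prod.ext_iff, vadd_eq_add, Prod.fst_add, Prod.snd_add, Prod.smul_fst, Prod.smul_snd,
    Prod.fst_sub, Prod.snd_sub, smul_eq_mul]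
  by_cases h₁ : x.1 - o.1 = 0
  · have h₂ : x.2 - o.2 ≠ 0 := fun h₂ ↦ hx (Prod.ext (sub_eq_zero.1 h₁) (sub_eq_zero.1 h₂))
    refine ⟨(y.2 - o.2) / (x.2 - o.2), ?_, ?_⟩ <;> field_simp
    · linear_combination -h
    · ring
  · refine ⟨(y.1 - o.1) / (x.1 - o.1), ?_, ?_⟩ <;> field_simp
    · ring
    · linear_combination h

end Triangles

variable {V : Type} {G : SimpleGraph V} {p : V → ℝ × ℝ} {o x y : V}

theorem signedArea_ne_zero_of_triangle (hp : IsPlaneDrawing G p) (hox : G.Adj o x)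
    (hoy : G.Adj o y) (hxy : G.Adj x y) : signedArea (p o) (p x) (p y) ≠ 0 := by
  obtain ⟨-, -, -, hedge⟩ := hp
  intro h
  rcases (collinear_of_signedArea_eq_zero h).wbtw_or_wbtw_or_wbtw with h | h | h
  · exact hedge o y x hoy hox.ne' hxy.ne (mem_segment_iff_wbtw.2 h)
  · exact hedge x o y hox.symm hxy.ne' hoy.ne' (mem_segment_iff_wbtw.2 h)
  · exact hedge y x o hxy.symm hoy.ne hox.ne (mem_segment_iff_wbtw.2 h)

theorem angleAt_ne_of_adj (hp : IsPlaneDrawing G p) (hox : G.Adj o x) (hoy : G.Adj o y)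
    (hxy : x ≠ y) : angleAt (p o) (p x) ≠ angleAt (p o) (p y) := by
  obtain ⟨-, -, -, hedge⟩ := hp
  intro h
  have hray : SameRay ℝ (p x -ᵥ p o) (p y -ᵥ p o) :=
    (SameRay.sameRay_map_iff toComplex.toLinearEquiv).1 (Complex.sameRay_of_arg_eq h)
  rcases wbtw_total_of_sameRay_vsub_left hray with h | h
  · exact hedge o y x hoy hox.ne' hxy (mem_segment_iff_wbtw.2 h)
  · exact hedge o x y hox hoy.ne' hxy.symm (mem_segment_iff_wbtw.2 h)

theorem inOpenTriangle_iff_of_reachable (hp : IsPlaneDrawing G p) (hox : G.Adj o x)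
    (hoy : G.Adj o y) (hxy : G.Adj x y) {z w : ({o, x, y}ᶜ : Set V)}
    (h : (G.induce ({o, x, y}ᶜ : Set V)).Reachable z w) :
    InOpenTriangle (p o) (p x) (p y) (p z) ↔ InOpenTriangle (p o) (p x) (p y) (p w) := by
  have hstep {u v : ({o, x, y}ᶜ : Set V)} (huv : (G.induce ({o, x, y}ᶜ : Set V)).Adj u v)
      (hu : InOpenTriangle (p o) (p x) (p y) (p u)) :
      InOpenTriangle (p o) (p x) (p y) (p v) := by
    obtain ⟨⟨huo, hux, huy⟩, hvo, hvx, hvy⟩ :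
        ((u : V) ≠ o ∧ (u : V) ≠ x ∧ (u : V) ≠ y) ∧ (v : V) ≠ o ∧ (v : V) ≠ x ∧ (v : V) ≠ y := by
      simpa only [mem_compl_iff, mem_insert_iff, mem_singleton_iff, not_or] using
        And.intro u.2 v.2
    exact hu.of_disjoint (signedArea_ne_zero_of_triangle hp hox hoy hxy)
      (disjoint_iff_inter_eq_empty.2 (hp.2.1 u v o x huv hox huo hux hvo hvx))
      (disjoint_iff_inter_eq_empty.2 (hp.2.1 u v o y huv hoy huo huy hvo hvy))
      (disjoint_iff_inter_eq_empty.2 (hp.2.1 u v x y huv hxy hux huy hvx hvy))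
  rw [SimpleGraph.reachable_iff_reflTransGen] at h
  induction h with
  | refl => rfl
  | tail _ huv ih => exact ih.trans ⟨hstep huv, hstep huv.symm⟩

theorem OneStringRep.crossTime_mem_uIoo_iff_of_reachable {R : OneStringRep G}
    (hR : OrderPreserving G p R) (hp : IsPlaneDrawing G p) (hox : G.Adj o x) (hoy : G.Adj o y)
    (hxy : G.Adj x y) {z w : ({o, x, y}ᶜ : Set V)} (hoz : G.Adj o z) (how : G.Adj o w)
    (h : (G.induce ({o, x, y}ᶜ : Set V)).Reachable z w) :
    R.crossTime o z ∈ uIoo (R.crossTime o x) (R.crossTime o y) ↔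
      R.crossTime o w ∈ uIoo (R.crossTime o x) (R.crossTime o y) := by
  have hne {u : V} (hou : G.Adj o u) : p u ≠ p o := hp.1.ne hou.ne'
  have harea := signedArea_ne_zero_of_triangle hp hox hoy hxy
  have hang {u : ({o, x, y}ᶜ : Set V)} (hou : G.Adj o u) :
      angleAt (p o) (p u) ∈ uIoo (angleAt (p o) (p x)) (angleAt (p o) (p y)) ↔
        (InOpenTriangle (p o) (p x) (p y) (p u) ↔
          |angleAt (p o) (p x) - angleAt (p o) (p y)| < Real.pi) := by
    have hux : (u : V) ≠ x := fun h ↦ u.2 (by simp [h])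
    have huy : (u : V) ≠ y := fun h ↦ u.2 (by simp [h])
    rw [angleAt_mem_uIoo_iff (hne hox) (hne hoy) (hne hou) harea (angleAt_ne_of_adj hp hou hox hux)
      (angleAt_ne_of_adj hp hou hoy huy), inOpenCone_iff_inOpenTriangle harea]
    exact disjoint_iff_inter_eq_empty.2
      (hp.2.1 o u x y hou hxy hox.ne hoy.ne hux huy)
  refine crossTime_mem_uIoo_iff_of_angleAt hR hox hoy hoz how ?_ ?_ ?_ ?_ ?_
  · exact fun h ↦ z.2 (by simp [h])
  · exact fun h ↦ z.2 (by simp [h])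
  · exact fun h ↦ w.2 (by simp [h])
  · exact fun h ↦ w.2 (by simp [h])
  · rw [hang hoz, hang how, inOpenTriangle_iff_of_reachable hp hox hoy hxy h]

theorem OneStringRep.crossTime_mem_uIoo_iff_of_adj_of_adj {R : OneStringRep G}
    (hR : OrderPreserving G p R) (hp : IsPlaneDrawing G p) (hox : G.Adj o x) (hoy : G.Adj o y)
    (hxy : G.Adj x y) {z u w : V} (hoz : G.Adj o z) (how : G.Adj o w) (hzu : G.Adj z u)
    (huw : G.Adj u w) (hz : z ∉ ({x, y} : Set V)) (hu : u ∉ ({o, x, y} : Set V))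
    (hw : w ∉ ({x, y} : Set V)) :
    R.crossTime o z ∈ uIoo (R.crossTime o x) (R.crossTime o y) ↔
      R.crossTime o w ∈ uIoo (R.crossTime o x) (R.crossTime o y) := by
  have hmem {v : V} (hov : G.Adj o v) (hv : v ∉ ({x, y} : Set V)) :
      v ∈ ({o, x, y}ᶜ : Set V) := fun h ↦ h.elim hov.ne' hv
  have hreach : (G.induce ({o, x, y}ᶜ : Set V)).Reachable ⟨z, hmem hoz hz⟩ ⟨u, hu⟩ :=
    SimpleGraph.Adj.reachable hzu
  have hreach' : (G.induce ({o, x, y}ᶜ : Set V)).Reachable ⟨u, hu⟩ ⟨w, hmem how hw⟩ :=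
    SimpleGraph.Adj.reachable huw
  exact R.crossTime_mem_uIoo_iff_of_reachable hR hp hox hoy hxy hoz how (hreach.trans hreach')

end Drawings

section Wheel

open Set

section Monotone

variable {ι α : Type*} [LinearOrder α]

theorem mem_uIoo_of_strictMonoOn_or_strictAntiOn [Preorder ι] {f : ι → α} {s : Set ι}
    (hf : StrictMonoOn f s ∨ StrictAntiOn f s) {i j k : ι} (hi : i ∈ s) (hj : j ∈ s) (hk : k ∈ s)
    (hij : i < j) (hjk : j < k) : f j ∈ uIoo (f i) (f k) := by
  rcases hf with hf | hf
  · exact Ioo_subset_uIoo ⟨hf hi hj hij, hf hj hk hjk⟩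
  · exact Ioo_subset_uIoo' ⟨hf hj hk hjk, hf hi hj hij⟩

theorem disjoint_uIcc_of_strictMonoOn_or_strictAntiOn [PartialOrder ι] {f : ι → α} {s : Set ι}
    (hf : StrictMonoOn f s ∨ StrictAntiOn f s) {i j k l : ι} (hi : i ∈ s) (hj : j ∈ s)
    (hk : k ∈ s) (hl : l ∈ s) (hij : i ≤ j) (hjk : j < k) (hkl : k ≤ l) :
    Disjoint (uIcc (f i) (f j)) (uIcc (f k) (f l)) := by
  rw [disjoint_left]
  rcases hf with hf | hf
  · rw [uIcc_of_le (hf.monotoneOn hi hj hij), uIcc_of_le (hf.monotoneOn hk hl hkl)]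
    exact fun x hx hx' ↦ (hx.2.trans_lt (hf hj hk hjk)).not_ge hx'.1
  · rw [uIcc_of_ge (hf.antitoneOn hi hj hij), uIcc_of_ge (hf.antitoneOn hk hl hkl)]
    exact fun x hx hx' ↦ (hx'.2.trans_lt (hf hj hk hjk)).not_ge hx.1

theorem strictMonoOn_of_mem_uIoo {f : ℕ → α} {n : ℕ} (h : f 0 < f 1)
    (hf : ∀ k, k + 2 < n → f (k + 1) ∈ uIoo (f k) (f (k + 2))) : StrictMonoOn f (Iio n) := by
  refine strictMonoOn_of_lt_succ ordConnected_Iio fun k _ _ hk ↦ ?_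
  rw [Order.succ_eq_add_one] at hk ⊢
  induction k with
  | zero => exact h
  | succ k ih =>
    rw [mem_Iio] at hk
    have hlt : f k < f (k + 1) := ih (not_isMax k) (mem_Iio.2 (by lia)) (mem_Iio.2 (by lia))
    have hmem := hf k hk
    simp only [uIoo, mem_Ioo, inf_lt_iff, lt_sup_iff] at hmem
    exact hmem.2.resolve_left hlt.not_gt

theorem strictMonoOn_or_strictAntiOn_of_mem_uIoo {f : ℕ → α} {n : ℕ} (h : f 0 ≠ f 1)
    (hf : ∀ k, k + 2 < n → f (k + 1) ∈ uIoo (f k) (f (k + 2))) :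
    StrictMonoOn f (Iio n) ∨ StrictAntiOn f (Iio n) := by
  rcases h.lt_or_gt with h | h
  · exact .inl (strictMonoOn_of_mem_uIoo h hf)
  · refine .inr (strictMonoOn_of_mem_uIoo (f := OrderDual.toDual ∘ f) h fun k hk ↦ ?_).dual_right
    exact (hf k hk).symm

end Monotone

section Cyclic

variable {n : ℕ} {α : Type*} [LinearOrder α]

theorem add_natCast_ne_add_natCast (i : ZMod n) {a b : ℕ} (hne : a ≠ b) (hab : a < b + n)
    (hba : b < a + n) : i + a ≠ i + b := by
  rw [Ne, add_left_cancel_iff, ZMod.natCast_eq_natCast_iff]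
  exact fun h ↦ hne (h.eq_of_abs_lt (abs_lt.2 ⟨by lia, by lia⟩))

theorem mem_uIoo_of_notMem_uIoo {a b c : α} (hab : a ≠ b) (hbc : b ≠ c) (hac : a ≠ c)
    (ha : a ∉ uIoo b c) (hc : c ∉ uIoo a b) : b ∈ uIoo a c := by
  simp only [uIoo, mem_Ioo, inf_lt_iff, lt_sup_iff] at *
  grind

/-- Cut at its minimum `m`, the sequence has no value between two consecutive ones, because `m` is
not between them. -/
theorem strictMonoOn_or_strictAntiOn_of_forall_le {t : ZMod n → α} (hn : 1 < n)
    (ht : Function.Injective t)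
    (hsep : ∀ i : ZMod n, ∀ j ∉ ({i, i + 1} : Set (ZMod n)), ∀ k ∉ ({i, i + 1} : Set (ZMod n)),
      t j ∈ uIoo (t i) (t (i + 1)) → t k ∈ uIoo (t i) (t (i + 1)))
    {m : ZMod n} (hm : ∀ i, t m ≤ t i) :
    StrictMonoOn (fun k : ℕ ↦ t (m + (k + 1 : ℕ))) (Iio (n - 1)) ∨
      StrictAntiOn (fun k : ℕ ↦ t (m + (k + 1 : ℕ))) (Iio (n - 1)) := by
  have hne {a b : ℕ} (hab : a ≠ b) (ha : a < b + n) (hb : b < a + n) : t (m + a) ≠ t (m + b) :=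
    ht.ne (add_natCast_ne_add_natCast m hab ha hb)
  have hnot {k j : ℕ} (hk : k + 2 < n) (hj : j + 1 < n) (hjk : j ≠ k) (hjk' : j ≠ k + 1) :
      t (m + (j + 1 : ℕ)) ∉ uIoo (t (m + (k + 1 : ℕ))) (t (m + (k + 1 + 1 : ℕ))) := by
    intro h
    rw [Nat.cast_succ (k + 1), ← add_assoc] at h
    refine (inf_lt_iff.1 (hsep _ _ ?_ m ?_ h).1).elim (hm _).not_gt (hm _).not_gt <;>
      rw [mem_insert_iff, mem_singleton_iff, add_assoc, ← Nat.cast_succ, not_or]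
    · exact ⟨add_natCast_ne_add_natCast m (by lia) (by lia) (by lia),
        add_natCast_ne_add_natCast m (by lia) (by lia) (by lia)⟩
    · have hm₀ : m = m + (0 : ℕ) := by simp
      constructor <;> nth_rw 1 [hm₀] <;>
        exact add_natCast_ne_add_natCast m (by lia) (by lia) (by lia)
  refine strictMonoOn_or_strictAntiOn_of_mem_uIoo (hne (by lia) (by lia) (by lia)) fun k hk ↦ ?_
  exact mem_uIoo_of_notMem_uIoo (hne (by lia) (by lia) (by lia)) (hne (by lia) (by lia) (by lia))
    (hne (by lia) (by lia) (by lia)) (hnot (by lia) (by lia) (by lia) (by lia))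
    (hnot (by lia) (by lia) (by lia) (by lia))

theorem exists_strictMonoOn_or_strictAntiOn {t : ZMod n → α} (hn : 1 < n)
    (ht : Function.Injective t)
    (hsep : ∀ i : ZMod n, ∀ j ∉ ({i, i + 1} : Set (ZMod n)), ∀ k ∉ ({i, i + 1} : Set (ZMod n)),
      t j ∈ uIoo (t i) (t (i + 1)) → t k ∈ uIoo (t i) (t (i + 1))) :
    ∃ i : ZMod n, StrictMonoOn (fun k : ℕ ↦ t (i + k)) (Iio n) ∨
      StrictAntiOn (fun k : ℕ ↦ t (i + k)) (Iio n) := by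
  have : NeZero n := ⟨by lia⟩
  obtain ⟨m, hm⟩ := Finite.exists_min t
  have hlt {k : ℕ} (hk : k + 1 < n) : t m < t (m + (k + 1 : ℕ)) := by
    refine (hm _).lt_of_ne (ht.ne ?_)
    simpa using add_natCast_ne_add_natCast m (a := 0) (b := k + 1) (by lia) (by lia) (by lia)
  rcases strictMonoOn_or_strictAntiOn_of_forall_le hn ht hsep hm with h | h
  · refine ⟨m, .inl ?_⟩
    rintro (_ | j) hj (_ | k) hk hjk
    · exact hjk.false.elim
    · simpa using hlt hk
    · exact (Nat.not_lt_zero _ hjk).elim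
    · exact h (Nat.lt_sub_of_add_lt hj) (Nat.lt_sub_of_add_lt hk) (Nat.lt_of_succ_lt_succ hjk)
  · refine ⟨m + 1, .inr fun j _ k hk hjk ↦ ?_⟩
    have hcast (l : ℕ) : m + 1 + l = m + (l + 1 : ℕ) := by
      push_cast
      ring
    simp only [hcast]
    rcases (Nat.le_sub_one_of_lt hk).lt_or_eq with hk' | rfl
    · exact h (hjk.trans hk') hk' hjk
    · rw [Nat.sub_add_cancel hn.le, ZMod.natCast_self, add_zero]
      exact hlt (by lia)

end Cyclic

namespace extWheelGraph

variable {n : ℕ}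

/-- The hub of the extended wheel. -/
abbrev hub : Option (ZMod n) ⊕ ZMod n := .inl none

/-- The vertex `v i` on the rim of the extended wheel. -/
abbrev rim (i : ZMod n) : Option (ZMod n) ⊕ ZMod n := .inl (some i)

/-- The vertex `w i` of the extended wheel, attached to the rim vertices `v i` and `v (i + 1)`. -/
abbrev ear (i : ZMod n) : Option (ZMod n) ⊕ ZMod n := .inr i

theorem adj_hub_rim (i : ZMod n) : (extWheelGraph n).Adj hub (rim i) := by
  simp [extWheelGraph]

theorem adj_rim_rim_iff {i j : ZMod n} :
    (extWheelGraph n).Adj (rim i) (rim j) ↔ i ≠ j ∧ (j = i + 1 ∨ i = j + 1) := by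
  simp [extWheelGraph]

theorem adj_ear_rim_iff {i j : ZMod n} :
    (extWheelGraph n).Adj (ear i) (rim j) ↔ j = i ∨ j = i + 1 := by
  simp [extWheelGraph]

theorem compl_adj_hub_ear (i : ZMod n) : (extWheelGraph n)ᶜ.Adj hub (ear i) := by
  simp [extWheelGraph]

theorem compl_adj_rim_rim (i : ZMod n) {a b : ℕ} (hab : a + 1 < b) (hba : b + 1 < a + n) :
    (extWheelGraph n)ᶜ.Adj (rim (i + a)) (rim (i + b)) := by
  have hne : i + (a : ZMod n) ≠ i + b := add_natCast_ne_add_natCast i (by lia) (by lia) (by lia)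
  rw [SimpleGraph.compl_adj, adj_rim_rim_iff, add_assoc, add_assoc, ← Nat.cast_succ,
    ← Nat.cast_succ, not_and_or, not_or]
  exact ⟨by simpa using hne, .inr ⟨add_natCast_ne_add_natCast i (by lia) (by lia) (by lia),
    add_natCast_ne_add_natCast i (by lia) (by lia) (by lia)⟩⟩

theorem compl_adj_rim_ear (i : ZMod n) {a b : ℕ} (h : a < b ∨ b + 1 < a) (hab : a < b + n)
    (hba : b + 1 < a + n) : (extWheelGraph n)ᶜ.Adj (rim (i + a)) (ear (i + b)) := by
  rw [SimpleGraph.compl_adj, SimpleGraph.adj_comm, adj_ear_rim_iff, add_assoc, ← Nat.cast_succ,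
    not_or]
  exact ⟨Sum.inl_ne_inr, add_natCast_ne_add_natCast i (by lia) (by lia) (by lia),
    add_natCast_ne_add_natCast i (by lia) (by lia) (by lia)⟩

theorem rim_mem_compl {i j : ZMod n} (hj : j ∉ ({i, i + 1} : Set (ZMod n))) :
    rim j ∈ ({hub, rim i, rim (i + 1)}ᶜ : Set (Option (ZMod n) ⊕ ZMod n)) := by
  simpa using hj

theorem add_natCast_notMem_pair (i : ZMod n) {a : ℕ} (ha : 1 < a) (han : a < n) :
    i + a ∉ ({i, i + 1} : Set (ZMod n)) := by
  have h₀ := add_natCast_ne_add_natCast i (a := a) (b := 0) (by lia) (by lia) (by lia)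
  have h₁ := add_natCast_ne_add_natCast i (a := a) (b := 1) (by lia) (by lia) (by lia)
  simpa using And.intro h₀ h₁

theorem reachable_rim_add (i : ZMod n) {a : ℕ} (ha : 1 < a) (han : a < n) :
    ((extWheelGraph n).induce ({hub, rim i, rim (i + 1)}ᶜ : Set _)).Reachable
      ⟨rim (i + (2 : ℕ)), rim_mem_compl (add_natCast_notMem_pair i one_lt_two (by lia))⟩
      ⟨rim (i + a), rim_mem_compl (add_natCast_notMem_pair i ha han)⟩ := by
  induction a, ha using Nat.le_induction with
  | base => rfl
  | succ a ha ih =>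
    refine (ih (by lia)).trans (SimpleGraph.Adj.reachable ?_)
    rw [SimpleGraph.induce_adj, adj_rim_rim_iff, Nat.cast_succ, ← add_assoc]
    have : Fact (1 < n) := ⟨by lia⟩
    exact ⟨by simp, .inl rfl⟩

theorem reachable_rim {i j k : ZMod n} (hn : 2 < n) (hj : j ∉ ({i, i + 1} : Set (ZMod n)))
    (hk : k ∉ ({i, i + 1} : Set (ZMod n))) :
    ((extWheelGraph n).induce ({hub, rim i, rim (i + 1)}ᶜ : Set _)).Reachable
      ⟨rim j, rim_mem_compl hj⟩ ⟨rim k, rim_mem_compl hk⟩ := by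
  have : NeZero n := ⟨by lia⟩
  have hex (j : ZMod n) (hj : j ∉ ({i, i + 1} : Set (ZMod n))) :
      ∃ a : ℕ, 1 < a ∧ a < n ∧ i + a = j := by
    have hval : i + ((j - i).val : ZMod n) = j := by rw [ZMod.natCast_zmod_val, add_sub_cancel]
    refine ⟨(j - i).val, ?_, ZMod.val_lt _, hval⟩
    by_contra! hle
    interval_cases (j - i).val <;> simp [← hval] at hj
  obtain ⟨a, ha, han, rfl⟩ := hex j hj
  obtain ⟨b, hb, hbn, rfl⟩ := hex k hk
  exact (reachable_rim_add i ha han).symm.trans (reachable_rim_add i hb hbn)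

theorem adj_rim_rim_succ (hn : 1 < n) (i : ZMod n) (a : ℕ) :
    (extWheelGraph n).Adj (rim (i + a)) (rim (i + (a + 1 : ℕ))) := by
  have : Fact (1 < n) := ⟨hn⟩
  rw [adj_rim_rim_iff, Nat.cast_succ, ← add_assoc]
  exact ⟨by simp, .inl rfl⟩

theorem adj_ear_rim (i : ZMod n) : (extWheelGraph n).Adj (ear i) (rim i) :=
  adj_ear_rim_iff.2 (.inl rfl)

theorem adj_ear_rim_succ (i : ZMod n) (a : ℕ) :
    (extWheelGraph n).Adj (ear (i + a)) (rim (i + (a + 1 : ℕ))) := by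
  rw [adj_ear_rim_iff, Nat.cast_succ, ← add_assoc]
  exact .inr rfl

theorem compl_adj_of_mem (i : ZMod n) (hn : 7 ≤ n) :
    ∀ x ∈ [rim (n := n) (i + (0 : ℕ)), rim (i + (n - 1 : ℕ))], ∀ y ∈ [rim (n := n) (i + (2 : ℕ)),
      rim (i + (3 : ℕ)), rim (i + (4 : ℕ)), ear (i + (2 : ℕ)), ear (i + (3 : ℕ))],
      (extWheelGraph n)ᶜ.Adj x y := by
  have hrim {a b : ℕ} (hab : a + 1 < b) (hba : b + 1 < a + n) := compl_adj_rim_rim i hab hba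
  have hear {a b : ℕ} (h : a < b ∨ b + 1 < a) (hab : a < b + n) (hba : b + 1 < a + n) :=
    compl_adj_rim_ear i h hab hba
  simp only [List.mem_cons, List.not_mem_nil, or_false, forall_eq_or_imp, forall_eq]
  exact ⟨⟨hrim (by lia) (by lia), hrim (by lia) (by lia), hrim (by lia) (by lia),
    hear (by lia) (by lia) (by lia), hear (by lia) (by lia) (by lia)⟩,
    (hrim (by lia) (by lia)).symm, (hrim (by lia) (by lia)).symm,
    (hrim (by lia) (by lia)).symm, hear (by lia) (by lia) (by lia),
    hear (by lia) (by lia) (by lia)⟩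

section Drawing

variable {p : Option (ZMod n) ⊕ ZMod n → ℝ × ℝ} {R : OneStringRep (extWheelGraph n)}

theorem crossTime_hub_rim_mem_uIoo (hR : OrderPreserving (extWheelGraph n) p R)
    (hp : IsPlaneDrawing (extWheelGraph n) p) (hn : 2 < n) {i j k : ZMod n}
    (hj : j ∉ ({i, i + 1} : Set (ZMod n))) (hk : k ∉ ({i, i + 1} : Set (ZMod n)))
    (h : R.crossTime hub (rim j) ∈ uIoo (R.crossTime hub (rim i)) (R.crossTime hub (rim (i + 1)))) :
    R.crossTime hub (rim k) ∈ uIoo (R.crossTime hub (rim i)) (R.crossTime hub (rim (i + 1))) := by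
  have : Fact (1 < n) := ⟨by lia⟩
  exact (R.crossTime_mem_uIoo_iff_of_reachable hR hp (adj_hub_rim i) (adj_hub_rim (i + 1))
    (adj_rim_rim_iff.2 ⟨by simp, .inl rfl⟩) (adj_hub_rim j) (adj_hub_rim k)
    (reachable_rim hn hj hk)).1 h

theorem exists_strictMonoOn_or_strictAntiOn_crossTime (hR : OrderPreserving (extWheelGraph n) p R)
    (hp : IsPlaneDrawing (extWheelGraph n) p) (hn : 2 < n) :
    ∃ i : ZMod n, StrictMonoOn (fun k : ℕ ↦ R.crossTime hub (rim (i + k))) (Iio n) ∨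
      StrictAntiOn (fun k : ℕ ↦ R.crossTime hub (rim (i + k))) (Iio n) :=
  exists_strictMonoOn_or_strictAntiOn (t := fun i ↦ R.crossTime hub (rim i)) (by lia)
    (fun i j hij ↦ by_contra fun hne ↦
      OneStringRep.crossTime_ne (adj_hub_rim i) (adj_hub_rim j) (by simpa using hne) hij)
    fun _ _ hj _ hk ↦ crossTime_hub_rim_mem_uIoo hR hp hn hj hk

theorem isWheelConfiguration (hR : OrderPreserving (extWheelGraph n) p R)
    (hp : IsPlaneDrawing (extWheelGraph n) p) (hn : 7 ≤ n) {i : ZMod n}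
    (hi : StrictMonoOn (fun k : ℕ ↦ R.crossTime hub (rim (i + k))) (Iio n) ∨
      StrictAntiOn (fun k : ℕ ↦ R.crossTime hub (rim (i + k))) (Iio n)) :
    R.IsWheelConfiguration (rim (i + (0 : ℕ))) (rim (i + (n - 1 : ℕ))) hub (rim (i + (2 : ℕ)))
      (rim (i + (3 : ℕ))) (rim (i + (4 : ℕ))) (ear (i + (2 : ℕ))) (ear (i + (3 : ℕ))) := by
  have hv := adj_rim_rim_succ (n := n) (by lia) i
  have hadj : (extWheelGraph n).Adj (rim (i + (n - 1 : ℕ))) (rim (i + (0 : ℕ))) := by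
    simpa [Nat.sub_add_cancel (show 1 ≤ n by lia)] using adj_rim_rim_succ (by lia) i (n - 1)
  have hmem {a : ℕ} (ha : 0 < a) (han : a < n - 1) :=
    mem_uIoo_of_strictMonoOn_or_strictAntiOn hi (i := 0) (j := a) (k := n - 1)
      (mem_Iio.2 (by lia)) (mem_Iio.2 (by lia)) (mem_Iio.2 (by lia)) ha han
  have hdisj {a b c d : ℕ} (hab : a ≤ b) (hbc : b < c) (hcd : c ≤ d) (hd : d < n) :=
    disjoint_uIcc_of_strictMonoOn_or_strictAntiOn hi (i := a) (j := b) (k := c) (l := d)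
      (mem_Iio.2 (by lia)) (mem_Iio.2 (by lia)) (mem_Iio.2 (by lia)) hd hab hbc hcd
  have h₂₃ := add_natCast_ne_add_natCast i (a := 2) (b := 3) (by lia) (by lia) (by lia)
  have h₂₄ := add_natCast_ne_add_natCast i (a := 2) (b := 4) (by lia) (by lia) (by lia)
  have h₃₄ := add_natCast_ne_add_natCast i (a := 3) (b := 4) (by lia) (by lia) (by lia)
  exact {
    adj_ab := hadj.symm
    adj_hub := by simp only [List.forall_mem_cons, adj_hub_rim, true_and]; simp
    adj_v₄ := by
      simpa using ⟨(hv 2).symm, hv 3, (adj_ear_rim_succ i 2).symm, (adj_ear_rim _).symm⟩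
    adj_left := adj_ear_rim _
    adj_right := adj_ear_rim_succ i 3
    ne_w := Sum.inr_injective.ne h₂₃
    compl_adj_v := compl_adj_rim_rim i (by lia) (by lia)
    compl_adj_left := (compl_adj_rim_ear i (by lia) (by lia) (by lia)).symm
    compl_adj_right := (compl_adj_rim_ear i (by lia) (by lia) (by lia)).symm
    compl_adj_hub := by simp only [List.forall_mem_cons, compl_adj_hub_ear, true_and]; simp
    compl_adj_far := compl_adj_of_mem i hn
    crossTime_hub_mem := by
      simp only [List.mem_cons, List.not_mem_nil, or_false, forall_eq_or_imp, forall_eq]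
      exact ⟨hmem (by lia) (by lia), hmem (by lia) (by lia), hmem (by lia) (by lia)⟩
    disjoint_left := by
      rw [uIcc_comm, uIcc_comm (R.crossTime hub (rim (i + (2 : ℕ))))]
      exact (hdisj (by lia) (by lia) (by lia) (by lia)).symm
    disjoint_right := hdisj (by lia) (by lia) (by lia) (by lia)
    crossTime_mem_iff_left := R.crossTime_mem_uIoo_iff_of_adj_of_adj hR hp (hv 2).symm
      (adj_ear_rim_succ i 2).symm (adj_ear_rim _).symm (adj_hub_rim _).symm (adj_ear_rim _).symm
      (adj_hub_rim _) (adj_ear_rim_succ i 3).symm (by simp)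
      (by simpa using And.intro h₃₄.symm h₂₄.symm) (by simpa using h₂₃.symm)
    crossTime_mem_iff_right := R.crossTime_mem_uIoo_iff_of_adj_of_adj hR hp (hv 3)
      (adj_ear_rim _).symm (adj_ear_rim_succ i 3).symm (adj_hub_rim _).symm
      (adj_ear_rim_succ i 2).symm (adj_hub_rim _) (adj_ear_rim _).symm (by simp)
      (by simpa using And.intro h₂₃ h₂₄) (by simpa using h₂₃) }

end Drawing

end extWheelGraph

end Wheel

/-- For `n ≥ 7`, the extended wheel graph `W n⁺` has no order-preserving outer-1-string
representation: no order-preserving 1-string representation in which every arc has at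
least one endpoint in the closure of the contour. -/
theorem stmt_8 (n : ℕ) (hn : 7 ≤ n) (p : Option (ZMod n) ⊕ ZMod n → ℝ × ℝ)
    (hp : IsPlaneDrawing (extWheelGraph n) p) :
    ¬ ∃ R : OneStringRep (extWheelGraph n),
        OrderPreserving (extWheelGraph n) p R ∧
        ∀ v : Option (ZMod n) ⊕ ZMod n,
          (R.γ v).toFun 0 ∈ closure (contour R.γ) ∨
          (R.γ v).toFun 1 ∈ closure (contour R.γ) := by
  rintro ⟨R, hR, hout⟩
  obtain ⟨R', hR', hstart⟩ := R.exists_startsOutside hR hout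
  obtain ⟨i, hi⟩ := extWheelGraph.exists_strictMonoOn_or_strictAntiOn_crossTime hR' hp (by lia)
  exact OneStringRep.not_isWheelConfiguration hstart
    (extWheelGraph.isWheelConfiguration hR' hp hn hi)
end

section
/- For every integer n ≥ 7 and for every straight-line plane drawing p of the wheel graph W_n, there is no 1-string representation of W_n that is order-preserving with respect to p and in which every arc has both of its endpoints in the closure of the contour of the family of arcs. -/
/-!
The arcs of the rim cross the arc of the hub at pairwise distinct points. As soon as `n ≥ 5`, some
rim arc `m` meets the hub between two adjacent rim arcs `a` and `b` that are both disjoint from `m`.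
The piece of the hub between `a` and `b`, closed up through `a ∪ b`, is a closed curve which `m`
crosses exactly once; joining the two ends of `m` through the unbounded region outside that curve
gives two closed plane curves `A` and `B` whose only common point is a proper crossing.

This is impossible. Consider the winding number around `0` of `A s - B t` as `(s, t)` runs around
the boundary of a small square about the crossing. Pushed across the rest of the torus, which
contains no other solution of `A s = B t`, this loop becomes a commutator, so its winding number is
`0`. On the other hand the square is embedded by the chart of the crossing, and a homotopy through
nowhere vanishing loops turns `A s - B t` into an antiperiodic loop, which has odd winding number.
-/

open Set Metric

section Logarithms

open Complex

/-- A loop in the plane, parametrized as a `2π`-periodic map `ℝ → ℂ`, has a periodic logarithm if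
it lifts through `exp` to a loop; this encodes winding number `0` around the origin. -/
def HasPeriodicLog (c : ℝ → ℂ) : Prop :=
  ∃ g : ℝ → ℂ, Continuous g ∧ Function.Periodic g (2 * Real.pi) ∧ ∀ θ, exp (g θ) = c θ

lemma exists_continuous_exp_eq {X : Type*} [TopologicalSpace X] [SimplyConnectedSpace X]
    [LocallyPathConnectedSpace X] {f : X → ℂ} (hf : Continuous f) (hf₀ : ∀ x, f x ≠ 0) :
    ∃ g : X → ℂ, Continuous g ∧ ∀ x, exp (g x) = f x := by
  obtain ⟨x₀⟩ : Nonempty X := inferInstance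
  obtain ⟨g, ⟨-, hg⟩, -⟩ := isCoveringMapOn_exp.existsUnique_continuousMap_lifts ⟨f, hf⟩
    (exp_log (hf₀ x₀)) hf₀
  exact ⟨g, g.continuous, congrFun hg⟩

lemma sub_eq_sub_of_exp_eq {X : Type*} [TopologicalSpace X] {s : Set X} (hs : IsPreconnected s)
    {f g : X → ℂ} (hf : ContinuousOn f s) (hg : ContinuousOn g s)
    (hfg : ∀ x ∈ s, exp (f x) = exp (g x)) {x y : X} (hx : x ∈ s) (hy : y ∈ s) :
    f x - g x = f y - g y := by
  have hlift : EqOn f (fun z => g z + (f y - g y)) s :=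
    isCoveringMap_exp.eqOn_of_comp_eqOn hs hf (hg.add continuousOn_const)
      (fun z hz => Subtype.ext (by simp [exp_add, exp_sub, hfg z hz, hfg y hy])) hy (by simp)
  rw [hlift hx, add_sub_cancel_left]

lemma HasPeriodicLog.of_homotopy {F : ℝ × ℝ → ℂ} (hF : ContinuousOn F (Icc 0 1 ×ˢ univ))
    (hF₀ : ∀ r ∈ Icc (0 : ℝ) 1, ∀ θ, F (r, θ) ≠ 0)
    (hper : ∀ r ∈ Icc (0 : ℝ) 1, Function.Periodic (fun θ => F (r, θ)) (2 * Real.pi))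
    {r r' : ℝ} (hr : r ∈ Icc (0 : ℝ) 1) (hr' : r' ∈ Icc (0 : ℝ) 1)
    (h : HasPeriodicLog fun θ => F (r, θ)) : HasPeriodicLog fun θ => F (r', θ) := by
  let ρ : ℝ → Icc (0 : ℝ) 1 := projIcc 0 1 zero_le_one
  obtain ⟨G, hG, hGF⟩ := exists_continuous_exp_eq (f := fun z : ℝ × ℝ => F (ρ z.1, z.2))
    (hF.comp_continuous
      ((continuous_subtype_val.comp (continuous_projIcc.comp continuous_fst)).prodMk continuous_snd)
      fun z => ⟨(ρ z.1).2, mem_univ _⟩)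
    (fun z => hF₀ _ (ρ z.1).2 _)
  have hGF' : ∀ s ∈ Icc (0 : ℝ) 1, ∀ θ, exp (G (s, θ)) = F (s, θ) := fun s hs θ => by
    simp only [hGF, ρ, projIcc_of_mem zero_le_one hs]
  have monodromy_eq (z w : ℝ × ℝ) :
      G (z.1, z.2 + 2 * Real.pi) - G z = G (w.1, w.2 + 2 * Real.pi) - G w :=
    sub_eq_sub_of_exp_eq isPreconnected_univ
      (f := fun z : ℝ × ℝ => G (z.1, z.2 + 2 * Real.pi)) (by fun_prop) hG.continuousOn
      (fun z _ => by simpa only [hGF] using hper _ (ρ z.1).2 z.2) (mem_univ z) (mem_univ w)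
  obtain ⟨g, hg, hgper, hgF⟩ := h
  have hGg : G (r, 2 * Real.pi) - g (2 * Real.pi) = G (r, 0) - g 0 :=
    sub_eq_sub_of_exp_eq isPreconnected_univ (f := fun θ => G (r, θ)) (by fun_prop)
      hg.continuousOn (fun θ _ => by rw [hGF' r hr, hgF]) (mem_univ _) (mem_univ _)
  refine ⟨fun θ => G (r', θ), by fun_prop, fun θ => ?_, hGF' r' hr'⟩
  have hmono := monodromy_eq (r', θ) (r, 0)
  have hg0 : g (2 * Real.pi) = g 0 := hgper.eq
  simp only [zero_add] at hmono
  linear_combination hmono + hGg + hg0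

lemma not_hasPeriodicLog_of_antiperiodic {c : ℝ → ℂ} (hc : Function.Antiperiodic c Real.pi) :
    ¬ HasPeriodicLog c := by
  rintro ⟨g, hg, hgper, hgc⟩
  have hshift : g (Real.pi + Real.pi) - (g Real.pi + Real.pi * I) =
      g (0 + Real.pi) - (g 0 + Real.pi * I) :=
    sub_eq_sub_of_exp_eq isPreconnected_univ (f := fun θ => g (θ + Real.pi))
      (g := fun θ => g θ + Real.pi * I) (by fun_prop) (by fun_prop)
      (fun θ _ => by rw [exp_add, exp_pi_mul_I, hgc, hgc, hc θ, mul_neg_one])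
      (mem_univ Real.pi) (mem_univ 0)
  have hg0 : g (Real.pi + Real.pi) = g 0 := by rw [← two_mul]; exact hgper.eq
  have hgπ : g Real.pi = g 0 := by
    rw [zero_add] at hshift
    linear_combination (hg0 - hshift) / 2
  have hc0 : c 0 = -c 0 := by
    rw [← hc 0, zero_add, ← hgc Real.pi, hgπ, hgc]
  exact exp_ne_zero (g 0) ((hgc 0).trans (self_eq_neg.mp hc0))

-- The four quarters of the loop form a commutator `a b a⁻¹ b⁻¹`, so their contributions cancel.
lemma hasPeriodicLog_of_reflections {c : ℝ → ℂ} (hc : Continuous c) (hc₀ : ∀ θ, c θ ≠ 0)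
    (hper : Function.Periodic c (2 * Real.pi))
    (hvert : ∀ θ ∈ Icc (-(Real.pi / 4)) (Real.pi / 4), c (Real.pi - θ) = c θ)
    (hhor : ∀ θ ∈ Icc (Real.pi / 4) (Real.pi - Real.pi / 4), c (-θ) = c θ) :
    HasPeriodicLog c := by
  obtain ⟨g, hg, hgc⟩ := exists_continuous_exp_eq hc hc₀
  have hπ := Real.pi_pos
  have side₁ := sub_eq_sub_of_exp_eq isPreconnected_Icc (f := fun θ => g (Real.pi - θ)) (g := g)
    (by fun_prop) hg.continuousOn (fun θ hθ => by rw [hgc, hgc, hvert θ hθ])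
    (left_mem_Icc.mpr (by linarith)) (right_mem_Icc.mpr (by linarith))
  have side₂ := sub_eq_sub_of_exp_eq isPreconnected_Icc (f := fun θ => g (-θ)) (g := g)
    (by fun_prop) hg.continuousOn (fun θ hθ => by rw [hgc, hgc, hhor θ hθ])
    (left_mem_Icc.mpr (by linarith)) (right_mem_Icc.mpr (by linarith))
  refine ⟨g, hg, fun θ => ?_, hgc⟩
  have hmono := sub_eq_sub_of_exp_eq isPreconnected_univ (f := fun θ => g (θ + 2 * Real.pi))
    (g := g) (by fun_prop) hg.continuousOn (fun θ _ => by rw [hgc, hgc, hper θ])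
    (mem_univ θ) (mem_univ (-(Real.pi - Real.pi / 4)))
  have hshift : -(Real.pi - Real.pi / 4) + 2 * Real.pi = Real.pi - -(Real.pi / 4) := by ring
  simp only [hshift] at hmono
  linear_combination hmono + side₁ + side₂

end Logarithms

section SquareLoop

open Real

/-- The boundary of the square `[-1, 1]²`, parametrized by the angle: the point of direction
`(cos θ, sin θ)` on the unit sphere of the sup norm. Irreducible, since
`fun_prop` would otherwise look through the coordinates of its values and get stuck. -/
@[irreducible]
noncomputable def squareLoop (θ : ℝ) : ℝ × ℝ := ‖(cos θ, sin θ)‖⁻¹ • (cos θ, sin θ)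

lemma cos_sin_ne_zero (θ : ℝ) : (cos θ, sin θ) ≠ 0 := fun h => by
  have := sin_sq_add_cos_sq θ
  simp_all [Prod.ext_iff]

@[fun_prop]
lemma continuous_squareLoop : Continuous squareLoop := by
  unfold squareLoop
  exact Continuous.smul (Continuous.inv₀ (by fun_prop) fun θ => norm_ne_zero_iff.mpr
    (cos_sin_ne_zero θ)) (by fun_prop)

lemma norm_squareLoop (θ : ℝ) : ‖squareLoop θ‖ = 1 := by
  rw [squareLoop, norm_smul, norm_inv, norm_norm,
    inv_mul_cancel₀ (norm_ne_zero_iff.mpr (cos_sin_ne_zero θ))]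

lemma squareLoop_antiperiodic : Function.Antiperiodic squareLoop π := fun θ => by
  simp [squareLoop, Prod.norm_def]

lemma squareLoop_pi_sub (θ : ℝ) :
    squareLoop (π - θ) = (-(squareLoop θ).1, (squareLoop θ).2) := by
  simp [squareLoop, Prod.norm_def]

lemma squareLoop_neg (θ : ℝ) : squareLoop (-θ) = ((squareLoop θ).1, -(squareLoop θ).2) := by
  simp [squareLoop, Prod.norm_def]

lemma squareLoop_pi_div_two_sub (θ : ℝ) : squareLoop (π / 2 - θ) = (squareLoop θ).swap := by
  simp [squareLoop, Prod.norm_def, cos_pi_div_two_sub, sin_pi_div_two_sub, max_comm]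

lemma squareLoop_fst_eq_one {θ : ℝ} (hθ : θ ∈ Icc (-(π / 4)) (π / 4)) : (squareLoop θ).1 = 1 := by
  have hcos : 0 < cos θ :=
    cos_pos_of_mem_Ioo ⟨by linarith [hθ.1, pi_pos], by linarith [hθ.2, pi_pos]⟩
  have hcos_two : 0 ≤ cos (2 * θ) :=
    cos_nonneg_of_mem_Icc ⟨by linarith [hθ.1], by linarith [hθ.2]⟩
  have hsin : |sin θ| ≤ |cos θ| := sq_le_sq.mp (by linarith [cos_two_mul' θ])
  rw [abs_of_pos hcos] at hsin
  simp [squareLoop, Prod.norm_def, abs_of_pos hcos, max_eq_left hsin, hcos.ne']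

lemma squareLoop_snd_eq_one {θ : ℝ} (hθ : θ ∈ Icc (π / 4) (π - π / 4)) : (squareLoop θ).2 = 1 := by
  rw [← Prod.fst_swap, ← squareLoop_pi_div_two_sub]
  exact squareLoop_fst_eq_one ⟨by linarith [hθ.2], by linarith [hθ.1]⟩

lemma abs_fst_eq_one_or_abs_snd_eq_one {z : ℝ × ℝ} (hz : ‖z‖ = 1) : |z.1| = 1 ∨ |z.2| = 1 := by
  rw [Prod.norm_def] at hz
  exact (max_choice ‖z.1‖ ‖z.2‖).imp (·.symm.trans hz) (·.symm.trans hz)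

lemma mk_mem_closedBall_zero_one {x y : ℝ} :
    (x, y) ∈ closedBall (0 : ℝ × ℝ) 1 ↔ x ∈ Icc (-1 : ℝ) 1 ∧ y ∈ Icc (-1 : ℝ) 1 := by
  simp [Prod.norm_def, abs_le]

lemma squareLoop_mem (θ : ℝ) :
    (squareLoop θ).1 ∈ Icc (-1 : ℝ) 1 ∧ (squareLoop θ).2 ∈ Icc (-1 : ℝ) 1 :=
  mk_mem_closedBall_zero_one.mp (mem_closedBall_zero_iff.mpr (norm_squareLoop θ).le)

end SquareLoop

section Linking

-- Sliding the boundary of the square away from the corner `(-1, -1)` until it reaches the boundary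
-- of `[-1, 3]²` avoids all solutions of `A s = B t`; there, opposite sides carry the same values.
lemma hasPeriodicLog_sub_squareLoop {A B : ℝ → ℂ} (hA : Continuous A) (hB : Continuous B)
    (hA_closed : A 3 = A (-1)) (hB_closed : B 3 = B (-1))
    (hAB : ∀ s ∈ Icc (-1 : ℝ) 3, ∀ t ∈ Icc (-1 : ℝ) 3, A s = B t →
      s ∈ Ioo (-1 : ℝ) 1 ∧ t ∈ Ioo (-1 : ℝ) 1) :
    HasPeriodicLog fun θ => A (squareLoop θ).1 - B (squareLoop θ).2 := by
  let slide (r x : ℝ) : ℝ := x + r * (x + 1)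
  let F : ℝ × ℝ → ℂ := fun z =>
    A (slide z.1 (squareLoop z.2).1) - B (slide z.1 (squareLoop z.2).2)
  have hF : Continuous F := by dsimp only [F, slide]; fun_prop
  have slide_mem {r x : ℝ} (hr : r ∈ Icc (0 : ℝ) 1) (hx : x ∈ Icc (-1 : ℝ) 1) :
      slide r x ∈ Icc (-1 : ℝ) 3 :=
    ⟨by nlinarith [hr.1, hx.1], by nlinarith [hr.1, hr.2, hx.1, hx.2]⟩
  have slide_notMem {r x : ℝ} (hr : r ∈ Icc (0 : ℝ) 1) (hx : |x| = 1) :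
      slide r x ∉ Ioo (-1 : ℝ) 1 := by
    rintro ⟨hlow, hup⟩
    rcases eq_or_eq_neg_of_abs_eq hx with rfl | rfl <;> dsimp only [slide] at hlow hup <;>
      linarith [hr.1]
  have hF₀ : ∀ r ∈ Icc (0 : ℝ) 1, ∀ θ, F (r, θ) ≠ 0 := fun r hr θ h => by
    have hzero := hAB _ (slide_mem hr (squareLoop_mem θ).1) _ (slide_mem hr (squareLoop_mem θ).2)
      (sub_eq_zero.mp h)
    rcases abs_fst_eq_one_or_abs_snd_eq_one (norm_squareLoop θ) with h₁ | h₂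
    · exact slide_notMem hr h₁ hzero.1
    · exact slide_notMem hr h₂ hzero.2
  have hper : ∀ r, Function.Periodic (fun θ => F (r, θ)) (2 * Real.pi) := fun r θ => by
    simp only [F, squareLoop_antiperiodic.periodic_two_mul θ]
  have hslid : HasPeriodicLog fun θ => F (1, θ) := by
    have slide_one : slide 1 1 = 3 ∧ slide 1 (-1) = -1 := by norm_num [slide]
    refine hasPeriodicLog_of_reflections (by fun_prop)
      (hF₀ 1 (right_mem_Icc.mpr zero_le_one)) (hper 1) (fun θ hθ => ?_) fun θ hθ => ?_
    · simp only [F, squareLoop_pi_sub, squareLoop_fst_eq_one hθ, slide_one, hA_closed]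
    · simp only [F, squareLoop_neg, squareLoop_snd_eq_one hθ, slide_one, hB_closed]
  simpa [F, slide] using hslid.of_homotopy hF.continuousOn hF₀ (fun r _ => hper r)
    (right_mem_Icc.mpr zero_le_one) (left_mem_Icc.mpr zero_le_one)

-- The homotopy `ψ (x, -r y) - ψ (-r x, y)` ends at an odd function of `(x, y)`.
lemma not_hasPeriodicLog_sub_squareLoop {ψ : ℝ × ℝ → ℂ} (hψ : ContinuousOn ψ (closedBall 0 1))
    (hinj : InjOn ψ (closedBall 0 1)) :
    ¬ HasPeriodicLog fun θ => ψ ((squareLoop θ).1, 0) - ψ (0, (squareLoop θ).2) := by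
  let P : ℝ × ℝ → ℝ × ℝ := fun z => ((squareLoop z.2).1, -(z.1 * (squareLoop z.2).2))
  let Q : ℝ × ℝ → ℝ × ℝ := fun z => (-(z.1 * (squareLoop z.2).1), (squareLoop z.2).2)
  have neg_mul_mem {r x : ℝ} (hr : r ∈ Icc (0 : ℝ) 1) (hx : x ∈ Icc (-1 : ℝ) 1) :
      -(r * x) ∈ Icc (-1 : ℝ) 1 :=
    ⟨by nlinarith [hr.1, hr.2, hx.2], by nlinarith [hr.1, hr.2, hx.1]⟩
  have hP : MapsTo P (Icc 0 1 ×ˢ univ) (closedBall 0 1) := fun z hz =>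
    mk_mem_closedBall_zero_one.mpr ⟨(squareLoop_mem z.2).1, neg_mul_mem hz.1 (squareLoop_mem z.2).2⟩
  have hQ : MapsTo Q (Icc 0 1 ×ˢ univ) (closedBall 0 1) := fun z hz =>
    mk_mem_closedBall_zero_one.mpr ⟨neg_mul_mem hz.1 (squareLoop_mem z.2).1, (squareLoop_mem z.2).2⟩
  have hPc : Continuous P := by dsimp only [P]; fun_prop
  have hQc : Continuous Q := by dsimp only [Q]; fun_prop
  have hF : ContinuousOn (fun z => ψ (P z) - ψ (Q z)) (Icc 0 1 ×ˢ univ) :=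
    (hψ.comp hPc.continuousOn hP).sub (hψ.comp hQc.continuousOn hQ)
  have hF₀ : ∀ r ∈ Icc (0 : ℝ) 1, ∀ θ, ψ (P (r, θ)) - ψ (Q (r, θ)) ≠ 0 := fun r hr θ h => by
    have hPQ : P (r, θ) = Q (r, θ) :=
      hinj (hP ⟨hr, mem_univ _⟩) (hQ ⟨hr, mem_univ _⟩) (sub_eq_zero.mp h)
    obtain ⟨hx, hy⟩ := Prod.ext_iff.mp hPQ
    dsimp only [P, Q] at hx hy
    have hx₀ : (squareLoop θ).1 = 0 := by nlinarith [hr.1]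
    have hy₀ : (squareLoop θ).2 = 0 := by nlinarith [hr.1]
    simpa [hx₀, hy₀] using abs_fst_eq_one_or_abs_snd_eq_one (norm_squareLoop θ)
  intro h
  refine not_hasPeriodicLog_of_antiperiodic (c := fun θ => ψ (P (1, θ)) - ψ (Q (1, θ)))
    (fun θ => by simp [P, Q, squareLoop_antiperiodic θ]) ?_
  refine HasPeriodicLog.of_homotopy hF hF₀ (fun r _ θ => ?_) (left_mem_Icc.mpr zero_le_one)
    (right_mem_Icc.mpr zero_le_one) (by simpa [P, Q] using h)
  simp only [P, Q, squareLoop_antiperiodic.periodic_two_mul θ]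

lemma exists_closed_extension {X : Type*} [TopologicalSpace X] {f : ℝ → X} {S : Set X}
    (hf : ContinuousOn f (Icc (-1) 1)) (hS : JoinedIn S (f 1) (f (-1))) :
    ∃ A : ℝ → X, Continuous A ∧ EqOn A f (Icc (-1) 1) ∧ MapsTo A (Ici 1) S ∧ A 3 = A (-1) := by
  obtain ⟨j, hj⟩ := hS
  let A : ℝ → X := fun s =>
    if s ≤ 1 then IccExtend (by norm_num : (-1 : ℝ) ≤ 1) ((Icc (-1) 1).domRestrict f) s
    else j.extend ((s - 1) / 2)
  have hAf : EqOn A f (Icc (-1) 1) := fun s hs => by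
    simp only [A, if_pos hs.2, IccExtend_of_mem _ _ hs, domRestrict_apply]
  have hAj : ∀ s ∈ Ici (1 : ℝ), A s = j.extend ((s - 1) / 2) := fun s hs => by
    rcases (mem_Ici.mp hs).eq_or_lt with rfl | hs
    · rw [hAf (by norm_num)]
      simp
    · simp only [A, if_neg hs.not_ge]
  refine ⟨A, ?_, hAf, fun s hs => hAj s hs ▸ hj _, ?_⟩
  · refine Continuous.if_le (continuousOn_iff_continuous_domRestrict.mp hf).Icc_extend'
      (j.continuous_extend.comp (by fun_prop)) continuous_id continuous_const ?_
    rintro s rfl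
    simp
  · rw [hAj 3 (by norm_num), hAf (by norm_num)]
    norm_num

theorem not_joinedIn_of_joinedIn_crossing {ψ : ℝ × ℝ → ℝ × ℝ}
    (hψ : ContinuousOn ψ (closedBall 0 1)) (hinj : InjOn ψ (closedBall 0 1)) {S T : Set (ℝ × ℝ)}
    (hST : Disjoint S T) (hS : ∀ y ∈ Icc (-1 : ℝ) 1, ψ (0, y) ∉ S)
    (hT : ∀ x ∈ Icc (-1 : ℝ) 1, ψ (x, 0) ∉ T) (hjoin : JoinedIn S (ψ (1, 0)) (ψ (-1, 0))) :
    ¬ JoinedIn T (ψ (0, 1)) (ψ (0, -1)) := fun hjoin' => by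
  have hhor {x : ℝ} (hx : x ∈ Icc (-1 : ℝ) 1) : (x, (0 : ℝ)) ∈ closedBall (0 : ℝ × ℝ) 1 :=
    mk_mem_closedBall_zero_one.mpr ⟨hx, by norm_num⟩
  have hver {y : ℝ} (hy : y ∈ Icc (-1 : ℝ) 1) : ((0 : ℝ), y) ∈ closedBall (0 : ℝ × ℝ) 1 :=
    mk_mem_closedBall_zero_one.mpr ⟨by norm_num, hy⟩
  obtain ⟨A, hA, hAψ, hAS, hA_closed⟩ := exists_closed_extension
    (hψ.comp (f := fun x : ℝ => (x, (0 : ℝ))) (by fun_prop) fun _ => hhor) hjoin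
  obtain ⟨B, hB, hBψ, hBT, hB_closed⟩ := exists_closed_extension
    (hψ.comp (f := fun y : ℝ => ((0 : ℝ), y)) (by fun_prop) fun _ => hver) hjoin'
  have meet_only_once : ∀ s ∈ Icc (-1 : ℝ) 3, ∀ t ∈ Icc (-1 : ℝ) 3, A s = B t →
      s ∈ Ioo (-1 : ℝ) 1 ∧ t ∈ Ioo (-1 : ℝ) 1 := by
    intro s hs t ht hst
    rcases le_total s 1 with hs₁ | hs₁ <;> rcases le_total t 1 with ht₁ | ht₁
    · rw [hAψ ⟨hs.1, hs₁⟩, hBψ ⟨ht.1, ht₁⟩] at hst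
      have hcenter := hinj (hhor ⟨hs.1, hs₁⟩) (hver ⟨ht.1, ht₁⟩) hst
      obtain ⟨rfl, rfl⟩ : s = 0 ∧ 0 = t := Prod.ext_iff.mp hcenter
      norm_num
    · exact absurd (hst ▸ hBT ht₁) (hAψ ⟨hs.1, hs₁⟩ ▸ hT s ⟨hs.1, hs₁⟩)
    · exact absurd (hst ▸ hAS hs₁) (hBψ ⟨ht.1, ht₁⟩ ▸ hS t ⟨ht.1, ht₁⟩)
    · exact absurd (hBT ht₁) (hST.notMem_of_mem_left (hst ▸ hAS hs₁))
  let toℂ : (ℝ × ℝ) ≃L[ℝ] ℂ := Complex.equivRealProdCLM.symm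
  refine not_hasPeriodicLog_sub_squareLoop (ψ := fun z => toℂ (ψ z))
    (toℂ.continuous.comp_continuousOn hψ) (toℂ.injective.comp_injOn hinj) ?_
  convert hasPeriodicLog_sub_squareLoop (A := fun s => toℂ (A s)) (B := fun t => toℂ (B t))
    (by fun_prop) (by fun_prop) (congrArg _ hA_closed) (congrArg _ hB_closed)
    (fun s hs t ht hst => meet_only_once s hs t ht (toℂ.injective hst)) using 5 with θ
  · exact (hAψ (squareLoop_mem θ).1).symm
  · exact (hBψ (squareLoop_mem θ).2).symm

end Linking

section UnboundedComponents

variable {E : Type*} [NormedAddCommGroup E] [NormedSpace ℝ E]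

lemma isPreconnected_compl_closedBall (hE : 1 < Module.rank ℝ E) (x : E) {r : ℝ} (hr : 0 ≤ r) :
    IsPreconnected (closedBall x r)ᶜ := by
  have himage : (fun y : E => x + (1 + r * ‖y‖⁻¹) • y) '' {0}ᶜ = (closedBall x r)ᶜ := by
    ext z
    simp only [mem_image, mem_compl_iff, mem_singleton_iff, mem_closedBall, not_le, dist_eq_norm]
    constructor
    · rintro ⟨y, hy, rfl⟩
      have hy' : 0 < ‖y‖ := norm_pos_iff.mpr hy
      rw [add_sub_cancel_left, norm_smul, Real.norm_of_nonneg (by positivity), add_mul,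
        inv_mul_cancel_right₀ hy'.ne']
      linarith
    · intro hz
      have hzx : 0 < ‖z - x‖ := hr.trans_lt hz
      have hscale : 0 < 1 - r * ‖z - x‖⁻¹ := by
        rw [sub_pos, ← div_eq_mul_inv, div_lt_one hzx]
        exact hz
      refine ⟨(1 - r * ‖z - x‖⁻¹) • (z - x),
        smul_ne_zero hscale.ne' (norm_pos_iff.mp hzx), ?_⟩
      have hnorm : ‖(1 - r * ‖z - x‖⁻¹) • (z - x)‖ = ‖z - x‖ - r := by
        rw [norm_smul, Real.norm_of_nonneg hscale.le]
        field_simp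
      have hsub : ‖z - x‖ - r ≠ 0 := (sub_pos.mpr hz).ne'
      have hone : (1 + r * (‖z - x‖ - r)⁻¹) * (1 - r * ‖z - x‖⁻¹) = 1 := by
        field_simp
        ring
      rw [hnorm, smul_smul, hone, one_smul, add_sub_cancel]
  rw [← himage]
  refine (isPathConnected_compl_singleton_of_one_lt_rank hE 0).isConnected.isPreconnected.image _ ?_
  fun_prop (disch := simp)

lemma joinedIn_of_isOpen_of_isPreconnected {X : Type*} [TopologicalSpace X]
    [LocallyPathConnectedSpace X] {U : Set X} (hU : IsOpen U) (hU' : IsPreconnected U) {x y : X}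
    (hx : x ∈ U) (hy : y ∈ U) : JoinedIn U x y :=
  (hU.isConnected_iff_isPathConnected.mp ⟨⟨x, hx⟩, hU'⟩).joinedIn x hx y hy

lemma joinedIn_compl_of_not_isBounded (hE : 1 < Module.rank ℝ E) {K : Set E} (hK : IsClosed K)
    (hK' : Bornology.IsBounded K) {x y : E}
    (hx : ¬ Bornology.IsBounded (connectedComponentIn Kᶜ x))
    (hy : ¬ Bornology.IsBounded (connectedComponentIn Kᶜ y)) : JoinedIn Kᶜ x y := by
  obtain ⟨r, hr, hKr⟩ := hK'.subset_closedBall_lt 0 0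
  have exists_joinedIn_far {z : E} (hz : ¬ Bornology.IsBounded (connectedComponentIn Kᶜ z)) :
      ∃ w ∈ (closedBall (0 : E) r)ᶜ, JoinedIn Kᶜ z w := by
    obtain ⟨w, hw, hwr⟩ := not_subset.mp (mt isBounded_closedBall.subset hz)
    have hzK : z ∈ Kᶜ := by
      by_contra hzK
      simp [connectedComponentIn_eq_empty hzK] at hw
    exact ⟨w, hwr, (joinedIn_of_isOpen_of_isPreconnected hK.isOpen_compl.connectedComponentIn
      isPreconnected_connectedComponentIn (mem_connectedComponentIn hzK) hw).mono
      (connectedComponentIn_subset _ _)⟩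
  obtain ⟨x', hx', hxx'⟩ := exists_joinedIn_far hx
  obtain ⟨y', hy', hyy'⟩ := exists_joinedIn_far hy
  have hfar : JoinedIn (closedBall (0 : E) r)ᶜ x' y' :=
    joinedIn_of_isOpen_of_isPreconnected isClosed_closedBall.isOpen_compl
      (isPreconnected_compl_closedBall hE 0 hr.le) hx' hy'
  exact (hxx'.trans (hfar.mono (compl_subset_compl.mpr hKr))).trans hyy'.symm

lemma not_isBounded_of_mem_closure_contour {V : Type} {γ : V → Arc} {K : Set (ℝ × ℝ)}
    (hK : IsClosed K) (hKγ : K ⊆ arcUnion γ) {x : ℝ × ℝ} (hxK : x ∉ K)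
    (hx : x ∈ closure (contour γ)) : ¬ Bornology.IsBounded (connectedComponentIn Kᶜ x) := by
  obtain ⟨z, hzx, -, hz⟩ := mem_closure_iff.mp hx _ hK.isOpen_compl.connectedComponentIn
    (mem_connectedComponentIn hxK)
  exact fun hbdd => hz <| hbdd.subset <| connectedComponentIn_eq hzx ▸
    connectedComponentIn_mono z (compl_subset_compl.mpr hKγ)

lemma joinedIn_compl_of_mem_closure_contour {V : Type} {γ : V → Arc} {K : Set (ℝ × ℝ)}
    (hK : IsCompact K) (hKγ : K ⊆ arcUnion γ) {x y : ℝ × ℝ} (hxK : x ∉ K) (hyK : y ∉ K)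
    (hx : x ∈ closure (contour γ)) (hy : y ∈ closure (contour γ)) : JoinedIn Kᶜ x y :=
  joinedIn_compl_of_not_isBounded (by simp [one_add_one_eq_two]) hK.isClosed hK.isBounded
    (not_isBounded_of_mem_closure_contour hK.isClosed hKγ hxK hx)
    (not_isBounded_of_mem_closure_contour hK.isClosed hKγ hyK hy)

end UnboundedComponents

section Arcs

lemma joinedIn_of_continuousOn_uIcc {X : Type*} [TopologicalSpace X] {f : ℝ → X} {s t : ℝ}
    {F : Set X} (hf : ContinuousOn f (uIcc s t)) (hF : MapsTo f (uIcc s t) F) :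
    JoinedIn F (f s) (f t) := by
  have hst : JoinedIn (uIcc s t) s t :=
    ((convex_uIcc s t).isPathConnected nonempty_uIcc).joinedIn s left_mem_uIcc t right_mem_uIcc
  exact (hst.map_continuousOn hf).mono hF.image_subset

namespace Arc

variable {γ : Arc}

lemma isCompact_img (γ : Arc) : IsCompact γ.img := isCompact_Icc.image_of_continuousOn γ.contOn

lemma ends_subset_img (γ : Arc) : γ.ends ⊆ γ.img :=
  pair_subset (mem_image_of_mem _ (by norm_num)) (mem_image_of_mem _ (by norm_num))

lemma joinedIn_of_mapsTo_uIcc {F : Set (ℝ × ℝ)} {s t : ℝ} (hs : s ∈ Icc (0 : ℝ) 1)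
    (ht : t ∈ Icc (0 : ℝ) 1) (hF : MapsTo γ.toFun (uIcc s t) F) :
    JoinedIn F (γ.toFun s) (γ.toFun t) :=
  joinedIn_of_continuousOn_uIcc (γ.contOn.mono (uIcc_subset_Icc hs ht)) hF

lemma joinedIn_img {x y : ℝ × ℝ} (hx : x ∈ γ.img) (hy : y ∈ γ.img) : JoinedIn γ.img x y := by
  obtain ⟨s, hs, rfl⟩ := hx
  obtain ⟨t, ht, rfl⟩ := hy
  exact joinedIn_of_mapsTo_uIcc hs ht fun u hu => mem_image_of_mem _ (uIcc_subset_Icc hs ht hu)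

lemma pairwise_joinedIn_diff_of_joinedIn {S : Set (ℝ × ℝ)} {lo t hi : ℝ}
    (hlo : lo ∈ Icc (0 : ℝ) 1) (hhi : hi ∈ Icc (0 : ℝ) 1) (hlot : lo < t) (hthi : t < hi)
    (hγS : γ.img \ {γ.toFun t} ⊆ S) (hjoin : JoinedIn S (γ.toFun lo) (γ.toFun hi)) :
    (γ.img \ {γ.toFun t}).Pairwise (JoinedIn S) := by
  have ht : t ∈ Icc (0 : ℝ) 1 := ⟨hlo.1.trans hlot.le, hthi.le.trans hhi.2⟩
  have joinedIn_of_notMem {s u : ℝ} (hs : s ∈ Icc (0 : ℝ) 1) (hu : u ∈ Icc (0 : ℝ) 1)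
      (htsu : t ∉ uIcc s u) : JoinedIn S (γ.toFun s) (γ.toFun u) := by
    refine joinedIn_of_mapsTo_uIcc hs hu fun w hw => hγS ?_
    have hw' := uIcc_subset_Icc hs hu hw
    exact ⟨mem_image_of_mem _ hw', fun h => htsu (γ.injOn hw' ht h ▸ hw)⟩
  have joinedIn_lo : ∀ x ∈ γ.img \ {γ.toFun t}, JoinedIn S (γ.toFun lo) x := by
    rintro _ ⟨⟨u, hu, rfl⟩, hut⟩
    rcases lt_or_gt_of_ne (show u ≠ t from fun h => hut (h ▸ rfl)) with hut | htu
    · exact joinedIn_of_notMem hlo hu (notMem_uIcc_of_gt hlot hut)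
    · exact hjoin.trans (joinedIn_of_notMem hhi hu (notMem_uIcc_of_lt hthi htu))
  exact fun x hx y hy _ => (joinedIn_lo x hx).symm.trans (joinedIn_lo y hy)

end Arc

lemma CrossesProperlyAt.notMem_ends_right {γ₁ γ₂ : Arc} {q : ℝ × ℝ}
    (h : CrossesProperlyAt γ₁ γ₂ q) : q ∉ γ₂.ends := by
  obtain ⟨-, ⟨t, ht, rfl⟩, -⟩ := h
  rintro (h | h)
  · exact ht.1.ne' (γ₂.injOn (Ioo_subset_Icc_self ht) (by norm_num) h)
  · exact ht.2.ne (γ₂.injOn (Ioo_subset_Icc_self ht) (by norm_num) h)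

lemma CrossesProperlyAt.exists_injOn_closedBall {γ₁ γ₂ : Arc} {q : ℝ × ℝ}
    (h : CrossesProperlyAt γ₁ γ₂ q) :
    ∃ ψ : ℝ × ℝ → ℝ × ℝ, ContinuousOn ψ (closedBall 0 1) ∧ InjOn ψ (closedBall 0 1) ∧ ψ 0 = q ∧
      (∀ x ∈ Icc (-1 : ℝ) 1, ψ (x, 0) ∈ γ₁.img) ∧ ∀ y ∈ Icc (-1 : ℝ) 1, ψ (0, y) ∈ γ₂.img := by
  obtain ⟨-, -, φ, hq, htarget, hφq, hhor, hver⟩ := h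
  have hhalf : MapsTo (fun z : ℝ × ℝ => (1 / 2 : ℝ) • z) (closedBall 0 1) (ball 0 1) := by
    intro z hz
    rw [mem_closedBall_zero_iff] at hz
    rw [mem_ball_zero_iff, norm_smul]
    norm_num
    linarith
  have symm_mem {F : Set (ℝ × ℝ)} {z : ℝ × ℝ} (hz : z ∈ φ '' (φ.source ∩ F)) : φ.symm z ∈ F := by
    obtain ⟨w, ⟨hw, hwF⟩, rfl⟩ := hz
    rwa [φ.left_inv hw]
  have half_mem {x y : ℝ} (hx : x ∈ Icc (-1 : ℝ) 1) (hy : y ∈ Icc (-1 : ℝ) 1) :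
      (1 / 2 : ℝ) • (x, y) ∈ ball (0 : ℝ × ℝ) 1 :=
    hhalf (mk_mem_closedBall_zero_one.mpr ⟨hx, hy⟩)
  rw [← htarget] at hhalf
  refine ⟨fun z => φ.symm ((1 / 2 : ℝ) • z), φ.continuousOn_symm.comp (by fun_prop) hhalf,
    φ.symm.injOn.comp (smul_right_injective _ (by norm_num)).injOn hhalf,
    by simpa only [smul_zero, hφq] using φ.left_inv hq, fun x hx => ?_, fun y hy => ?_⟩
  · exact symm_mem (hhor ▸ ⟨half_mem hx (by norm_num), by simp⟩)
  · exact symm_mem (hver ▸ ⟨half_mem (by norm_num) hy, by simp⟩)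

lemma CrossesProperlyAt.not_pairwise_joinedIn {γ₁ γ₂ : Arc} {q : ℝ × ℝ}
    (h : CrossesProperlyAt γ₁ γ₂ q) {S T : Set (ℝ × ℝ)} (hST : Disjoint S T)
    (hS : Disjoint S γ₂.img) (hT : Disjoint T γ₁.img)
    (hjoin : (γ₁.img \ {q}).Pairwise (JoinedIn S)) :
    ¬ (γ₂.img \ {q}).Pairwise (JoinedIn T) := fun hjoin' => by
  obtain ⟨ψ, hψ, hinj, rfl, hhor, hver⟩ := h.exists_injOn_closedBall
  have mem {x y : ℝ} (hx : x ∈ Icc (-1 : ℝ) 1) (hy : y ∈ Icc (-1 : ℝ) 1) :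
      (x, y) ∈ closedBall (0 : ℝ × ℝ) 1 := mk_mem_closedBall_zero_one.mpr ⟨hx, hy⟩
  refine not_joinedIn_of_joinedIn_crossing hψ hinj hST
    (fun y hy => hS.notMem_of_mem_right (hver y hy))
    (fun x hx => hT.notMem_of_mem_right (hhor x hx)) (hjoin ⟨hhor 1 (by norm_num), ?_⟩
      ⟨hhor (-1) (by norm_num), ?_⟩ ?_) (hjoin' ⟨hver 1 (by norm_num), ?_⟩
      ⟨hver (-1) (by norm_num), ?_⟩ ?_) <;>
  exact (hinj.ne_iff (mem (by norm_num) (by norm_num)) (mem (by norm_num) (by norm_num))).mpr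
    (by norm_num [Prod.ext_iff])

theorem CrossesProperlyAt.not_joinedIn_compl {α β : Arc} {L : Set (ℝ × ℝ)} {lo t hi : ℝ}
    (hcross : CrossesProperlyAt α β (α.toFun t)) (hlo : lo ∈ Icc (0 : ℝ) 1)
    (hhi : hi ∈ Icc (0 : ℝ) 1) (hlot : lo < t) (hthi : t < hi)
    (hαβ : α.img ∩ β.img = {α.toFun t}) (hLβ : Disjoint L β.img)
    (hL : JoinedIn L (α.toFun lo) (α.toFun hi)) :
    ¬ JoinedIn (α.img ∪ L)ᶜ (β.toFun 0) (β.toFun 1) := fun hends => by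
  obtain ⟨s, hs, hsq⟩ := hcross.2.1
  have hinter : (α.img ∪ L) ∩ β.img = {α.toFun t} := by
    rw [union_inter_distrib_right, hαβ, hLβ.inter_eq, union_empty]
  have hqL : α.toFun t ∉ L := hLβ.notMem_of_mem_right (hinter ▸ mem_singleton _).2
  have hα : (α.img \ {α.toFun t}).Pairwise (JoinedIn ((α.img ∪ L) \ {α.toFun t})) :=
    Arc.pairwise_joinedIn_diff_of_joinedIn hlo hhi hlot hthi
      (sdiff_subset_sdiff_left subset_union_left)
      (hL.mono fun x hx => ⟨Or.inr hx, fun hxq => hqL (hxq ▸ hx)⟩)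
  have hβ : (β.img \ {β.toFun s}).Pairwise (JoinedIn (α.img ∪ L)ᶜ) :=
    Arc.pairwise_joinedIn_diff_of_joinedIn (by norm_num) (by norm_num) hs.1 hs.2
      (fun x hx hx' => hx.2 (hsq ▸ hinter ▸ ⟨hx', hx.1⟩)) hends
  exact hcross.not_pairwise_joinedIn (disjoint_compl_right.mono_left sdiff_subset)
    (disjoint_left.mpr fun x hx hxβ => hx.2 (hinter ▸ ⟨hx.1, hxβ⟩))
    (disjoint_compl_left.mono_right subset_union_left) hα (hsq ▸ hβ)

end Arcs

namespace OneStringRep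

variable {V : Type} {G : SimpleGraph V}

lemma inter_img_eq_singleton (R : OneStringRep G) {u v : V} (huv : u ≠ v) {q : ℝ × ℝ}
    (hqu : q ∈ (R.γ u).img) (hqv : q ∈ (R.γ v).img) : (R.γ u).img ∩ (R.γ v).img = {q} := by
  have hadj : G.Adj u v := by
    by_contra hadj
    exact notMem_empty q (R.nonadj_disjoint u v huv hadj ▸ ⟨hqu, hqv⟩)
  obtain ⟨q', hq'⟩ := R.adj_inter u v hadj
  have hqq' : q ∈ ({q'} : Set (ℝ × ℝ)) := hq' ▸ ⟨hqu, hqv⟩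
  rw [hq', mem_singleton_iff.mp hqq']

-- Otherwise the piece of `γ c` between `γ a` and `γ b`, together with `γ a ∪ γ b`, contains a
-- closed curve that `γ v` crosses exactly once, while both ends of `γ v` lie on its outside.
theorem adj_or_adj_of_between (R : OneStringRep G) {c a v b : V} {ta tv tb : ℝ}
    (hta : ta ∈ Icc (0 : ℝ) 1) (htb : tb ∈ Icc (0 : ℝ) 1) (ha : (R.γ c).toFun ta ∈ (R.γ a).img)
    (hv : (R.γ c).toFun tv ∈ (R.γ v).img) (hb : (R.γ c).toFun tb ∈ (R.γ b).img) (hav : ta < tv)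
    (hvb : tv < tb) (hcv : c ≠ v) (hab : G.Adj a b)
    (hends : (R.γ v).ends ⊆ closure (contour R.γ)) : G.Adj v a ∨ G.Adj v b := by
  by_contra! ⟨hva, hvb'⟩
  have hc : (R.γ c).toFun tv ∈ (R.γ c).img :=
    mem_image_of_mem _ ⟨hta.1.trans hav.le, hvb.le.trans htb.2⟩
  have hcross := R.proper c v hcv _ ⟨hc, hv⟩
  have hinter := R.inter_img_eq_singleton hcv hc hv
  let L := (R.γ a).img ∪ (R.γ b).img
  have hLv : Disjoint L (R.γ v).img := by
    rw [disjoint_union_left, disjoint_iff_inter_eq_empty, disjoint_iff_inter_eq_empty]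
    exact ⟨R.nonadj_disjoint a v (by rintro rfl; exact hvb' hab) (hva ·.symm),
      R.nonadj_disjoint b v (by rintro rfl; exact hva hab.symm) (hvb' ·.symm)⟩
  have hL : JoinedIn L ((R.γ c).toFun ta) ((R.γ c).toFun tb) := by
    obtain ⟨z, hz⟩ := R.adj_inter a b hab
    obtain ⟨hza, hzb⟩ : z ∈ (R.γ a).img ∩ (R.γ b).img := hz ▸ rfl
    exact ((Arc.joinedIn_img ha hza).mono subset_union_left).trans
      ((Arc.joinedIn_img hzb hb).mono subset_union_right)
  have hK : IsCompact ((R.γ c).img ∪ L) :=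
    (R.γ c).isCompact_img.union ((R.γ a).isCompact_img.union (R.γ b).isCompact_img)
  have hKU : (R.γ c).img ∪ L ⊆ arcUnion R.γ := by
    have himg (u : V) : (R.γ u).img ⊆ arcUnion R.γ := subset_iUnion_of_subset u subset_rfl
    exact union_subset (himg c) (union_subset (himg a) (himg b))
  have hendK : ∀ x ∈ (R.γ v).ends, x ∉ (R.γ c).img ∪ L := by
    rintro x hx (hxc | hxL)
    · have hxq : x ∈ (R.γ c).img ∩ (R.γ v).img := ⟨hxc, (R.γ v).ends_subset_img hx⟩
      rw [hinter, mem_singleton_iff] at hxq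
      exact hcross.notMem_ends_right (hxq ▸ hx)
    · exact hLv.notMem_of_mem_left hxL ((R.γ v).ends_subset_img hx)
  exact hcross.not_joinedIn_compl hta htb hav hvb hinter hLv hL <|
    joinedIn_compl_of_mem_closure_contour hK hKU (hendK _ (mem_insert _ _))
      (hendK _ (mem_insert_of_mem _ rfl)) (hends (mem_insert _ _)) (hends (mem_insert_of_mem _ rfl))

end OneStringRep

section Wheel

lemma wheelGraph_adj_none_some {n : ℕ} (i : ZMod n) : (wheelGraph n).Adj none (some i) := by
  simp [wheelGraph]

lemma wheelGraph_adj_some_some {n : ℕ} (hn : n ≠ 1) {i j : ZMod n} :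
    (wheelGraph n).Adj (some i) (some j) ↔ j = i + 1 ∨ i = j + 1 := by
  have : Nontrivial (ZMod n) := ZMod.nontrivial_iff.mpr hn
  simp only [wheelGraph, SimpleGraph.fromRel_adj, ne_eq, Option.some.injEq, and_iff_right_iff_imp]
  rintro (rfl | rfl) h <;> simp_all

-- Let `t i` be minimal and let `i + d`, with `d = ± 1`, be the neighbour of `i` with the smaller
-- value. Then the edge is `{i, i - d}` or `{i + d, i + 2 d}`.
lemma exists_between_wheelGraph_adj {n : ℕ} (hn : 5 ≤ n) {α : Type*} [LinearOrder α]
    {t : ZMod n → α} (ht : Function.Injective t) :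
    ∃ a m b : ZMod n, (wheelGraph n).Adj (some a) (some b) ∧
      ¬ (wheelGraph n).Adj (some m) (some a) ∧ ¬ (wheelGraph n).Adj (some m) (some b) ∧
      t a < t m ∧ t m < t b := by
  have : NeZero n := ⟨by omega⟩
  obtain ⟨i, hi⟩ := Finite.exists_min t
  have small_ne_zero (k : ℕ) (hk : 0 < k) (hk' : k < 5) : (k : ZMod n) ≠ 0 := by
    rw [Ne, ZMod.natCast_eq_zero_iff]
    exact Nat.not_dvd_of_pos_of_lt hk (hk'.trans_le hn)
  have h1 := small_ne_zero 1 (by norm_num) (by norm_num)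
  have h2 := small_ne_zero 2 (by norm_num) (by norm_num)
  have h3 := small_ne_zero 3 (by norm_num) (by norm_num)
  have h4 := small_ne_zero 4 (by norm_num) (by norm_num)
  push_cast at h1 h2 h3 h4
  obtain ⟨d, hd, hlt⟩ : ∃ d : ZMod n, (d = 1 ∨ d = -1) ∧ t (i + d) < t (i - d) := by
    rcases lt_or_gt_of_ne (ht.ne fun h : i + 1 = i - 1 => h2 (by linear_combination h)) with h | h
    · exact ⟨1, .inl rfl, h⟩
    · exact ⟨-1, .inr rfl, by simpa [sub_eq_add_neg] using h⟩
  have hadj := @wheelGraph_adj_some_some n (by omega)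
  have hmin (j : ZMod n) (hj : j ≠ i) : t i < t j := (hi j).lt_of_ne (ht.ne hj.symm)
  rcases lt_or_ge (t (i + 2 * d)) (t (i - d)) with hlt' | hge
  · refine ⟨i, i + 2 * d, i - d, ?_, ?_, ?_, hmin _ ?_, hlt'⟩ <;> grind
  · refine ⟨i + d, i - d, i + 2 * d, ?_, ?_, ?_, hlt, hge.lt_of_ne (ht.ne ?_)⟩ <;> grind

end Wheel

theorem stmt_9_general (n : ℕ) (hn : 5 ≤ n) :
    ¬ ∃ R : OneStringRep (wheelGraph n),
        ∀ i : ZMod n, (R.γ (some i)).ends ⊆ closure (contour R.γ) := by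
  rintro ⟨R, hends⟩
  have hub_crosses (i : ZMod n) :
      ∃ t ∈ Icc (0 : ℝ) 1, (R.γ none).toFun t ∈ (R.γ (some i)).img := by
    obtain ⟨q, hq⟩ := R.adj_inter _ _ (wheelGraph_adj_none_some i)
    obtain ⟨⟨t, ht, rfl⟩, hqi⟩ : q ∈ (R.γ none).img ∩ (R.γ (some i)).img := hq ▸ mem_singleton q
    exact ⟨t, ht, hqi⟩
  choose t ht htγ using hub_crosses
  have t_injective : Function.Injective t := fun i j hij => by
    by_contra hne
    exact (R.no_triple none (some i) (some j) nofun nofun (by simpa using hne)).subset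
      ⟨⟨mem_image_of_mem _ (ht i), htγ i⟩, hij ▸ htγ j⟩
  obtain ⟨a, m, b, hab, hma, hmb, ham, hmb'⟩ := exists_between_wheelGraph_adj hn t_injective
  exact (R.adj_or_adj_of_between (ht a) (ht b) (htγ a) (htγ m) (htγ b) ham hmb' nofun hab
    (hends m)).elim hma hmb

/-- For `n ≥ 7`, the wheel graph `W n` has no order-preserving 1-string representation in
which every arc has both of its endpoints in the closure of the contour. -/
theorem stmt_9 (n : ℕ) (hn : 7 ≤ n) (p : Option (ZMod n) → ℝ × ℝ)
    (hp : IsPlaneDrawing (wheelGraph n) p) :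
    ¬ ∃ R : OneStringRep (wheelGraph n),
        OrderPreserving (wheelGraph n) p R ∧
        ∀ v : Option (ZMod n),
          (R.γ v).toFun 0 ∈ closure (contour R.γ) ∧
          (R.γ v).toFun 1 ∈ closure (contour R.γ) := by
  rintro ⟨R, -, hends⟩
  exact stmt_9_general n (by omega) ⟨R, fun i => pair_subset (hends (some i)).1 (hends (some i)).2⟩
end
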